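/- arXiv:1203.6495 — 4 statements merged into one kernel-verified Lean document; each statement's English description precedes it below -/
import Mathlib

section
/- Let U be a finite-dimensional complex vector space and q a nondegenerate symmetric bilinear form on U, with induced isomorphism q̃ : U → U* and dual form q∨ on U* defined by q∨(f,g) = q(q̃⁻¹f, q̃⁻¹g). Then for every subspace S ⊆ U, the corank of the restriction of q to S equals the corank of the restriction of q∨ to the annihilator Ann S = {f ∈ U* : f(s) = 0 for all s ∈ S}. -/
/-!
The isomorphism `q̃ : U ≃ U*` induced by the form maps the radical of `B|_S` onto the radical of
`B∨|_{Ann S}`. Indeed `q̃ x ∈ Ann S` iff `x ∈ S⊥`, and `q̃` carries `B` to `B∨`, so the radical of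
`B∨|_{Ann S}` corresponds to `S⊥ ∩ S⊥⊥`, which is `S⊥ ∩ S`, the radical of `B|_S`, because
`S⊥⊥ = S` for a nondegenerate symmetric form.
-/

open Module

/-- The radical of the restriction of a bilinear form `B` to a subspace `S`:
`{x ∈ S | ∀ y ∈ S, B x y = 0}`.  The corank of `B|_S` is the dimension of this space. -/
noncomputable def restrictedRadical {U : Type*} [AddCommGroup U] [Module ℂ U]
    (B : LinearMap.BilinForm ℂ U) (S : Submodule ℂ U) : Submodule ℂ U :=
  S ⊓ ⨅ y ∈ S, LinearMap.ker (B.flip y)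

theorem mem_restrictedRadical {U : Type*} [AddCommGroup U] [Module ℂ U]
    (B : LinearMap.BilinForm ℂ U) (S : Submodule ℂ U) (x : U) :
    x ∈ restrictedRadical B S ↔ x ∈ S ∧ ∀ y ∈ S, B x y = 0 := by
  simp [restrictedRadical]

/-- Let `U` be a finite-dimensional complex vector space, `B` a nondegenerate
symmetric bilinear form on `U` and `B∨` the dual form on `U*`, characterized by
`B∨(q̃ x, q̃ y) = B(x,y)` where `q̃ : U → U*` is the isomorphism induced by `B`.  Then for every
subspace `S ⊆ U` the corank of `B|_S` equals the corank of `B∨` restricted to the annihilator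
of `S`. -/
theorem stmt_0 {U : Type*} [AddCommGroup U] [Module ℂ U] [FiniteDimensional ℂ U]
    (B : LinearMap.BilinForm ℂ U) (hsymm : B.IsSymm) (hnd : B.Nondegenerate)
    (Bdual : LinearMap.BilinForm ℂ (Module.Dual ℂ U))
    (hBdual : ∀ x y : U, Bdual (B x) (B y) = B x y)
    (S : Submodule ℂ U) :
    finrank ℂ (restrictedRadical B S) =
      finrank ℂ (restrictedRadical Bdual (Submodule.dualAnnihilator S)) := by
  have hmap : restrictedRadical Bdual S.dualAnnihilator =
      (restrictedRadical B S).map (B.toDual hnd : U →ₗ[ℂ] Dual ℂ U) := by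
    ext f
    obtain ⟨x, rfl⟩ := (B.toDual hnd).surjective f
    have hann : ∀ y, B y ∈ S.dualAnnihilator ↔ y ∈ B.orthogonal S := fun y => by
      simp only [Submodule.mem_dualAnnihilator, LinearMap.BilinForm.mem_orthogonal_iff]
      exact forall₂_congr fun s _ => by rw [hsymm.eq s y]
    have hS : x ∈ S ↔ ∀ y ∈ B.orthogonal S, B x y = 0 := by
      conv_lhs => rw [← LinearMap.BilinForm.orthogonal_orthogonal hnd hsymm.isRefl S]
      simp only [LinearMap.BilinForm.mem_orthogonal_iff (N := B.orthogonal S)]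
      exact forall₂_congr fun s _ => by rw [hsymm.eq s x]
    have hmem : B.toDual hnd x ∈ (restrictedRadical B S).map (B.toDual hnd : U →ₗ[ℂ] Dual ℂ U) ↔
        x ∈ restrictedRadical B S :=
      (B.toDual hnd).injective.mem_set_image
    have hrad : (∀ g ∈ S.dualAnnihilator, Bdual (B x) g = 0) ↔ x ∈ S := by
      rw [hS, (B.toDual hnd).surjective.forall]
      refine forall_congr' fun y => ?_
      change (B y ∈ _ → Bdual (B x) (B y) = 0) ↔ _
      rw [hann, hBdual]
    rw [hmem, mem_restrictedRadical, mem_restrictedRadical]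
    change (B x ∈ _ ∧ ∀ g ∈ _, Bdual (B x) g = 0) ↔ _
    rw [hrad, and_comm, Submodule.mem_dualAnnihilator]
  rw [hmap, LinearEquiv.finrank_map_eq]
end

section
/- Let M* be a symmetric d×d complex matrix whose kernel is the line ℂe spanned by a nonzero vector e ∈ ℂ^d, and let q̄* be the nondegenerate symmetric form induced by M* on ℂ^d/ℂe. Let L be a complex vector subspace of the space of symmetric d×d matrices such that eᵀMe = 0 for every M ∈ L. Define Φ₂ : L → ℂ by letting Φ₂(M) be the coefficient of t² in det(M* + tM); then Φ₂ is a quadratic form on L. Let T = {x ∈ ℂ^d : eᵀMx = 0 for all M ∈ L} (note e ∈ T). Then the rank of the quadratic form Φ₂ equals (d − dim T) − corank(q̄* restricted to T/ℂe). -/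
/-!
Let `U = ℂ^d/ℂe`. For `M ∈ L` the functional `x ↦ eᵀMx` kills `e`, so it is `q̄*(g M, ·)` for a
unique `g M ∈ U`, and `g : L → U` is linear.

The key identity is `Φ₂(M) = -c · q̄*(g M, g M)` with `c ≠ 0` (`coeff_two_detPoly`). If `y` lifts
`g M`, that is `M* y = M e`, then `(M* + tM)(e - ty) = -t² M y`; multiplying by the adjugate gives
`det(M* + tM) (e - ty) = -t² adj(M* + tM) M y`, whose `t²` coefficient is
`Φ₂(M) e = -adj(M*) M y`. Since `M*` is symmetric with kernel `ℂe`, its adjugate is `c · e eᵀ`, and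
`c ≠ 0` because the corank is one (`exists_adjugate_eq`).

By polarization `Φ₂` is, up to the factor `-c`, the pullback along `g` of the restriction of `q̄*`
to `G = range g`, so its rank is `dim G - dim (G ∩ G^⊥)` (`finrank_range_pullback`). Finally
`T/ℂe = G^⊥`, so `dim G = d - dim T`, and the radical of `q̄*` on `G^⊥` is
`G^⊥ ∩ G^⊥^⊥ = G^⊥ ∩ G`.
-/

open Polynomial Matrix Module

/-- The polynomial `det(M* + t·M)` in the variable `t`. -/
noncomputable def detPoly {d : ℕ} (Mstar M : Matrix (Fin d) (Fin d) ℂ) : ℂ[X] :=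
  (Mstar.map (C : ℂ → ℂ[X]) + (X : ℂ[X]) • M.map (C : ℂ → ℂ[X])).det

/-- The linear functional `x ↦ eᵀ M x` on `ℂ^d`. -/
noncomputable def dotMulLin {d : ℕ} (e : Fin d → ℂ) (M : Matrix (Fin d) (Fin d) ℂ) :
    (Fin d → ℂ) →ₗ[ℂ] ℂ where
  toFun x := e ⬝ᵥ M.mulVec x
  map_add' x y := by simp [Matrix.mulVec_add, dotProduct_add]
  map_smul' c x := by simp [Matrix.mulVec_smul, dotProduct_smul]

theorem dotProduct_mulVec_symm {d : ℕ} {A : Matrix (Fin d) (Fin d) ℂ} (hA : A.IsSymm)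
    (x y : Fin d → ℂ) : x ⬝ᵥ A *ᵥ y = y ⬝ᵥ A *ᵥ x := by
  rw [dotProduct_mulVec, ← mulVec_transpose, hA.eq, dotProduct_comm]

/-- The columns of the adjugate lie in the kernel line, and by symmetry so do the rows; a principal
minor at an index where `e` does not vanish is nonzero. -/
theorem exists_adjugate_eq {d : ℕ} {A : Matrix (Fin d) (Fin d) ℂ} (hA : A.IsSymm)
    {e : Fin d → ℂ} (he : e ≠ 0) (hker : LinearMap.ker A.mulVecLin = Submodule.span ℂ {e}) :
    ∃ c : ℂ, c ≠ 0 ∧ A.adjugate = c • vecMulVec e e := by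
  have hmem : ∀ x, A *ᵥ x = 0 ↔ ∃ a : ℂ, a • e = x := fun x => by
    rw [← Submodule.mem_span_singleton, ← hker]; simp
  have hAe : A *ᵥ e = 0 := (hmem e).2 ⟨1, one_smul _ _⟩
  obtain ⟨j, hj⟩ : ∃ j, e j ≠ 0 := Function.ne_iff.1 he
  have hdet : A.det = 0 := exists_mulVec_eq_zero_iff.1 ⟨e, he, hAe⟩
  have hsym : ∀ i k, A.adjugate i k = A.adjugate k i := fun i k => by
    conv_lhs => rw [← hA.eq, ← adjugate_transpose, transpose_apply]
  -- every column of the adjugate lies in the kernel of `A`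
  have hcol : ∀ k, ∃ a : ℂ, a • e = fun i => A.adjugate i k := fun k => by
    rw [← hmem]
    ext i
    have := congrFun (congrFun A.mul_adjugate i) k
    simpa [hdet, Matrix.mul_apply, mulVec, dotProduct] using this
  choose a ha using hcol
  have ha' : ∀ i k, A.adjugate i k = a k * e i := fun i k => by
    simpa using (congrFun (ha k) i).symm
  -- replacing row `j` of `A` by the `j`-th unit vector gives an invertible matrix
  have hjj : A.adjugate j j ≠ 0 := by
    rw [adjugate_apply]
    intro h0
    obtain ⟨x, hx, hx0⟩ := exists_mulVec_eq_zero_iff.2 h0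
    have hxj : x j = 0 := by simpa [mulVec] using congrFun hx0 j
    have hxk : ∀ k, k ≠ j → (A *ᵥ x) k = 0 := fun k hk => by
      simpa [mulVec, hk] using congrFun hx0 k
    have hsum : e ⬝ᵥ A *ᵥ x = 0 := by rw [dotProduct_mulVec_symm hA, hAe, dotProduct_zero]
    have hAxj : (A *ᵥ x) j = 0 := by
      rw [dotProduct, Finset.sum_eq_single j (fun k _ hk => by rw [hxk k hk, mul_zero])
        (by simp)] at hsum
      exact (mul_eq_zero.1 hsum).resolve_left hj
    have hAx : A *ᵥ x = 0 := by
      ext k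
      by_cases hk : k = j
      · rw [hk, hAxj]; rfl
      · exact hxk k hk
    obtain ⟨b, rfl⟩ := (hmem x).1 hAx
    have hb : b = 0 := by simpa [hj] using hxj
    exact hx (by rw [hb, zero_smul])
  refine ⟨a j / e j, div_ne_zero (fun h => hjj (by rw [ha', h, zero_mul])) hj, ?_⟩
  ext i k
  have h1 : a k * e j = a j * e k := by rw [← ha', hsym, ha']
  rw [ha', Matrix.smul_apply, vecMulVec_apply, smul_eq_mul]
  field_simp
  linear_combination e i * h1

/-- Compares the `t²` coefficients of `det(A + tM) (e - ty) = -t² adj(A + tM) M y`. -/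
theorem coeff_two_detPoly {d : ℕ} {A M : Matrix (Fin d) (Fin d) ℂ} (hM : M.IsSymm)
    {e y : Fin d → ℂ} (he : e ≠ 0) (hAe : A *ᵥ e = 0) {c : ℂ}
    (hc : A.adjugate = c • vecMulVec e e) (hy : A *ᵥ y = M *ᵥ e) :
    (detPoly A M).coeff 2 = -c * (y ⬝ᵥ A *ᵥ y) := by
  obtain ⟨j, hj⟩ : ∃ j, e j ≠ 0 := Function.ne_iff.1 he
  set P : Matrix (Fin d) (Fin d) ℂ[X] := A.map (C : ℂ → ℂ[X]) + (X : ℂ[X]) • M.map (C : ℂ → ℂ[X])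
    with hP
  have hCmul : ∀ (N : Matrix (Fin d) (Fin d) ℂ) (x : Fin d → ℂ),
      N.map (C : ℂ → ℂ[X]) *ᵥ (fun i => C (x i)) = fun i => C ((N *ᵥ x) i) := fun N x => by
    ext1 i; simp [mulVec, dotProduct]
  set u : Fin d → ℂ[X] := (fun i => C (e i)) - (X : ℂ[X]) • (fun i => C (y i)) with hu
  have hPu : P *ᵥ u = -(X ^ 2 : ℂ[X]) • (fun i => C ((M *ᵥ y) i)) := by
    rw [hP, hu, add_mulVec, mulVec_sub, mulVec_sub, mulVec_smul, mulVec_smul, smul_mulVec,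
      smul_mulVec, hCmul, hCmul, hCmul, hCmul, hAe, hy]
    ext1 i
    simp
    ring
  have hmain : P.det • u = P.adjugate *ᵥ (P *ᵥ u) := by
    rw [mulVec_mulVec, adjugate_mul, smul_mulVec, one_mulVec]
  rw [hPu, mulVec_smul] at hmain
  have hadj : ∀ i k, (P.adjugate i k).coeff 0 = A.adjugate i k := fun i k => by
    have h := congrFun (congrFun ((constantCoeff (R := ℂ)).map_adjugate P) i) k
    have h2 : (constantCoeff (R := ℂ)).mapMatrix P = A := by
      ext i k; simp [hP]
    rw [h2] at h
    simpa using h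
  set w : ℂ[X] := (P.adjugate *ᵥ fun i => C ((M *ᵥ y) i)) j with hw
  have hw0 : w.coeff 0 = c * e j * (y ⬝ᵥ A *ᵥ y) := by
    have h1 : w.coeff 0 = ∑ k, A.adjugate j k * (M *ᵥ y) k := by
      simp [hw, mulVec, dotProduct, hadj]
    have h2 : y ⬝ᵥ A *ᵥ y = ∑ k, e k * (M *ᵥ y) k := by
      rw [hy, dotProduct_mulVec_symm hM]; rfl
    rw [h1, h2, hc, Finset.mul_sum]
    refine Finset.sum_congr rfl fun k _ => ?_
    simp [vecMulVec_apply]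
    ring
  have hj2 : P.det * C (e j) - P.det * C (y j) * X = -(w * X ^ 2) := by
    have h := congrFun hmain j
    simp only [hu, Pi.smul_apply, Pi.sub_apply, smul_eq_mul, ← hw] at h
    linear_combination h
  have c0 : P.det.coeff 0 = 0 := by
    have := congrArg (fun p => coeff p 0) hj2
    simpa [hj, coeff_mul_X_pow'] using this
  have c1 : P.det.coeff 1 = 0 := by
    have := congrArg (fun p => coeff p 1) hj2
    simpa [hj, coeff_mul_X_pow', c0, coeff_mul_X, coeff_mul_C] using this
  have c2 := congrArg (fun p => coeff p 2) hj2
  have c2' : P.det.coeff 2 * e j = -w.coeff 0 := by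
    simpa [coeff_mul_X_pow', c1, coeff_mul_X, coeff_mul_C] using c2
  have : detPoly A M = P.det := rfl
  rw [this]
  apply mul_right_cancel₀ hj
  rw [c2', hw0]
  ring

/-- The rank of a form pulled back along `g` and scaled by `a ≠ 0` is the rank of the form on
`range g`, namely the dimension of `range g` minus that of its radical. -/
theorem finrank_range_pullback {V U : Type*} [AddCommGroup V] [Module ℂ V] [FiniteDimensional ℂ V]
    [AddCommGroup U] [Module ℂ U] [FiniteDimensional ℂ U]
    (B : LinearMap.BilinForm ℂ U) (hB : B.IsSymm) (g : V →ₗ[ℂ] U)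
    (F : LinearMap.BilinForm ℂ V) {a : ℂ} (ha : a ≠ 0) (hF : ∀ v w, F v w = a * B (g v) (g w)) :
    finrank ℂ (LinearMap.range F) + finrank ℂ ↥(LinearMap.range g ⊓ B.orthogonal (LinearMap.range g))
      = finrank ℂ (LinearMap.range g) := by
  have hker : LinearMap.ker F = (B.orthogonal (LinearMap.range g)).comap g := by
    ext v
    simp only [LinearMap.mem_ker, Submodule.mem_comap, LinearMap.BilinForm.mem_orthogonal_iff,
      LinearMap.mem_range, forall_exists_index, forall_apply_eq_imp_iff]
    rw [LinearMap.ext_iff]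
    refine forall_congr' fun w => ?_
    rw [hF, LinearMap.zero_apply, mul_eq_zero, or_iff_right ha, hB.eq]
  have hle : LinearMap.ker g ≤ LinearMap.ker F := by
    rw [hker]
    exact LinearMap.ker_le_comap g
  have h1 := LinearMap.finrank_range_add_finrank_ker F
  have h2 := LinearMap.finrank_range_add_finrank_ker g
  have h3 := LinearMap.finrank_range_add_finrank_ker (g.domRestrict (LinearMap.ker F))
  rw [LinearMap.range_domRestrict, LinearMap.ker_domRestrict,
    (Submodule.comapSubtypeEquivOfLe hle).finrank_eq] at h3
  rw [hker, Submodule.map_comap_eq, ← hker] at h3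
  omega

/-- The theorem with the kernel line `ℂe` named `S`, so that the quotient `ℂ^d ⧸ S` and `q̄*`
can be handled without unfolding the span. -/
theorem finrank_range_eq (d : ℕ) (Mstar : Matrix (Fin d) (Fin d) ℂ) (hsymm : Mstar.IsSymm)
    (e : Fin d → ℂ) (he : e ≠ 0)
    (S : Submodule ℂ (Fin d → ℂ)) (hS : S = Submodule.span ℂ {e})
    (hker : LinearMap.ker Mstar.mulVecLin = S)
    (Qbar : LinearMap.BilinForm ℂ ((Fin d → ℂ) ⧸ S))
    (hQbar : ∀ x y : Fin d → ℂ,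
      Qbar (S.mkQ x) (S.mkQ y) =
        x ⬝ᵥ Mstar.mulVec y)
    (hQnd : Qbar.Nondegenerate)
    (L : Submodule ℂ (Matrix (Fin d) (Fin d) ℂ))
    (hLsymm : ∀ M ∈ L, M.IsSymm)
    (hLe : ∀ M ∈ L, e ⬝ᵥ M.mulVec e = 0)
    (Φ₂bil : LinearMap.BilinForm ℂ ↥L) (hΦsymm : Φ₂bil.IsSymm)
    (hΦdiag : ∀ M : ↥L, Φ₂bil M M = (detPoly Mstar (M : Matrix (Fin d) (Fin d) ℂ)).coeff 2) :
    finrank ℂ (LinearMap.range Φ₂bil) =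
      (d - finrank ℂ ↥(⨅ M ∈ L, LinearMap.ker (dotMulLin e M))) -
        finrank ℂ (restrictedRadical Qbar
          ((⨅ M ∈ L, LinearMap.ker (dotMulLin e M)).map S.mkQ)) := by
  set T := ⨅ M ∈ L, LinearMap.ker (dotMulLin e M) with hT
  have hmemT : ∀ x, x ∈ T ↔ ∀ M ∈ L, e ⬝ᵥ M *ᵥ x = 0 := fun x => by
    simp [hT, Submodule.mem_iInf, dotMulLin]
  have hST : S ≤ T := by
    rw [hS, Submodule.span_singleton_le_iff_mem, hmemT]
    exact hLe
  have hsurj : Function.Surjective S.mkQ := S.mkQ_surjective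
  have hBsymm : Qbar.IsSymm := ⟨fun x y => by
    obtain ⟨x, rfl⟩ := hsurj x
    obtain ⟨y, rfl⟩ := hsurj y
    rw [hQbar, hQbar, dotProduct_mulVec_symm hsymm]⟩
  have hAe : Mstar *ᵥ e = 0 := by
    have : e ∈ LinearMap.ker Mstar.mulVecLin := hker ▸ hS ▸ Submodule.mem_span_singleton_self e
    simpa using this
  obtain ⟨c, hc0, hc⟩ := exists_adjugate_eq hsymm he (hker.trans hS)
  -- `g M` represents the functional `x ↦ eᵀMx` on the quotient
  have hSle : ∀ M : L, S ≤ LinearMap.ker (dotMulLin e (M : Matrix (Fin d) (Fin d) ℂ)) := fun M => by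
    rw [hS, Submodule.span_singleton_le_iff_mem]
    exact hLe M M.2
  let φ : L →ₗ[ℂ] Dual ℂ ((Fin d → ℂ) ⧸ S) :=
    { toFun := fun M => S.liftQ (dotMulLin e M) (hSle M)
      map_add' := fun M N => by
        ext x; simp [dotMulLin, add_mulVec]
      map_smul' := fun a M => by
        ext x; simp [dotMulLin, smul_mulVec] }
  let g : L →ₗ[ℂ] ((Fin d → ℂ) ⧸ S) := (Qbar.toDual hQnd).symm.toLinearMap ∘ₗ φ
  have hg : ∀ (M : L) (x : Fin d → ℂ),
      Qbar (g M) (S.mkQ x) = e ⬝ᵥ (M : Matrix (Fin d) (Fin d) ℂ) *ᵥ x := fun M x => by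
    change Qbar ((Qbar.toDual hQnd).symm (φ M)) _ = _
    rw [LinearMap.BilinForm.apply_toDual_symm_apply]
    rfl
  have hdiag : ∀ M : L, Φ₂bil M M = -c * Qbar (g M) (g M) := fun M => by
    obtain ⟨y, hy⟩ := hsurj (g M)
    have hMe : Mstar *ᵥ y = (M : Matrix (Fin d) (Fin d) ℂ) *ᵥ e := by
      refine dotProduct_eq _ _ fun x => ?_
      rw [dotProduct_comm, dotProduct_mulVec_symm hsymm, ← hQbar, hy, hg,
        dotProduct_mulVec_symm (hLsymm M M.2), dotProduct_comm]
    rw [hΦdiag, ← hy, hQbar]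
    exact coeff_two_detPoly (hLsymm M M.2) he hAe hc hMe
  have hΦ : ∀ M N : L, Φ₂bil M N = -c * Qbar (g M) (g N) := fun M N => by
    have h1 := hdiag (M + N)
    have h2 := hΦsymm.eq M N
    have h3 := hBsymm.eq (g M) (g N)
    simp only [map_add, LinearMap.add_apply, hdiag] at h1 h2 h3
    linear_combination (1 / 2 : ℂ) * h1 + (1 / 2 : ℂ) * h2 + (c / 2) * h3
  have hrank := finrank_range_pullback Qbar hBsymm g Φ₂bil (neg_ne_zero.2 hc0) hΦ
  set G := LinearMap.range g with hG
  have hTG : T.map S.mkQ = Qbar.orthogonal G := by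
    ext z
    obtain ⟨x, rfl⟩ := hsurj z
    rw [← Submodule.mem_comap, Submodule.comap_map_mkQ, sup_eq_right.2 hST, hmemT,
      LinearMap.BilinForm.mem_orthogonal_iff]
    constructor
    · rintro h _ ⟨M, rfl⟩
      rw [hg]
      exact h M M.2
    · intro h M hM
      rw [← hg ⟨M, hM⟩]
      exact h _ ⟨_, rfl⟩
  have hrad : restrictedRadical Qbar (T.map S.mkQ) = G ⊓ Qbar.orthogonal G := by
    rw [hTG]
    have : (⨅ y ∈ Qbar.orthogonal G, LinearMap.ker (Qbar.flip y)) =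
        Qbar.orthogonal (Qbar.orthogonal G) := by
      ext z
      simp only [Submodule.mem_iInf, LinearMap.mem_ker, LinearMap.BilinForm.mem_orthogonal_iff
        (N := Qbar.orthogonal G)]
      refine forall₂_congr fun y _ => ?_
      rw [← hBsymm.eq]; rfl
    rw [restrictedRadical, this, LinearMap.BilinForm.orthogonal_orthogonal hQnd hBsymm.isRefl,
      inf_comm]
  have hdimS : finrank ℂ S = 1 := by rw [hS, finrank_span_singleton he]
  have hdimU := S.finrank_quotient_add_finrank
  rw [finrank_fin_fun, hdimS] at hdimU
  have hdimT : finrank ℂ (T.map S.mkQ) + 1 = finrank ℂ T := by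
    have h3 := LinearMap.finrank_range_add_finrank_ker (S.mkQ.domRestrict T)
    rwa [LinearMap.range_domRestrict, LinearMap.ker_domRestrict, Submodule.ker_mkQ,
      (Submodule.comapSubtypeEquivOfLe hST).finrank_eq, hdimS] at h3
  have hdimG := LinearMap.BilinForm.finrank_orthogonal hQnd G
  have hGle := G.finrank_le
  rw [← hTG] at hdimG
  rw [hrad]
  omega

/-- `M*` a symmetric `d×d` complex matrix with kernel the line `ℂe` (`e ≠ 0`),
`q̄*` the induced nondegenerate symmetric form on `ℂ^d/ℂe`, `L` a linear space of symmetric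
matrices with `eᵀMe = 0` for `M ∈ L`, and `Φ₂` the quadratic form on `L` sending `M` to the
coefficient of `t²` in `det(M* + tM)`, with (symmetric) associated bilinear form `Φ₂bil`.
Let `T = {x : eᵀMx = 0 ∀ M ∈ L}`.  Then
`rank Φ₂ = (d − dim T) − corank(q̄*|_{T/ℂe})`. -/
theorem stmt_3 (d : ℕ) (Mstar : Matrix (Fin d) (Fin d) ℂ) (hsymm : Mstar.IsSymm)
    (e : Fin d → ℂ) (he : e ≠ 0)
    (hker : LinearMap.ker Mstar.mulVecLin = Submodule.span ℂ {e})
    (Qbar : LinearMap.BilinForm ℂ ((Fin d → ℂ) ⧸ Submodule.span ℂ {e}))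
    (hQbar : ∀ x y : Fin d → ℂ,
      Qbar ((Submodule.span ℂ {e}).mkQ x) ((Submodule.span ℂ {e}).mkQ y) =
        x ⬝ᵥ Mstar.mulVec y)
    (hQnd : Qbar.Nondegenerate)
    (L : Submodule ℂ (Matrix (Fin d) (Fin d) ℂ))
    (hLsymm : ∀ M ∈ L, M.IsSymm)
    (hLe : ∀ M ∈ L, e ⬝ᵥ M.mulVec e = 0)
    (Φ₂bil : LinearMap.BilinForm ℂ ↥L) (hΦsymm : Φ₂bil.IsSymm)
    (hΦdiag : ∀ M : ↥L, Φ₂bil M M = (detPoly Mstar (M : Matrix (Fin d) (Fin d) ℂ)).coeff 2) :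
    finrank ℂ (LinearMap.range Φ₂bil) =
      (d - finrank ℂ ↥(⨅ M ∈ L, LinearMap.ker (dotMulLin e M))) -
        finrank ℂ (restrictedRadical Qbar
          ((⨅ M ∈ L, LinearMap.ker (dotMulLin e M)).map (Submodule.span ℂ {e}).mkQ)) :=
  finrank_range_eq d Mstar hsymm e he _ rfl hker Qbar hQbar hQnd L hLsymm hLe Φ₂bil hΦsymm hΦdiag
end

section
/- Let Λ = U ⊕ U ⊕ E8(−1) ⊕ E8(−1) ⊕ ⟨−2⟩ ⊕ ⟨−2⟩, let e₁ and e₂ be the generators of the two ⟨−2⟩ summands, and let e₃ = (1,−1) in the first U summand (so e₁² = e₂² = e₃² = −2 and (e₁+e₂)² = −4). Then every root v ∈ Λ with v² < 0 lies in the Õ(Λ)-orbit of exactly one of e₁, e₂, e₃, e₁+e₂; in particular the set of roots of negative square is the disjoint union of these four Õ(Λ)-orbits. -/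
/-!
The proof is the Eichler criterion, made explicit. For an isotropic `e` and `a ⊥ e` the Eichler
transvection `v ↦ v - (a, v) e + (e, v) a - (a² / 2) (e, v) e` is an isometry acting trivially on the
discriminant group (`sameOrbit_tv`). Let `uE, uF` and `vE, vF` be the standard bases of the two
hyperbolic planes. Among the vectors in the orbit of `v ≠ 0`, choose one with `(uE, v)` positive and
minimal; a Euclidean argument with transvections shows that this value is the divisibility `m` of
`v`, i.e. divides all `(y, v)` (`exists_normal`). If two vectors of the same norm are
congruent modulo their common divisibility `m` and both pair to `m` with `uE`, then a single
transvection along `uE` takes one to the other (`eichler`). Conversely, norm, divisibility `m` and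
the class of `v` modulo `m` are invariants of the orbit, the last one because `v / m` is in the dual.

The discriminant group of `Λ` is killed by `2`, so a root `v` with `v² = -2d < 0` has `d ∣ m ∣ 2`.
For `m = 1` this gives the orbit of `e₃`. For `m = 2` the class of `v` modulo `2` is given by its two
`⟨−2⟩`-coordinates `p, q` modulo `2`, and `d ≡ p² + q²` modulo `4`, which leaves exactly the
orbits of `e₁`, `e₂` and `e₁ + e₂`.
-/

open Matrix

/-- Index type for the lattice `Λ = U ⊕ U ⊕ E8(−1) ⊕ E8(−1) ⊕ ⟨−2⟩ ⊕ ⟨−2⟩`. -/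
abbrev I22 := (Fin 2 ⊕ Fin 2) ⊕ ((Fin 8 ⊕ Fin 8) ⊕ (Fin 1 ⊕ Fin 1))

/-- Gram matrix of the hyperbolic plane `U`. -/
def UMat : Matrix (Fin 2) (Fin 2) ℤ := !![0, 1; 1, 0]

/-- The negative of the `E8` Cartan matrix (Bourbaki numbering), i.e. the Gram matrix of
`E8(−1)`. -/
def E8neg : Matrix (Fin 8) (Fin 8) ℤ :=
  -!![2, 0, -1, 0, 0, 0, 0, 0;
      0, 2, 0, -1, 0, 0, 0, 0;
      -1, 0, 2, -1, 0, 0, 0, 0;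
      0, -1, -1, 2, -1, 0, 0, 0;
      0, 0, 0, -1, 2, -1, 0, 0;
      0, 0, 0, 0, -1, 2, -1, 0;
      0, 0, 0, 0, 0, -1, 2, -1;
      0, 0, 0, 0, 0, 0, -1, 2]

/-- Gram matrix of `Λ = U ⊕ U ⊕ E8(−1) ⊕ E8(−1) ⊕ ⟨−2⟩ ⊕ ⟨−2⟩`. -/
def gramL : Matrix I22 I22 ℤ :=
  Matrix.fromBlocks (Matrix.fromBlocks UMat 0 0 UMat) 0 0
    (Matrix.fromBlocks (Matrix.fromBlocks E8neg 0 0 E8neg) 0 0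
      (Matrix.fromBlocks !![-2] 0 0 !![-2]))

/-- The bilinear form of `Λ`. -/
def bilL (x y : I22 → ℤ) : ℤ := x ⬝ᵥ gramL.mulVec y

/-- Generator of the first `⟨−2⟩` summand. -/
def e1 : I22 → ℤ := fun i => if i = Sum.inr (Sum.inr (Sum.inl 0)) then 1 else 0

/-- Generator of the second `⟨−2⟩` summand. -/
def e2 : I22 → ℤ := fun i => if i = Sum.inr (Sum.inr (Sum.inr 0)) then 1 else 0

/-- The vector `(1,−1)` in the first hyperbolic summand. -/
def e3 : I22 → ℤ := fun i =>
  if i = Sum.inl (Sum.inl 0) then 1 else if i = Sum.inl (Sum.inl 1) then -1 else 0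

/-- A rational vector is integral if all its coordinates are integers. -/
def IsIntegralVec (x : I22 → ℚ) : Prop := ∀ i, ∃ n : ℤ, x i = n

/-- Membership in the dual lattice `Λ^∨ ⊆ Λ ⊗ ℚ`. -/
def InDual (x : I22 → ℚ) : Prop := IsIntegralVec ((gramL.map (Int.cast : ℤ → ℚ)).mulVec x)

/-- `P` is (the matrix of) an isometry of `Λ`. -/
def IsIsometry (P : Matrix I22 I22 ℤ) : Prop :=
  IsUnit P.det ∧ P.transpose * gramL * P = gramL

/-- `P` belongs to the stable orthogonal group `Õ(Λ)`: it is an isometry inducing the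
identity on the discriminant group `Λ^∨/Λ`. -/
def InStableO (P : Matrix I22 I22 ℤ) : Prop :=
  IsIsometry P ∧
    ∀ x : I22 → ℚ, InDual x → IsIntegralVec ((P.map (Int.cast : ℤ → ℚ)).mulVec x - x)

/-- `v` is primitive. -/
def IsPrimitive (v : I22 → ℤ) : Prop := ∀ (n : ℤ) (w : I22 → ℤ), v = n • w → IsUnit n

/-- `v` is a root of `Λ`: it is primitive with `v² = −2d ≠ 0`, and the reflection
`x ↦ x + ((x,v)/d)·v` maps `Λ` into `Λ`. -/
def IsRoot (v : I22 → ℤ) : Prop :=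
  IsPrimitive v ∧ ∃ d : ℤ, d ≠ 0 ∧ bilL v v = -2 * d ∧
    ∀ x : I22 → ℤ, ∀ i, d ∣ bilL x v * v i

/-- The four reference roots `e₁, e₂, e₃, e₁+e₂`. -/
def refRoot : Fin 4 → (I22 → ℤ) := ![e1, e2, e3, e1 + e2]

/-! ### The form -/

/-- Inverse of the Gram matrix of `E8(−1)`. -/
def E8negInv : Matrix (Fin 8) (Fin 8) ℤ :=
  -!![4, 5, 7, 10, 8, 6, 4, 2;
      5, 8, 10, 15, 12, 9, 6, 3;
      7, 10, 14, 20, 16, 12, 8, 4;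
      10, 15, 20, 30, 24, 18, 12, 6;
      8, 12, 16, 24, 20, 15, 10, 5;
      6, 9, 12, 18, 15, 12, 8, 4;
      4, 6, 8, 12, 10, 8, 6, 3;
      2, 3, 4, 6, 5, 4, 3, 2]

/-- A (non-symmetric) matrix whose symmetrization is the Gram matrix of `E8(−1)`. -/
def E8half : Matrix (Fin 8) (Fin 8) ℤ :=
  -!![1, 0, -1, 0, 0, 0, 0, 0;
      0, 1, 0, -1, 0, 0, 0, 0;
      0, 0, 1, -1, 0, 0, 0, 0;
      0, 0, 0, 1, -1, 0, 0, 0;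
      0, 0, 0, 0, 1, -1, 0, 0;
      0, 0, 0, 0, 0, 1, -1, 0;
      0, 0, 0, 0, 0, 0, 1, -1;
      0, 0, 0, 0, 0, 0, 0, 1]

/-- A matrix with `halfL + halfLᵀ = gramL`; it exists because `Λ` is even. -/
def halfL : Matrix I22 I22 ℤ :=
  Matrix.fromBlocks (Matrix.fromBlocks !![0, 1; 0, 0] 0 0 !![0, 1; 0, 0]) 0 0
    (Matrix.fromBlocks (Matrix.fromBlocks E8half 0 0 E8half) 0 0
      (Matrix.fromBlocks !![-1] 0 0 !![-1]))

/-- The projection of `Λ` onto `⟨−2⟩ ⊕ ⟨−2⟩`. -/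
def projL : Matrix I22 I22 ℤ :=
  Matrix.fromBlocks 0 0 0 (Matrix.fromBlocks 0 0 0 1)

/-- The inverse Gram matrix on the unimodular part of `Λ`, extended by zero. -/
def unimodInv : Matrix I22 I22 ℤ :=
  Matrix.fromBlocks (Matrix.fromBlocks UMat 0 0 UMat) 0 0
    (Matrix.fromBlocks (Matrix.fromBlocks E8negInv 0 0 E8negInv) 0 0 0)

theorem halfL_add : halfL + halfLᵀ = gramL := by
  have h1 : (!![0, 1; 0, 0] : Matrix (Fin 2) (Fin 2) ℤ) + !![0, 1; 0, 0]ᵀ = UMat := by decide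
  have h2 : E8half + E8halfᵀ = E8neg := by decide
  have h3 : (!![-1] : Matrix (Fin 1) (Fin 1) ℤ) + !![-1]ᵀ = !![-2] := by decide
  simp only [halfL, gramL, fromBlocks_transpose, fromBlocks_add, transpose_zero, add_zero,
    h1, h2, h3]

theorem gramL_symm : gramLᵀ = gramL := by
  rw [← halfL_add, transpose_add, transpose_transpose, add_comm]

theorem unimodInv_mul : unimodInv * gramL = 1 - projL := by
  have h1 : UMat * UMat = 1 := by decide
  have h2 : E8negInv * E8neg = 1 := by decide
  rw [eq_sub_iff_add_eq]
  simp only [unimodInv, gramL, projL, fromBlocks_multiply, fromBlocks_add, h1, h2,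
    Matrix.mul_zero, Matrix.zero_mul, add_zero, zero_add, fromBlocks_one]

theorem projL_mul : projL * gramL = -2 • projL := by
  have h : fromBlocks (!![-2] : Matrix (Fin 1) (Fin 1) ℤ) 0 0 (!![-2] : Matrix (Fin 1) (Fin 1) ℤ)
      = -2 • 1 := by decide
  simp only [gramL, projL, fromBlocks_multiply, fromBlocks_smul, h,
    Matrix.mul_zero, Matrix.zero_mul, add_zero, zero_add, smul_zero, one_mul, zero_mul]

/-- `2 gramL⁻¹` is integral: the discriminant group is killed by `2`. -/
theorem twoInv_mul : (2 • unimodInv - projL) * gramL = 2 • 1 := by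
  rw [sub_mul, smul_mul_assoc, unimodInv_mul, projL_mul, smul_sub]
  module

theorem projL_mulVec (v : I22 → ℤ) : projL *ᵥ v =
    v (Sum.inr (Sum.inr (Sum.inl 0))) • e1 + v (Sum.inr (Sum.inr (Sum.inr 0))) • e2 := by
  ext i
  rcases i with (i | i) | (i | i) | (i | i) <;>
    simp [projL, e1, e2, Matrix.mulVec, dotProduct, Matrix.one_apply, ← fromBlocks_one] <;>
    fin_cases i <;> rfl

theorem det_gramL_ne_zero : gramL.det ≠ 0 := by
  intro h
  have := congrArg Matrix.det twoInv_mul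
  rw [det_mul, h, mul_zero, det_smul_of_tower, det_one] at this
  simp at this

theorem bil_add_left (x y z : I22 → ℤ) : bilL (x + y) z = bilL x z + bilL y z := by
  simp [bilL, add_dotProduct]

theorem bil_smul_left (k : ℤ) (x z : I22 → ℤ) : bilL (k • x) z = k * bilL x z := by
  rw [bilL, bilL, smul_dotProduct, smul_eq_mul]

theorem bil_comm (x y : I22 → ℤ) : bilL x y = bilL y x := by
  rw [bilL, bilL, dotProduct_mulVec, dotProduct_comm, ← mulVec_transpose, gramL_symm]

theorem bil_add_right (x y z : I22 → ℤ) : bilL x (y + z) = bilL x y + bilL x z := by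
  simp [bilL, mulVec_add]

theorem bil_smul_right (k : ℤ) (x z : I22 → ℤ) : bilL x (k • z) = k * bilL x z := by
  rw [bilL, bilL, mulVec_smul, dotProduct_smul, smul_eq_mul]

theorem bil_sub_right (x y z : I22 → ℤ) : bilL x (y - z) = bilL x y - bilL x z := by
  simp [bilL, mulVec_sub]

theorem bil_sub_left (x y z : I22 → ℤ) : bilL (x - y) z = bilL x z - bilL y z := by
  simp [bilL]

theorem bil_neg_right (x y : I22 → ℤ) : bilL x (-y) = - bilL x y := by
  simp [bilL, mulVec_neg]

/-- The quadratic form `x ↦ x² / 2`. -/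
def qL (x : I22 → ℤ) : ℤ := x ⬝ᵥ halfL *ᵥ x

theorem bil_self (x : I22 → ℤ) : bilL x x = 2 * qL x := by
  have : x ⬝ᵥ halfLᵀ *ᵥ x = x ⬝ᵥ halfL *ᵥ x := by
    rw [mulVec_transpose, dotProduct_mulVec, dotProduct_comm]
  rw [bilL, ← halfL_add, add_mulVec, dotProduct_add, this, qL, two_mul]

theorem bil_single (i : I22) (v : I22 → ℤ) : bilL (Pi.single i 1) v = (gramL *ᵥ v) i := by
  simp [bilL]

/-! ### The stable orthogonal group -/

theorem bil_mulVec (P : Matrix I22 I22 ℤ) (x y : I22 → ℤ) :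
    bilL (P *ᵥ x) (P *ᵥ y) = x ⬝ᵥ (Pᵀ * gramL * P) *ᵥ y := by
  rw [bilL, mulVec_mulVec, dotProduct_comm, dotProduct_mulVec, ← mulVec_transpose,
    mulVec_mulVec, ← mul_assoc, dotProduct_comm]

theorem isometry_of_bil {P : Matrix I22 I22 ℤ}
    (h : ∀ x y, bilL (P *ᵥ x) (P *ᵥ y) = bilL x y) : IsIsometry P := by
  have h2 : Pᵀ * gramL * P = gramL := by
    ext i j
    have := h (Pi.single i 1) (Pi.single j 1)
    rw [bil_mulVec, bilL] at this
    simpa using this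
  refine ⟨?_, h2⟩
  have h3 := congrArg Matrix.det h2
  rw [det_mul, det_mul, det_transpose] at h3
  have h4 : P.det * P.det = 1 := by
    apply mul_right_cancel₀ det_gramL_ne_zero
    linear_combination h3
  exact IsUnit.of_mul_eq_one _ h4

theorem IsIsometry.bil {P : Matrix I22 I22 ℤ} (h : IsIsometry P) (x y : I22 → ℤ) :
    bilL (P *ᵥ x) (P *ᵥ y) = bilL x y := by
  rw [bil_mulVec, h.2, bilL]

theorem integral_mulVec (P : Matrix I22 I22 ℤ) {x : I22 → ℚ} (h : IsIntegralVec x) :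
    IsIntegralVec (P.map (Int.cast : ℤ → ℚ) *ᵥ x) := by
  choose y hy using h
  intro i
  refine ⟨(P *ᵥ y) i, ?_⟩
  simp [Matrix.mulVec, dotProduct, hy]

theorem integral_add {x y : I22 → ℚ} (hx : IsIntegralVec x) (hy : IsIntegralVec y) :
    IsIntegralVec (x + y) := by
  intro i
  obtain ⟨a, ha⟩ := hx i
  obtain ⟨b, hb⟩ := hy i
  exact ⟨a + b, by simp [ha, hb]⟩

theorem integral_neg {x : I22 → ℚ} (hx : IsIntegralVec x) : IsIntegralVec (-x) := by
  intro i
  obtain ⟨a, ha⟩ := hx i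
  exact ⟨-a, by simp [ha]⟩

theorem map_mul_cast (P Q : Matrix I22 I22 ℤ) : (P * Q).map (Int.cast : ℤ → ℚ) =
    P.map (Int.cast : ℤ → ℚ) * Q.map (Int.cast : ℤ → ℚ) :=
  Matrix.map_mul (f := Int.castRingHom ℚ)

theorem map_one_cast : (1 : Matrix I22 I22 ℤ).map (Int.cast : ℤ → ℚ) = 1 :=
  Matrix.map_one _ Int.cast_zero Int.cast_one

theorem stable_mul {P Q : Matrix I22 I22 ℤ} (hP : InStableO P) (hQ : InStableO Q) :
    InStableO (P * Q) := by
  refine ⟨isometry_of_bil fun x y => ?_, fun x hx => ?_⟩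
  · rw [← mulVec_mulVec, ← mulVec_mulVec, hP.1.bil, hQ.1.bil]
  · have := integral_add (integral_mulVec P (hQ.2 x hx)) (hP.2 x hx)
    rwa [mulVec_sub, mulVec_mulVec, ← map_mul_cast, sub_add_sub_cancel] at this

theorem stable_inv {P : Matrix I22 I22 ℤ} (hP : InStableO P) : InStableO P⁻¹ := by
  have h1 : P * P⁻¹ = 1 := mul_nonsing_inv P hP.1.1
  have h2 : P⁻¹ * P = 1 := nonsing_inv_mul P hP.1.1
  refine ⟨isometry_of_bil fun x y => ?_, fun x hx => ?_⟩
  · rw [← hP.1.bil, mulVec_mulVec, mulVec_mulVec, h1, one_mulVec, one_mulVec]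
  · have := integral_neg (integral_mulVec P⁻¹ (hP.2 x hx))
    rwa [mulVec_sub, mulVec_mulVec, ← map_mul_cast, h2, map_one_cast, one_mulVec,
      neg_sub] at this

/-- A matrix of the form `1 + Q * gramL` acts trivially on the discriminant group, because
`gramL` maps the dual lattice to integral vectors. -/
theorem stable_of_eq {P Q : Matrix I22 I22 ℤ} (hP : P = 1 + Q * gramL)
    (h : ∀ x y, bilL (P *ᵥ x) (P *ᵥ y) = bilL x y) : InStableO P := by
  refine ⟨isometry_of_bil h, fun x hx => ?_⟩
  have h1 := integral_mulVec Q hx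
  have h2 : P.map (Int.cast : ℤ → ℚ) =
      1 + Q.map (Int.cast : ℤ → ℚ) * gramL.map (Int.cast : ℤ → ℚ) := by
    rw [hP, Matrix.map_add _ Int.cast_add, map_mul_cast, map_one_cast]
  rw [h2, add_mulVec, one_mulVec, add_sub_cancel_left, ← mulVec_mulVec]
  exact h1

/-- `v` and `w` lie in the same orbit of the stable orthogonal group. -/
def SameOrbit (v w : I22 → ℤ) : Prop := ∃ P : Matrix I22 I22 ℤ, InStableO P ∧ P *ᵥ v = w

theorem SameOrbit.symm {v w : I22 → ℤ} (h : SameOrbit v w) : SameOrbit w v := by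
  obtain ⟨P, hP, rfl⟩ := h
  exact ⟨P⁻¹, stable_inv hP, by rw [mulVec_mulVec, nonsing_inv_mul P hP.1.1, one_mulVec]⟩

theorem SameOrbit.trans {u v w : I22 → ℤ} (h : SameOrbit u v) (h' : SameOrbit v w) : SameOrbit u w := by
  obtain ⟨P, hP, rfl⟩ := h
  obtain ⟨Q, hQ, rfl⟩ := h'
  exact ⟨Q * P, stable_mul hQ hP, by rw [mulVec_mulVec]⟩

theorem SameOrbit.refl (v : I22 → ℤ) : SameOrbit v v :=
  ⟨1, stable_of_eq (Q := 0) (by simp) (by simp), one_mulVec v⟩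

theorem SameOrbit.bil_self {v w : I22 → ℤ} (h : SameOrbit v w) : bilL w w = bilL v v := by
  obtain ⟨P, hP, rfl⟩ := h
  exact hP.1.bil v v

theorem SameOrbit.dvd {v w : I22 → ℤ} (h : SameOrbit v w) {m : ℤ} (hm : ∀ x, m ∣ bilL x v) (x : I22 → ℤ) :
    m ∣ bilL x w := by
  obtain ⟨Q, hQ, rfl⟩ := h.symm
  rw [← hQ.1.bil]
  exact hm _

/-- If `m` divides the divisibility of `v`, then `v / m` lies in the dual lattice, so the
stable orthogonal group does not change `v` modulo `m`. -/
theorem SameOrbit.sub {v w : I22 → ℤ} (h : SameOrbit v w) {m : ℤ} (h0 : m ≠ 0) (hm : ∀ x, m ∣ bilL x v) :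
    ∃ y, w - v = m • y := by
  obtain ⟨P, hP, rfl⟩ := h
  have hm' : (m : ℚ) ≠ 0 := by exact_mod_cast h0
  have hc : ∀ Q : Matrix I22 I22 ℤ, Q.map (Int.cast : ℤ → ℚ) *ᵥ (fun i => (v i : ℚ) / m) =
      fun i => ((Q *ᵥ v) i : ℚ) / m := by
    intro Q
    ext i
    simp only [Matrix.mulVec, dotProduct, map_apply, Int.cast_sum, Int.cast_mul, Finset.sum_div,
      mul_div_assoc]
  have hd : InDual (fun i => (v i : ℚ) / m) := by
    intro i
    obtain ⟨k, hk⟩ := hm (Pi.single i 1)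
    rw [bil_single] at hk
    refine ⟨k, ?_⟩
    rw [hc]
    simp only [hk]
    push_cast
    field_simp
  choose y hy using hP.2 _ hd
  refine ⟨y, ?_⟩
  ext i
  have h1 := hy i
  rw [hc] at h1
  simp only [Pi.sub_apply] at h1
  field_simp at h1
  simp only [Pi.sub_apply, Pi.smul_apply, smul_eq_mul]
  exact_mod_cast h1

/-! ### Eichler transvections -/

/-- The Eichler transvection along an isotropic `e` with parameter `a ⊥ e` lies in the stable
orthogonal group. -/
theorem sameOrbit_tv {e a : I22 → ℤ} (he : bilL e e = 0) (ha : bilL e a = 0) (v : I22 → ℤ) :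
    SameOrbit v (v - bilL a v • e + bilL e v • a - (qL a * bilL e v) • e) := by
  let Q : Matrix I22 I22 ℤ := vecMulVec a e - vecMulVec e a - qL a • vecMulVec e e
  have hQ : ∀ v, (1 + Q * gramL) *ᵥ v =
      v - bilL a v • e + bilL e v • a - (qL a * bilL e v) • e := by
    intro v
    rw [add_mulVec, one_mulVec, ← mulVec_mulVec]
    simp only [Q, sub_mulVec, smul_mulVec, vecMulVec_mulVec]
    simp only [bilL, op_smul_eq_smul, mul_smul]
    abel
  refine ⟨_, stable_of_eq rfl fun x y => ?_, hQ v⟩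
  rw [hQ, hQ]
  have ha' : bilL a e = 0 := by rw [bil_comm, ha]
  have := bil_self a
  simp only [bil_add_left, bil_add_right, bil_sub_left, bil_sub_right, bil_smul_left,
    bil_smul_right, he, ha, ha', this, bil_comm x e, bil_comm x a]
  ring

theorem sameOrbit_tv_isotropic {e a : I22 → ℤ} (he : bilL e e = 0) (ha : bilL e a = 0)
    (haa : bilL a a = 0) (v : I22 → ℤ) :
    SameOrbit v (v - bilL a v • e + bilL e v • a) := by
  have hq : qL a = 0 := by have := bil_self a; omega
  simpa [hq] using sameOrbit_tv he ha v

/-! ### The Eichler criterion -/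

/-- First standard isotropic generator of the first hyperbolic plane. -/
def uE : I22 → ℤ := Pi.single (Sum.inl (Sum.inl 0)) 1

/-- Second standard isotropic generator of the first hyperbolic plane. -/
def uF : I22 → ℤ := Pi.single (Sum.inl (Sum.inl 1)) 1

/-- First standard isotropic generator of the second hyperbolic plane. -/
def vE : I22 → ℤ := Pi.single (Sum.inl (Sum.inr 0)) 1

/-- Second standard isotropic generator of the second hyperbolic plane. -/
def vF : I22 → ℤ := Pi.single (Sum.inl (Sum.inr 1)) 1

theorem bil_uE_uE : bilL uE uE = 0 := by simp [uE, bil_single, gramL, UMat]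
theorem bil_uE_uF : bilL uE uF = 1 := by simp [uE, uF, bil_single, gramL, UMat]
theorem bil_uF_uE : bilL uF uE = 1 := by simp [uE, uF, bil_single, gramL, UMat]
theorem bil_uF_uF : bilL uF uF = 0 := by simp [uF, bil_single, gramL, UMat]
theorem bil_vE_vE : bilL vE vE = 0 := by simp [vE, bil_single, gramL, UMat]
theorem bil_vE_vF : bilL vE vF = 1 := by simp [vE, vF, bil_single, gramL, UMat]
theorem bil_vF_vE : bilL vF vE = 1 := by simp [vE, vF, bil_single, gramL, UMat]
theorem bil_vF_vF : bilL vF vF = 0 := by simp [vF, bil_single, gramL, UMat]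
theorem bil_uE_vE : bilL uE vE = 0 := by simp [uE, vE, bil_single, gramL]
theorem bil_uE_vF : bilL uE vF = 0 := by simp [uE, vF, bil_single, gramL]
theorem bil_uF_vE : bilL uF vE = 0 := by simp [uF, vE, bil_single, gramL]
theorem bil_uF_vF : bilL uF vF = 0 := by simp [uF, vF, bil_single, gramL]
theorem bil_vE_uE : bilL vE uE = 0 := by rw [bil_comm, bil_uE_vE]
theorem bil_vE_uF : bilL vE uF = 0 := by rw [bil_comm, bil_uF_vE]
theorem bil_vF_uE : bilL vF uE = 0 := by rw [bil_comm, bil_uE_vF]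
theorem bil_vF_uF : bilL vF uF = 0 := by rw [bil_comm, bil_uF_vF]

/-- Some vector in the orbit of `v` pairs positively with `uE`. -/
def PosOrbit (v : I22 → ℤ) : Prop := ∃ w, SameOrbit v w ∧ 0 < bilL uE w

theorem PosOrbit.of_sameOrbit {v w : I22 → ℤ} (h : SameOrbit v w) (hw : PosOrbit w) :
    PosOrbit v := by
  obtain ⟨x, hx, hp⟩ := hw
  exact ⟨x, h.trans hx, hp⟩

theorem posOrbit_of_vE {v : I22 → ℤ} (h : bilL vE v ≠ 0) : PosOrbit v := by
  -- The transvection along `uF` with parameter `k • vE` changes `(uE, v)` by `-k (vE, v)`.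
  refine ⟨_, sameOrbit_tv_isotropic (e := uF) (a := (-bilL vE v * (|bilL uE v| + 1)) • vE)
    bil_uF_uF ?_ ?_ v, ?_⟩
  · rw [bil_smul_right, bil_uF_vE, mul_zero]
  · rw [bil_smul_right, bil_smul_left, bil_vE_vE, mul_zero, mul_zero]
  · simp only [bil_add_right, bil_sub_right, bil_smul_right, bil_smul_left, bil_uE_uF, bil_uE_vE]
    have h1 : 1 ≤ bilL vE v * bilL vE v := by
      have := mul_self_pos.2 h
      omega
    have h2 := neg_abs_le (bilL uE v)
    have h3 := abs_nonneg (bilL uE v)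
    nlinarith

theorem posOrbit_of_uF {v : I22 → ℤ} (h : bilL uF v ≠ 0) : PosOrbit v := by
  by_cases h0 : bilL vE v = 0
  · refine .of_sameOrbit (sameOrbit_tv_isotropic bil_uF_uF bil_uF_vF bil_vF_vF v)
      (posOrbit_of_vE ?_)
    simpa [-zsmul_eq_mul, bil_add_right, bil_sub_right, bil_smul_right, h0, bil_vE_uF, bil_vE_vF] using h
  · exact posOrbit_of_vE h0

theorem posOrbit_of_vF {v : I22 → ℤ} (h : bilL vF v ≠ 0) : PosOrbit v := by
  by_cases h0 : bilL uF v = 0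
  · refine .of_sameOrbit (sameOrbit_tv_isotropic bil_uE_uE bil_uE_vF bil_vF_vF v)
      (posOrbit_of_uF ?_)
    simpa [-zsmul_eq_mul, bil_add_right, bil_sub_right, bil_smul_right, h0, bil_uF_uE, bil_uF_vF] using h
  · exact posOrbit_of_uF h0

theorem posOrbit_of_ne {v x : I22 → ℤ} (h : bilL x v ≠ 0) : PosOrbit v := by
  by_cases h0 : bilL vE v = 0
  · by_cases h1 : bilL vF v = 0
    · refine .of_sameOrbit (sameOrbit_tv (e := vF) (a := x - bilL vF x • vE) bil_vF_vF ?_ v)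
        (posOrbit_of_vE ?_)
      · simp [-zsmul_eq_mul, bil_sub_right, bil_smul_right, bil_vF_vE]
      · simpa [-zsmul_eq_mul, bil_add_right, bil_sub_right, bil_sub_left, bil_smul_left, bil_smul_right, h0, h1,
          bil_vE_vF] using h
    · exact posOrbit_of_vF h1
  · exact posOrbit_of_vE h0

/-- Euclidean step: if `(uE, v) = b` is the least positive value of `(uE, ·)` on the orbit of
`v`, and `g, h` span a hyperbolic plane with `g ⊥ uE, uF` and `h ⊥ uE`, then
`b ∣ (g, v)`, and `(g, v)` can be made zero while keeping `(uE, v)` and `(h, v)`: reduce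
`(g, v)` modulo `b` to `r`; if `r ≠ 0`, a further
transvection yields the smaller positive value `b - r`. -/
theorem euclid_step {v g h : I22 → ℤ} {b : ℤ} (hb : 0 < b)
    (hmin : ∀ w, SameOrbit v w → 0 < bilL uE w → b ≤ bilL uE w) (hv : bilL uE v = b)
    (hgg : bilL g g = 0) (hhh : bilL h h = 0) (hgh : bilL g h = 1)
    (hg : bilL uE g = 0) (hg' : bilL uF g = 0) (hh : bilL uE h = 0) :
    b ∣ bilL g v ∧ ∃ w, SameOrbit v w ∧ bilL uE w = b ∧ bilL g w = 0 ∧ bilL h w = bilL h v := by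
  have hs := sameOrbit_tv_isotropic (e := uE) (a := (-(bilL g v / b)) • h) bil_uE_uE
    (by rw [bil_smul_right, hh, mul_zero])
    (by rw [bil_smul_left, bil_smul_right, hhh, mul_zero, mul_zero]) v
  set w := v - bilL ((-(bilL g v / b)) • h) v • uE + bilL uE v • ((-(bilL g v / b)) • h) with hw
  have w1 : bilL uE w = b := by
    simp [-zsmul_eq_mul, hw, bil_add_right, bil_sub_right, bil_smul_right, bil_uE_uE, hh, hv, bil_neg_right]
  have w2 : bilL g w = bilL g v % b := by
    rw [hw, Int.emod_def]
    simp only [bil_add_right, bil_sub_right, bil_smul_right, bil_comm g uE, hg, hgh, hv]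
    ring
  have w3 : bilL h w = bilL h v := by
    simp [-zsmul_eq_mul, hw, bil_add_right, bil_sub_right, bil_smul_right, bil_comm h uE, hh, hhh, bil_neg_right]
  have hs' := sameOrbit_tv_isotropic bil_uF_uF hg' hgg w
  have h0 : bilL g v % b = 0 := by
    by_contra hne
    have hlt := Int.emod_lt_of_pos (bilL g v) hb
    have hnn := Int.emod_nonneg (bilL g v) hb.ne'
    have hx : bilL uE (w - bilL g w • uF + bilL uF w • g) = b - bilL g v % b := by
      simp [-zsmul_eq_mul, bil_add_right, bil_sub_right, bil_smul_right, w1, w2, bil_uE_uF, hg]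
    have := hmin _ (hs.trans hs') (by rw [hx]; omega)
    rw [hx] at this
    omega
  exact ⟨Int.dvd_of_emod_eq_zero h0, w, hs, w1, w2.trans h0, w3⟩

/-- The orbit of a nonzero vector contains some `w` whose divisibility (the positive generator of
the ideal of all `(y, w)`) is `(uE, w)`. -/
theorem exists_normal {v x : I22 → ℤ} (h : bilL x v ≠ 0) :
    ∃ w, SameOrbit v w ∧ 0 < bilL uE w ∧ ∀ y, bilL uE w ∣ bilL y w := by
  classical
  have hex : ∃ n : ℕ, 0 < n ∧ ∃ w, SameOrbit v w ∧ bilL uE w = n := by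
    obtain ⟨w, hw, hp⟩ := posOrbit_of_ne h
    exact ⟨(bilL uE w).toNat, by omega, w, hw, by omega⟩
  obtain ⟨hn, w, hvw, hw⟩ := Nat.find_spec hex
  set b : ℤ := (Nat.find hex : ℤ) with hbdef
  have hb : 0 < b := by omega
  have hmin : ∀ w', SameOrbit v w' → 0 < bilL uE w' → b ≤ bilL uE w' := by
    intro w' hw' hp
    have := Nat.find_min' hex (m := (bilL uE w').toNat) ⟨by omega, w', hw', by omega⟩
    omega
  obtain ⟨-, w1, hw1, hb1, hE1, -⟩ := euclid_step (g := vE) (h := vF) hb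
    (fun w' h' => hmin w' (hvw.trans h')) hw bil_vE_vE bil_vF_vF bil_vE_vF bil_uE_vE bil_uF_vE
    bil_uE_vF
  have hvw1 := hvw.trans hw1
  refine ⟨w1, hvw1, by omega, fun y => ?_⟩
  rw [hb1]
  -- As `(vE, w1) = 0`, the transvection along `vE` with parameter
  -- `z = y - (vE, y) vF` subtracts `(z, w1)` from the coordinate `(vF, ·)`, which `b` divides both
  -- before and after.
  have hs := sameOrbit_tv (e := vE) (a := y - bilL vE y • vF) bil_vE_vE
    (by simp [-zsmul_eq_mul, bil_sub_right, bil_smul_right, bil_vE_vF]) w1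
  simp only [hE1, zero_smul, mul_zero, add_zero, sub_zero] at hs
  have key : ∀ w2, SameOrbit w1 w2 → bilL uE w2 = b → b ∣ bilL vF w2 := fun w2 h2 hb2 =>
    (euclid_step (g := vF) (h := vE) hb (fun w' h' => hmin w' ((hvw1.trans h2).trans h')) hb2
      bil_vF_vF bil_vE_vE bil_vF_vE bil_uE_vF bil_uF_vF bil_uE_vE).1
  have k1 := key w1 (.refl w1) hb1
  have k2 := key _ hs (by simp [-zsmul_eq_mul, bil_sub_right, bil_smul_right, bil_uE_vE, hb1])
  simp only [bil_sub_right, bil_smul_right, bil_vF_vE, mul_one, bil_sub_left, bil_smul_left] at k2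
  obtain ⟨c, hc⟩ := k1
  obtain ⟨d, hd⟩ := k2
  exact ⟨c - d + bilL vE y * c, by linear_combination (1 + bilL vE y) * hc - hd⟩

/-- Eichler criterion: two vectors of the same norm and the same divisibility `m` that are
congruent modulo `m` lie in the same orbit of the stable orthogonal group. -/
theorem eichler {v w x : I22 → ℤ} (hx : bilL x v ≠ 0) (hn : bilL v v = bilL w w) {m : ℤ}
    (hm : 0 < m) (hv : ∀ k : ℤ, (∀ x, k ∣ bilL x v) ↔ k ∣ m) (hw : ∀ k : ℤ, (∀ x, k ∣ bilL x w) ↔ k ∣ m)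
    {y : I22 → ℤ} (hy : w - v = m • y) : SameOrbit v w := by
  have hvm : ∀ x, m ∣ bilL x v := (hv m).2 dvd_rfl
  have hwm : ∀ x, m ∣ bilL x w := (hw m).2 dvd_rfl
  have hxw : ∃ x, bilL x w ≠ 0 := by
    by_contra! hcon
    have := (hw 0).1 (by simp [hcon])
    omega
  obtain ⟨x', hx'⟩ := hxw
  obtain ⟨v1, hv1, pv, dv⟩ := exists_normal hx
  obtain ⟨w1, hw1, pw, dw⟩ := exists_normal hx'
  have av : bilL uE v1 = m :=
    Int.dvd_antisymm pv.le hm.le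
      ((hv _).1 (hv1.symm.dvd dv)) (hv1.dvd hvm uE)
  have aw : bilL uE w1 = m :=
    Int.dvd_antisymm pw.le hm.le
      ((hw _).1 (hw1.symm.dvd dw)) (hw1.dvd hwm uE)
  obtain ⟨y1, hy1⟩ := hv1.sub hm.ne' hvm
  obtain ⟨y2, hy2⟩ := hw1.sub hm.ne' hwm
  obtain ⟨a, ha⟩ : ∃ a, a = y + y2 - y1 := ⟨_, rfl⟩
  have hw1a : w1 = v1 + m • a := by
    have : w1 = v1 + (w1 - w) + (w - v) - (v1 - v) := by abel
    rw [this, hy, hy1, hy2, ha]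
    module
  have hea : bilL uE a = 0 := by
    have : m * bilL uE a = 0 := by
      rw [hw1a, bil_add_right, bil_smul_right] at aw
      linarith
    exact (mul_eq_zero.1 this).resolve_left (ne_of_gt hm)
  -- The transvection along `uE` with parameter `a` takes `v1` to `w1` up to a multiple of `uE`,
  -- and this multiple vanishes because the norms agree.
  have hk : bilL a v1 + qL a * m = 0 := by
    have h1 : bilL w1 w1 = bilL v1 v1 := by rw [hw1.bil_self, hv1.bil_self, hn]
    simp only [hw1a, bil_add_right, bil_add_left, bil_smul_left, bil_smul_right, bil_self a,
      bil_comm v1 a] at h1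
    have : (2 * m) * (bilL a v1 + qL a * m) = 0 := by linear_combination h1
    exact (mul_eq_zero.1 this).resolve_left (by omega)
  have hs := sameOrbit_tv bil_uE_uE hea v1
  have hfin : v1 - bilL a v1 • uE + bilL uE v1 • a - (qL a * bilL uE v1) • uE = w1 := by
    rw [av, hw1a, eq_neg_of_add_eq_zero_left hk]
    module
  rw [hfin] at hs
  exact (hv1.trans hs).trans hw1.symm

/-! ### Divisibility and congruences -/

theorem gram_eq_smul {v : I22 → ℤ} {m : ℤ} (h : ∀ x, m ∣ bilL x v) :
    ∃ z : I22 → ℤ, gramL *ᵥ v = m • z := by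
  choose z hz using fun i => h (Pi.single i 1)
  refine ⟨z, ?_⟩
  ext i
  rw [← bil_single, hz]
  rfl

theorem dvd_of_primitive {v : I22 → ℤ} (hv : IsPrimitive v) {d k : ℤ} (h : ∀ i, d ∣ k * v i) :
    d ∣ k := by
  obtain ⟨w, hw⟩ : ∃ w : I22 → ℤ, v = (Finset.univ.gcd v) • w := by
    choose w hw using fun i => Finset.gcd_dvd (f := v) (Finset.mem_univ i)
    exact ⟨w, funext hw⟩
  have h1 : d ∣ Finset.univ.gcd (fun i => k * v i) := Finset.dvd_gcd fun i _ => h i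
  rw [Finset.gcd_mul_left] at h1
  have h2 := (hv _ _ hw).dvd_mul_right.1 h1
  exact (dvd_normalize_iff).1 h2

/-- The divisibility of a primitive vector divides the exponent `2` of the discriminant group. -/
theorem dvd_two_of_primitive {v : I22 → ℤ} (hv : IsPrimitive v) {m : ℤ}
    (h : ∀ x, m ∣ bilL x v) : m ∣ 2 := by
  obtain ⟨z, hz⟩ := gram_eq_smul h
  have h1 : (2 : ℤ) • v = m • ((2 • unimodInv - projL) *ᵥ z) := by
    rw [← mulVec_smul, ← hz, mulVec_mulVec, twoInv_mul, smul_mulVec, one_mulVec]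
    rfl
  exact dvd_of_primitive hv fun i => ⟨_, congrFun h1 i⟩

/-- A vector of even divisibility is even in all coordinates of the unimodular part. -/
theorem eq_of_two_dvd {v : I22 → ℤ} (h : ∀ x, (2 : ℤ) ∣ bilL x v) :
    ∃ w : I22 → ℤ, v = (2 : ℤ) • w + (v (Sum.inr (Sum.inr (Sum.inl 0))) • e1 +
      v (Sum.inr (Sum.inr (Sum.inr 0))) • e2) := by
  obtain ⟨z, hz⟩ := gram_eq_smul h
  refine ⟨unimodInv *ᵥ z, ?_⟩
  rw [← mulVec_smul, ← hz, mulVec_mulVec, unimodInv_mul, ← projL_mulVec, sub_mulVec, one_mulVec,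
    sub_add_cancel]

theorem bil_e1 (x : I22 → ℤ) : bilL x e1 = -2 * x (Sum.inr (Sum.inr (Sum.inl 0))) := by
  have : e1 = Pi.single (Sum.inr (Sum.inr (Sum.inl 0))) 1 := by
    ext i
    simp [e1, Pi.single_apply]
  rw [bil_comm, this, bil_single]
  simp [gramL, Matrix.mulVec, dotProduct]

theorem bil_e2 (x : I22 → ℤ) : bilL x e2 = -2 * x (Sum.inr (Sum.inr (Sum.inr 0))) := by
  have : e2 = Pi.single (Sum.inr (Sum.inr (Sum.inr 0))) 1 := by
    ext i
    simp [e2, Pi.single_apply]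
  rw [bil_comm, this, bil_single]
  simp [gramL, Matrix.mulVec, dotProduct]

theorem e3_eq : e3 = uE - uF := by
  ext i
  rcases i with (i | i) | (i | i) | (i | i) <;> fin_cases i <;> rfl

theorem bil_e1_e1 : bilL e1 e1 = -2 := by rw [bil_e1]; rfl
theorem bil_e1_e2 : bilL e1 e2 = 0 := by rw [bil_e2]; rfl
theorem bil_e2_e1 : bilL e2 e1 = 0 := by rw [bil_e1]; rfl
theorem bil_e2_e2 : bilL e2 e2 = -2 := by rw [bil_e2]; rfl

theorem bil_uE_e3 : bilL uE e3 = -1 := by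
  rw [e3_eq, bil_sub_right, bil_uE_uE, bil_uE_uF]
  rfl

theorem bil_e3_e3 : bilL e3 e3 = -2 := by
  simp [e3_eq, bil_sub_right, bil_sub_left, bil_uE_uE, bil_uE_uF, bil_uF_uE, bil_uF_uF]

theorem bil_self_mod_eight (w : I22 → ℤ) (p q : ℤ) :
    ∃ n, bilL ((2 : ℤ) • w + (p • e1 + q • e2)) ((2 : ℤ) • w + (p • e1 + q • e2)) =
      8 * n - 2 * p ^ 2 - 2 * q ^ 2 := by
  refine ⟨qL w - p * w (Sum.inr (Sum.inr (Sum.inl 0))) - q * w (Sum.inr (Sum.inr (Sum.inr 0))), ?_⟩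
  simp only [bil_add_right, bil_add_left, bil_smul_left, bil_smul_right, bil_comm e1 w,
    bil_comm e2 w, bil_e1_e1, bil_e1_e2, bil_e2_e1, bil_e2_e2, bil_e1 w, bil_e2 w, bil_self w]
  ring

theorem two_dvd_e1 (x : I22 → ℤ) : 2 ∣ bilL x e1 := by
  rw [bil_e1]
  omega

theorem two_dvd_e2 (x : I22 → ℤ) : 2 ∣ bilL x e2 := by
  rw [bil_e2]
  omega

theorem two_dvd_e1_add_e2 (x : I22 → ℤ) : 2 ∣ bilL x (e1 + e2) := by
  rw [bil_add_right]
  exact (two_dvd_e1 x).add (two_dvd_e2 x)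

/-- A vector of even divisibility that pairs to `-2` with some vector has divisibility `2`. -/
theorem dvd_iff_two {u x : I22 → ℤ} (hu : ∀ x, 2 ∣ bilL x u) (hx : bilL x u = -2) (k : ℤ) :
    (∀ x, k ∣ bilL x u) ↔ k ∣ 2 := by
  refine ⟨fun h => ?_, fun h x => h.trans (hu x)⟩
  have := h x
  rw [hx] at this
  simpa using this

/-- The congruence invariant of the orbits on vectors of even divisibility: the parities of the
two `⟨−2⟩`-coordinates. -/
theorem SameOrbit.parity {u v : I22 → ℤ} (h : SameOrbit u v) (hu : ∀ x, (2 : ℤ) ∣ bilL x u) :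
    v (Sum.inr (Sum.inr (Sum.inl 0))) % 2 = u (Sum.inr (Sum.inr (Sum.inl 0))) % 2 ∧
    v (Sum.inr (Sum.inr (Sum.inr 0))) % 2 = u (Sum.inr (Sum.inr (Sum.inr 0))) % 2 := by
  obtain ⟨y, hy⟩ := h.sub two_ne_zero hu
  have h1 := congrFun hy (Sum.inr (Sum.inr (Sum.inl 0)))
  have h2 := congrFun hy (Sum.inr (Sum.inr (Sum.inr 0)))
  simp only [Pi.sub_apply, Pi.smul_apply, smul_eq_mul] at h1 h2
  omega

open Classical in
/-- The index of the reference root is read off from the divisibility of `v` and the parities of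
its two `⟨−2⟩`-coordinates. -/
theorem index_eq {v : I22 → ℤ} {j : Fin 4} (h : SameOrbit (refRoot j) v) :
    j = if ∀ x, (2 : ℤ) ∣ bilL x v then
        if v (Sum.inr (Sum.inr (Sum.inl 0))) % 2 = 1 then
          if v (Sum.inr (Sum.inr (Sum.inr 0))) % 2 = 1 then 3 else 0
        else 1
      else 2 := by
  fin_cases j
  · obtain ⟨h1, h2⟩ := SameOrbit.parity (u := e1) h two_dvd_e1
    replace h1 := h1.trans (show _ = (1 : ℤ) from rfl)
    replace h2 := h2.trans (show _ = (0 : ℤ) from rfl)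
    simp [SameOrbit.dvd (v := e1) h two_dvd_e1, h1, h2]
  · obtain ⟨h1, h2⟩ := SameOrbit.parity (u := e2) h two_dvd_e2
    replace h1 := h1.trans (show _ = (0 : ℤ) from rfl)
    simp [SameOrbit.dvd (v := e2) h two_dvd_e2, h1]
  · rw [if_neg]
    · rfl
    · intro h2
      have := SameOrbit.dvd (w := e3) (SameOrbit.symm h) h2 uE
      rw [bil_uE_e3] at this
      omega
  · obtain ⟨h1, h2⟩ := SameOrbit.parity (u := e1 + e2) h two_dvd_e1_add_e2
    replace h1 := h1.trans (show _ = (1 : ℤ) from rfl)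
    replace h2 := h2.trans (show _ = (1 : ℤ) from rfl)
    simp [SameOrbit.dvd (v := e1 + e2) h two_dvd_e1_add_e2, h1, h2]

/-- A root has `v² = -2d` with `d` dividing its divisibility, hence `d ∣ 2`. If the divisibility is
`1`, then `d = 1` and `v` is equivalent to `e3`; if it is `2`, then `d ≡ p² + q²` modulo `4` for the
`⟨−2⟩`-coordinates `p, q`, which leaves `e1`, `e2`, `e1 + e2` according to their parities. -/
theorem exists_index {v : I22 → ℤ} (hroot : IsRoot v) (hneg : bilL v v < 0) :
    ∃ j, SameOrbit (refRoot j) v := by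
  obtain ⟨hprim, d, -, hd, hdvd⟩ := hroot
  have hd2 : ∀ x, d ∣ bilL x v := fun x => dvd_of_primitive hprim (hdvd x)
  have hd3 : d ∣ 2 := dvd_two_of_primitive hprim hd2
  have hle := Int.le_of_dvd two_pos hd3
  have hd12 : d = 1 ∨ d = 2 := by omega
  by_cases h2 : ∀ x, (2 : ℤ) ∣ bilL x v
  · have hk : ∀ k : ℤ, (∀ x, k ∣ bilL x v) ↔ k ∣ 2 := fun k =>
      ⟨dvd_two_of_primitive hprim, fun h x => h.trans (h2 x)⟩
    obtain ⟨w, hw⟩ := eq_of_two_dvd h2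
    generalize v (Sum.inr (Sum.inr (Sum.inl 0))) = p at hw
    generalize v (Sum.inr (Sum.inr (Sum.inr 0))) = q at hw
    obtain ⟨n, hn⟩ := bil_self_mod_eight w p q
    rw [← hw, hd] at hn
    rcases Int.even_or_odd' p with ⟨p', rfl | rfl⟩ <;> rcases Int.even_or_odd' q with ⟨q', rfl | rfl⟩
    · exfalso
      ring_nf at hn
      omega
    · have hd1 : d = 1 := by
        ring_nf at hn
        omega
      refine ⟨1, eichler (v := e2) (x := e2) (m := 2) (y := w + p' • e1 + q' • e2) ?_ ?_ two_pos
        (dvd_iff_two two_dvd_e2 bil_e2_e2) hk ?_⟩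
      · rw [bil_e2_e2]
        decide
      · rw [bil_e2_e2, hd, hd1]
        rfl
      · rw [hw]
        module
    · have hd1 : d = 1 := by
        ring_nf at hn
        omega
      refine ⟨0, eichler (v := e1) (x := e1) (m := 2) (y := w + p' • e1 + q' • e2) ?_ ?_ two_pos
        (dvd_iff_two two_dvd_e1 bil_e1_e1) hk ?_⟩
      · rw [bil_e1_e1]
        decide
      · rw [bil_e1_e1, hd, hd1]
        rfl
      · rw [hw]
        module
    · have hd1 : d = 2 := by
        ring_nf at hn
        omega
      have hb : bilL e1 (e1 + e2) = -2 := by rw [bil_add_right, bil_e1_e1, bil_e1_e2, add_zero]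
      refine ⟨3, eichler (v := e1 + e2) (x := e1) (m := 2) (y := w + p' • e1 + q' • e2) ?_ ?_
        two_pos (dvd_iff_two two_dvd_e1_add_e2 hb) hk ?_⟩
      · rw [hb]
        decide
      · rw [bil_add_left, hb, bil_add_right, bil_e2_e1, bil_e2_e2, hd, hd1]
        rfl
      · rw [hw]
        module
  · have hd1 : d = 1 := by
      rcases hd12 with h | h
      · exact h
      · exact absurd (h ▸ hd2) h2
    have hk : ∀ k : ℤ, (∀ x, k ∣ bilL x v) ↔ k ∣ 1 := by
      refine fun k => ⟨fun h => ?_, fun h x => h.trans (one_dvd _)⟩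
      have h4 : k ∣ 2 := dvd_two_of_primitive hprim h
      rcases (Int.prime_two.irreducible.dvd_iff.1 h4) with h5 | h5
      · exact h5.dvd
      · exact absurd (fun x => h5.dvd.trans (h x)) h2
    refine ⟨2, eichler (v := e3) (x := uE) (m := 1) (y := v - e3) ?_ ?_ one_pos ?_ hk ?_⟩
    · rw [bil_uE_e3]
      decide
    · rw [bil_e3_e3, hd, hd1]
      rfl
    · refine fun k => ⟨fun h => ?_, fun h x => h.trans (one_dvd _)⟩
      have := h uE
      rw [bil_uE_e3] at this
      simpa using this
    · rw [one_smul]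

/-- Every root of `Λ` of negative square lies in the `Õ(Λ)`-orbit of
exactly one of `e₁`, `e₂`, `e₃`, `e₁+e₂`. -/
theorem stmt_4 (v : I22 → ℤ) (hroot : IsRoot v) (hneg : bilL v v < 0) :
    ∃! j : Fin 4, ∃ P : Matrix I22 I22 ℤ, InStableO P ∧ P.mulVec (refRoot j) = v := by
  obtain ⟨j, hj⟩ := exists_index hroot hneg
  exact ⟨j, hj, fun k hk => (index_eq hk).trans (index_eq hj).symm⟩
end

section
/- Let V be a 6-dimensional complex vector space and A ⊆ ⋀³V a Lagrangian subspace. If the set Y_A[3] := {lines ℂv ⊆ V : dim_ℂ(A ∩ (v∧⋀²V)) ≥ 3} is infinite, then either Θ_A is infinite, or there exists W ∈ Θ_A with dim_ℂ(A ∩ (⋀²W∧V)) ≥ 3. -/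
/-!
Suppose `Θ_A` is finite. The argument has three steps.

*Tangent data.* The lines of `Y_A[3]` together with three independent elements `v ∧ κ i` of `A` are
parametrized by an algebraic set. An algebraic set with infinitely many values of a coordinate has
uncountably many (`not_countable_values`), so infinitely many of its points are limits of others.
Differentiating `ω = 0` on `A` along secants shows that for infinitely many lines `ℂv` there is a
direction `w` with `v ∧ w ∧ κ i ∧ κ j = 0` for all `i`, `j` (`infinite_tangent`). The same holds inside
any subspace of `V`.

*Members of `Θ_A`.* Modulo `v` and `w` the `κ i` are decomposable bivectors of a four-dimensional
space, whose planes pairwise meet (`exists_normal_form`). Either the planes share a line or they lie in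
a common three-dimensional space; in both cases an eigenvector, or a zero of a quadratic form on a
line, yields a decomposable combination of the `v ∧ κ i` (`exists_decomposable_combination`), that is,
a member of `Θ_A` containing `v`. As `Θ_A` is finite, one `W ∈ Θ_A` contains infinitely many lines of
`Y_A[3]`.

*Trichotomy.* Applying the first step inside `W`, infinitely many lines `ℂv ⊆ W` have tangent data with
`w ∈ W`. At each of them (`outcome_of_tangent`) either `dim (A ∩ (⋀²W ∧ V)) ≥ 3`, or a second member of
`Θ_A` passes through `v`, or `A ∩ (⋀²W ∧ V)` has an element annihilated, among the vectors of `W`,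
exactly by `ℂv`. The second case happens for finitely many lines, since two members of `Θ_A` meeting in a
plane generate a pencil (`theta_infinite_of_two`). If the third case happens for two lines, the two
elements and the generator of `⋀³W` are independent (`three_le_of_two`). So the first case must occur.
-/

open Module ExteriorAlgebra

noncomputable section

variable {V : Type*} [AddCommGroup V] [Module ℂ V]

/-- The subspace `v ∧ ⋀²V` of `⋀³V`, inside the exterior algebra. -/
def vWedge2 (v : V) : Submodule ℂ (ExteriorAlgebra ℂ V) :=
  Submodule.map (LinearMap.mulLeft ℂ (ι ℂ v)) (⋀[ℂ]^2 V)

/-- The line `⋀³W` for a subspace `W ⊆ V`, inside the exterior algebra. -/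
def wedge3 (W : Submodule ℂ V) : Submodule ℂ (ExteriorAlgebra ℂ V) :=
  Submodule.span ℂ
    {z | ∃ w₁ ∈ W, ∃ w₂ ∈ W, ∃ w₃ ∈ W, z = ι ℂ w₁ * ι ℂ w₂ * ι ℂ w₃}

/-- The subspace `⋀²W ∧ V` for a subspace `W ⊆ V`, inside the exterior algebra. -/
def wedge2V (W : Submodule ℂ V) : Submodule ℂ (ExteriorAlgebra ℂ V) :=
  Submodule.span ℂ
    {z | ∃ w₁ ∈ W, ∃ w₂ ∈ W, ∃ u : V, z = ι ℂ w₁ * ι ℂ w₂ * ι ℂ u}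

end

/-! ### Polynomial systems in countably many unknowns over ℂ -/

/-- The Nullstellensatz for countably many unknowns. The residue field at a maximal ideal has countable
dimension over the uncountable field `ℂ`; a transcendental element `x` would give uncountably many
independent elements `(x - c)⁻¹`, so the residue field is `ℂ`. -/
theorem exists_common_zero {ι : Type} [Countable ι] (E : Set (MvPolynomial ι ℂ))
    (hE : Ideal.span E ≠ ⊤) : ∃ x : ι → ℂ, ∀ p ∈ E, MvPolynomial.eval x p = 0 := by
  obtain ⟨M, hM, hle⟩ := Ideal.exists_le_maximal _ hE
  let : Field (MvPolynomial ι ℂ ⧸ M) := Ideal.Quotient.field M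
  have hrank : Module.rank ℂ (MvPolynomial ι ℂ ⧸ M) ≤ Cardinal.aleph0 := by
    refine (LinearMap.rank_le_of_surjective (Ideal.Quotient.mkₐ ℂ M).toLinearMap
      (Ideal.Quotient.mkₐ_surjective ℂ M)).trans ?_
    rw [MvPolynomial.rank_eq_lift]
    simp
  have halg : Algebra.IsAlgebraic ℂ (MvPolynomial ι ℂ ⧸ M) := by
    refine ⟨fun x => ?_⟩
    by_contra hx
    have h := (Transcendental.linearIndependent_sub_inv hx).cardinal_lift_le_rank
    have h' := h.trans (Cardinal.lift_le.mpr hrank)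
    simp only [Cardinal.lift_aleph0, Cardinal.lift_le_aleph0] at h'
    exact not_countable_complex (Cardinal.le_aleph0_iff_set_countable.mp
      (by simpa using h'))
  have hbij := IsAlgClosed.algebraMap_bijective_of_isIntegral (k := ℂ)
    (K := MvPolynomial ι ℂ ⧸ M)
  choose g hg using hbij.2
  refine ⟨fun i => g (Ideal.Quotient.mk M (MvPolynomial.X i)), fun p hp => hbij.1 ?_⟩
  have key : ∀ q : MvPolynomial ι ℂ, algebraMap ℂ (MvPolynomial ι ℂ ⧸ M)
      (MvPolynomial.eval (fun i => g (Ideal.Quotient.mk M (MvPolynomial.X i))) q) =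
      Ideal.Quotient.mk M q := by
    intro q
    induction q using MvPolynomial.induction_on with
    | C a => simp; rfl
    | add p q hp hq => simp only [map_add, hp, hq]
    | mul_X p i hp => simp only [map_mul, hp, MvPolynomial.eval_X, hg]
  rw [key, map_zero]
  exact Ideal.Quotient.eq_zero_iff_mem.mpr (hle (Ideal.subset_span hp))

/-- Compactness: a system of polynomial equations in countably many unknowns is solvable over `ℂ` as
soon as each of its finite subsystems is. -/
theorem exists_common_zero_of_finite {ι : Type} [Countable ι] (E : Set (MvPolynomial ι ℂ))
    (hE : ∀ F : Finset (MvPolynomial ι ℂ), (F : Set _) ⊆ E →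
      ∃ x : ι → ℂ, ∀ p ∈ F, MvPolynomial.eval x p = 0) :
    ∃ x : ι → ℂ, ∀ p ∈ E, MvPolynomial.eval x p = 0 := by
  refine exists_common_zero E fun h => ?_
  have h1 : (1 : MvPolynomial ι ℂ) ∈ Submodule.span (MvPolynomial ι ℂ) E := by
    change (1 : MvPolynomial ι ℂ) ∈ Ideal.span E
    rw [h]; trivial
  obtain ⟨F, hFE, hF⟩ := Submodule.mem_span_finite_of_mem_span h1
  obtain ⟨x, hx⟩ := hE F hFE
  have : Ideal.span (F : Set (MvPolynomial ι ℂ)) ≤ RingHom.ker (MvPolynomial.eval x) :=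
    Ideal.span_le.mpr fun p hp => hx p hp
  have := this hF
  simp [RingHom.mem_ker] at this

/-- The algebra of polynomial functions on `ℂ^σ`. -/
noncomputable def polyFun (σ : Type) : Subalgebra ℂ ((σ → ℂ) → ℂ) :=
  (AlgHom.pi (R := ℂ) (A := fun _ : σ → ℂ => ℂ) fun x => MvPolynomial.aeval x).range

theorem mem_polyFun {σ : Type} {f : (σ → ℂ) → ℂ} :
    f ∈ polyFun σ ↔ ∃ p : MvPolynomial σ ℂ, ∀ x, MvPolynomial.eval x p = f x := by
  constructor
  · rintro ⟨p, rfl⟩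
    exact ⟨p, fun x => by simp [MvPolynomial.aeval_eq_eval]⟩
  · rintro ⟨p, hp⟩
    exact ⟨p, funext fun x => by simp [MvPolynomial.aeval_eq_eval, hp]⟩

theorem coord_mem_polyFun {σ : Type} (i : σ) : (fun x : σ → ℂ => x i) ∈ polyFun σ :=
  mem_polyFun.mpr ⟨MvPolynomial.X i, fun x => by simp⟩

theorem const_mem_polyFun {σ : Type} (c : ℂ) : (fun _ : σ → ℂ => c) ∈ polyFun σ :=
  mem_polyFun.mpr ⟨MvPolynomial.C c, fun x => by simp⟩

/-- A coordinate that takes infinitely many values on an algebraic set takes uncountably many. If the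
set `C` of values were countable, then adjoining for each `c ∈ C` an unknown `y_c` and the equation
`y_c * (x i - c) = 1` would give a finitely solvable, hence solvable, system in countably many
unknowns, whose solution has a coordinate value outside `C`. -/
theorem not_countable_values {σ : Type} [Finite σ] (E : Set ((σ → ℂ) → ℂ))
    (hE : E ⊆ polyFun σ) (i : σ)
    (hinf : ((fun x : σ → ℂ => x i) '' {x | ∀ f ∈ E, f x = 0}).Infinite) :
    ¬ ((fun x : σ → ℂ => x i) '' {x | ∀ f ∈ E, f x = 0}).Countable := by
  classical
  intro hc
  set C := (fun x : σ → ℂ => x i) '' {x | ∀ f ∈ E, f x = 0} with hC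
  have : Countable C := hc
  let E1 : Set (MvPolynomial (σ ⊕ C) ℂ) :=
    {q | ∃ p : MvPolynomial σ ℂ, (fun x => MvPolynomial.eval x p) ∈ E ∧
      q = MvPolynomial.rename Sum.inl p}
  let e : C → MvPolynomial (σ ⊕ C) ℂ := fun c =>
    MvPolynomial.X (Sum.inr c) * (MvPolynomial.X (Sum.inl i) - MvPolynomial.C (c : ℂ)) - 1
  obtain ⟨x, hx⟩ := exists_common_zero_of_finite (E1 ∪ Set.range e) (by
    intro F hF
    let D : Set ℂ := (fun q => if h : ∃ c, e c = q then ((h.choose : C) : ℂ) else 0) '' (F : Set _)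
    have hD : D.Finite := F.finite_toSet.image _
    obtain ⟨c, hcC, hcD⟩ := hinf.exists_notMem_finite hD
    obtain ⟨x, hx, rfl⟩ := hcC
    refine ⟨Sum.elim x fun c => (x i - c)⁻¹, fun q hq => ?_⟩
    rcases hF hq with ⟨p, hp, rfl⟩ | hr
    · rw [MvPolynomial.eval_rename]
      have := hx _ hp
      simpa [Function.comp_def] using this
    · have hr' : ∃ c, e c = q := hr
      have h2 := hr'.choose_spec
      have h3 : ((hr'.choose : C) : ℂ) ∈ D := ⟨q, hq, by simp only [dif_pos hr']⟩
      rw [← h2]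
      have : x i - ((hr'.choose : C) : ℂ) ≠ 0 := by
        intro h
        rw [sub_eq_zero] at h
        exact hcD (by simpa [h] using h3)
      simp [e, inv_mul_cancel₀ this])
  have hmem : x (Sum.inl i) ∈ C := by
    refine ⟨fun j => x (Sum.inl j), fun f hf => ?_, rfl⟩
    obtain ⟨p, hp⟩ := mem_polyFun.mp (hE hf)
    have := hx (MvPolynomial.rename Sum.inl p) (Or.inl ⟨p, by
      rwa [show (fun x => MvPolynomial.eval x p) = f from funext hp], rfl⟩)
    rw [MvPolynomial.eval_rename] at this
    rw [← hp]
    exact this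
  have := hx (e ⟨_, hmem⟩) (Or.inr ⟨_, rfl⟩)
  simp [e] at this

/-- In a second countable space the isolated points of a set are countably many. -/
theorem not_countable_accPt {X : Type*} [TopologicalSpace X] [SecondCountableTopology X]
    (S : Set X) (hS : ¬ S.Countable) : ¬ {x ∈ S | AccPt x (Filter.principal S)}.Countable := by
  intro h
  have hD : ({x ∈ S | ¬ AccPt x (Filter.principal S)}).Countable := by
    have : DiscreteTopology ({x ∈ S | ¬ AccPt x (Filter.principal S)} : Set X) := by
      rw [discreteTopology_subtype_iff]
      intro x hx
      have := hx.2
      rw [AccPt, Filter.not_neBot] at this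
      rw [eq_bot_iff, ← this]
      exact inf_le_inf_left _ (Filter.principal_mono.mpr fun y hy => hy.1)
    exact Set.countable_coe_iff.mp (TopologicalSpace.separableSpace_iff_countable.mp inferInstance)
  refine hS ((h.union hD).mono fun x hx => ?_)
  by_cases hacc : AccPt x (Filter.principal S)
  · exact Or.inl ⟨hx, hacc⟩
  · exact Or.inr ⟨hx, hacc⟩

/-! ### Tangent directions along an infinite family of lines -/

theorem exists_dual_family {G : Type*} [AddCommGroup G] [Module ℂ G] {a : Fin 3 → G}
    (ha : LinearIndependent ℂ a) :
    ∃ φ : Fin 3 → (G →ₗ[ℂ] ℂ), ∀ i j, φ j (a i) = if i = j then 1 else 0 := by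
  choose φ hφ using fun j : Fin 3 => LinearMap.exists_extend
    ((Finsupp.lapply j : (Fin 3 →₀ ℂ) →ₗ[ℂ] ℂ) ∘ₗ ha.repr)
  refine ⟨φ, fun i j => ?_⟩
  let x : Submodule.span ℂ (Set.range a) := ⟨a i, Submodule.subset_span ⟨i, rfl⟩⟩
  have h1 : φ j (a i) = (φ j ∘ₗ Submodule.subtype _) x := rfl
  rw [h1, hφ, LinearMap.comp_apply, ha.repr_eq_single i x rfl]
  simp [Finsupp.single_apply]

theorem bilin_eq_zero_of_tendsto {p e : ℕ} (B : (Fin p → ℂ) →ₗ[ℂ] (Fin e → ℂ) →ₗ[ℂ] ℂ)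
    {d : ℕ → Fin p → ℂ} {y : ℕ → Fin e → ℂ} {z : Fin p → ℂ} {y₀ : Fin e → ℂ}
    (hd : Filter.Tendsto d Filter.atTop (nhds z)) (hy : Filter.Tendsto y Filter.atTop (nhds y₀))
    (h : ∀ n, B (d n) (y n) = 0) : B z y₀ = 0 := by
  have hc : Continuous fun q : (Fin p → ℂ) × (Fin e → ℂ) =>
    B.toContinuousBilinearMap q.1 q.2 := by fun_prop
  have hlim := (hc.tendsto (z, y₀)).comp (hd.prodMk_nhds hy)
  have hzero : ∀ n, B.toContinuousBilinearMap (d n) (y n) = 0 := h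
  simp only [Function.comp_def, hzero] at hlim
  exact tendsto_nhds_unique hlim tendsto_const_nhds

/-- Functionals whose restrictions to `A` span the dual of `A`. -/
theorem exists_coord_functionals {G : Type*} [AddCommGroup G] [Module ℂ G] (A : Submodule ℂ G)
    [FiniteDimensional ℂ A] :
    ∃ ℓ : Fin (finrank ℂ A) → (G →ₗ[ℂ] ℂ), ∀ φ : G →ₗ[ℂ] ℂ, ∃ r : Fin (finrank ℂ A) → ℂ,
      ∀ a ∈ A, φ a = ∑ k, r k * ℓ k a := by
  let bA := Module.finBasis ℂ A
  choose ℓ hℓ using fun k => LinearMap.exists_extend (bA.coord k)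
  refine ⟨ℓ, fun φ => ⟨fun k => φ (bA k), fun a ha => ?_⟩⟩
  have h1 : ∀ k, ℓ k a = bA.coord k ⟨a, ha⟩ := fun k => by
    rw [← hℓ k]; rfl
  have h2 := congrArg (fun z : A => φ (z : G)) (bA.sum_repr ⟨a, ha⟩)
  simp only [Submodule.coe_sum, map_sum, Submodule.coe_smul, map_smul, smul_eq_mul] at h2
  rw [← h2]
  exact Finset.sum_congr rfl fun k _ => by rw [h1, Basis.coord_apply, mul_comm]

theorem bilin_mem_polyFun {σ : Type} {p e : ℕ} {G : Type*} [AddCommGroup G] [Module ℂ G]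
    (b : (Fin p → ℂ) →ₗ[ℂ] (Fin e → ℂ) →ₗ[ℂ] G) (φ : G →ₗ[ℂ] ℂ) (u : Fin p → σ) (w : Fin e → σ) :
    (fun t : σ → ℂ => φ (b (fun a => t (u a)) (fun c => t (w c)))) ∈ polyFun σ := by
  have : (fun t : σ → ℂ => φ (b (fun a => t (u a)) (fun c => t (w c)))) =
      ∑ a, ∑ c, (fun t : σ → ℂ => t (u a)) * ((fun t : σ → ℂ => t (w c)) *
        (fun _ => φ (b (Pi.single a 1) (Pi.single c 1)))) := by
    funext t
    have h1 : (fun a => t (u a)) = ∑ a, t (u a) • (Pi.single a 1 : Fin p → ℂ) := by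
      simp [← Pi.single_smul', Finset.univ_sum_single]
    have h2 : (fun c => t (w c)) = ∑ c, t (w c) • (Pi.single c 1 : Fin e → ℂ) := by
      simp [← Pi.single_smul', Finset.univ_sum_single]
    rw [h1, h2]
    simp only [map_sum, map_smul, LinearMap.sum_apply, LinearMap.smul_apply, Finset.sum_apply,
      Pi.mul_apply, smul_eq_mul, Finset.mul_sum]
    rw [Finset.sum_comm]
    exact Finset.sum_congr rfl fun a _ => Finset.sum_congr rfl fun c _ => by ring
  rw [this]
  exact sum_mem fun a _ => sum_mem fun c _ => mul_mem (coord_mem_polyFun _)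
    (mul_mem (coord_mem_polyFun _) (const_mem_polyFun _))

/-- Suppose infinitely many lines `ℂx` carry three independent vectors `b x (y i)` of the isotropic
space `A`. The triples `(x, y, r)`, with `r` a dual family certifying independence, form an algebraic
set, so uncountably many `x` occur and infinitely many of these solutions are accumulation points of
the others. At such a point the limit `z` of normalized secants of `x` satisfies
`ω (b z (y i)) (b x (y j)) = 0`: both `ω (b x' (y' i)) (b x (y j))` and `ω (b x (y' i)) (b x (y j))`
vanish for every nearby solution `(x', y')`, and the difference is linear in `x' - x`. -/
theorem infinite_tangent_coord {p e : ℕ} {G : Type*} [AddCommGroup G] [Module ℂ G]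
    (b : (Fin p → ℂ) →ₗ[ℂ] (Fin e → ℂ) →ₗ[ℂ] G) (ω : G →ₗ[ℂ] G →ₗ[ℂ] ℂ)
    (A : Submodule ℂ G) [FiniteDimensional ℂ A]
    (hA : ∀ a ∈ A, ∀ a' ∈ A, ω a a' = 0) (hb : ∀ x y y', ω (b x y) (b x y') = 0)
    (h : {L : Submodule ℂ (Fin p → ℂ) | ∃ x, x ≠ 0 ∧ L = Submodule.span ℂ {x} ∧
      ∃ y : Fin 3 → Fin e → ℂ, (∀ i, b x (y i) ∈ A) ∧
        LinearIndependent ℂ fun i => b x (y i)}.Infinite) :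
    {L : Submodule ℂ (Fin p → ℂ) | ∃ x, L = Submodule.span ℂ {x} ∧
      ∃ z, LinearIndependent ℂ ![x, z] ∧
      ∃ y : Fin 3 → Fin e → ℂ, (∀ i, b x (y i) ∈ A) ∧
        LinearIndependent ℂ (fun i => b x (y i)) ∧
        ∀ i j, ω (b z (y i)) (b x (y j)) = 0}.Infinite := by
  classical
  obtain ⟨ℓ, hℓ⟩ := exists_coord_functionals A
  let σ := Fin p ⊕ (Fin 3 × Fin e) ⊕ (Fin 3 × Fin (finrank ℂ A))
  let X : (σ → ℂ) → Fin p → ℂ := fun t a => t (Sum.inl a)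
  let Y : (σ → ℂ) → Fin 3 → Fin e → ℂ := fun t i c => t (Sum.inr (Sum.inl (i, c)))
  let R : (σ → ℂ) → Fin 3 → Fin (finrank ℂ A) → ℂ := fun t j k => t (Sum.inr (Sum.inr (j, k)))
  -- infinitely many of the lines lie in one affine chart `x i₀ = 1`
  obtain ⟨i₀, hi₀⟩ : ∃ i₀ : Fin p, {x : Fin p → ℂ | x i₀ = 1 ∧
      ∃ y : Fin 3 → Fin e → ℂ, (∀ i, b x (y i) ∈ A) ∧
        LinearIndependent ℂ fun i => b x (y i)}.Infinite := by
    by_contra hcon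
    push Not at hcon
    refine h (((Set.finite_iUnion hcon).image fun x => Submodule.span ℂ {x}).subset ?_)
    rintro L ⟨x, hx, rfl, y, hyA, hy⟩
    obtain ⟨i, hi⟩ := Function.ne_iff.mp hx
    have hi' : x i ≠ 0 := hi
    refine ⟨(x i)⁻¹ • x, Set.mem_iUnion.mpr ⟨i, by simp [hi'], y, fun j => ?_, ?_⟩, ?_⟩
    · simpa using A.smul_mem _ (hyA j)
    · simp only [map_smul, LinearMap.smul_apply]
      exact hy.units_smul (fun _ => Units.mk0 _ (inv_ne_zero hi'))
    · have hunit := IsUnit.mk0 _ (inv_ne_zero hi')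
      exact Submodule.span_singleton_smul_eq hunit x
  -- the equations: `x i₀ = 1`, `b x (y i) ∈ A`, and duality of `∑ k, r j k • ℓ k` to `b x (y i)`
  let E : Set ((σ → ℂ) → ℂ) :=
    {fun t => X t i₀ - 1} ∪
    {f | ∃ φ : G →ₗ[ℂ] ℂ, (∀ a ∈ A, φ a = 0) ∧ ∃ i, f = fun t => φ (b (X t) (Y t i))} ∪
    {f | ∃ i j, f = fun t => ∑ k, R t j k * ℓ k (b (X t) (Y t i)) - if i = j then 1 else 0}
  have hE : E ⊆ polyFun σ := by
    rintro f ((rfl | ⟨φ, -, i, rfl⟩) | ⟨i, j, rfl⟩)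
    · exact sub_mem (coord_mem_polyFun (Sum.inl i₀)) (const_mem_polyFun 1)
    · exact bilin_mem_polyFun b φ _ _
    · have := sub_mem (S := Subalgebra ℂ ((σ → ℂ) → ℂ)) (sum_mem fun k (_ : k ∈ Finset.univ) => mul_mem
        (coord_mem_polyFun (σ := σ) (Sum.inr (Sum.inr (j, k))))
        (bilin_mem_polyFun (σ := σ) b (ℓ k) (fun a => Sum.inl a)
          (fun c => Sum.inr (Sum.inl (i, c)))))
        (const_mem_polyFun (if i = j then 1 else 0))
      rw [SetLike.mem_coe]
      convert this using 1
      funext t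
      simp [X, Y, R, Finset.sum_apply]
  have hT : ∀ t : σ → ℂ, (∀ f ∈ E, f t = 0) → X t i₀ = 1 ∧ (∀ i, b (X t) (Y t i) ∈ A) ∧
      LinearIndependent ℂ fun i => b (X t) (Y t i) := by
    intro t ht
    refine ⟨sub_eq_zero.mp (ht _ (Or.inl (Or.inl rfl))), fun i => ?_, ?_⟩
    · by_contra hmem
      obtain ⟨φ, hφ, hφA⟩ := Submodule.exists_dual_map_eq_bot_of_notMem hmem inferInstance
      refine hφ (ht _ (Or.inl (Or.inr ⟨φ, fun a ha => ?_, i, rfl⟩)))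
      exact (Submodule.mem_bot ℂ).mp (hφA ▸ Submodule.mem_map_of_mem ha)
    · rw [Fintype.linearIndependent_iff]
      intro g hg j
      have h1 : ∀ i, ∑ k, R t j k * ℓ k (b (X t) (Y t i)) = if i = j then 1 else 0 := fun i =>
        sub_eq_zero.mp (ht _ (Or.inr ⟨i, j, rfl⟩))
      have h2 : (∑ k, R t j k • ℓ k) (∑ i, g i • b (X t) (Y t i)) = 0 := by rw [hg, map_zero]
      have h3 : ∀ i, (∑ k, R t j k • ℓ k) (b (X t) (Y t i)) = if i = j then 1 else 0 := fun i => by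
        rw [← h1 i]; simp [LinearMap.sum_apply]
      rw [map_sum] at h2
      simpa [h3] using h2
  -- if every coordinate of `x` took finitely many values, only finitely many `x` would occur
  obtain ⟨i₁, hi₁⟩ : ∃ i₁ : Fin p,
      ((fun t : σ → ℂ => t (Sum.inl i₁)) '' {t | ∀ f ∈ E, f t = 0}).Infinite := by
    by_contra hcon
    push Not at hcon
    refine hi₀ ((Set.Finite.pi hcon).subset ?_)
    rintro x ⟨hx1, y, hyA, hy⟩ i -
    obtain ⟨φ, hφ⟩ := exists_dual_family hy
    choose r hr using fun j => hℓ (φ j)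
    refine ⟨Sum.elim x (Sum.elim (fun q => y q.1 q.2) fun q => r q.1 q.2), ?_, rfl⟩
    rintro f ((rfl | ⟨φ', hφ', i, rfl⟩) | ⟨i, j, rfl⟩)
    · simp [X, hx1]
    · exact hφ' _ (hyA i)
    · have := hr j _ (hyA i)
      rw [hφ] at this
      simp only [X, Y, R, Sum.elim_inl, Sum.elim_inr]
      rw [← this, sub_self]
  have hunc := not_countable_values E hE (Sum.inl i₁) hi₁
  -- choose one solution for every value of the coordinate
  choose! s hsT hs using fun (c : ℂ)
    (hc : c ∈ (fun t : σ → ℂ => t (Sum.inl i₁)) '' {t | ∀ f ∈ E, f t = 0}) => hc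
  set C := (fun t : σ → ℂ => t (Sum.inl i₁)) '' {t | ∀ f ∈ E, f t = 0} with hC
  have hTinj : Set.InjOn X (s '' C) := by
    rintro _ ⟨c, hc, rfl⟩ _ ⟨d, hd, rfl⟩ hcd
    have : X (s c) i₁ = X (s d) i₁ := by rw [hcd]
    rw [show c = d from (hs c hc).symm.trans (this.trans (hs d hd))]
  have hsinj : Set.InjOn s C := fun c hc d hd hcd => by
    rw [← hs c hc, ← hs d hd, hcd]
  have hacc := not_countable_accPt (s '' C) (fun hcount =>
    hunc (Set.countable_of_injective_of_countable_image hsinj hcount))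
  have hacc' : {t ∈ s '' C | AccPt t (Filter.principal (s '' C))}.Infinite := fun hfin =>
    hacc hfin.countable
  have hsol : ∀ t ∈ s '' C, ∀ f ∈ E, f t = 0 := by
    rintro _ ⟨c, hc, rfl⟩
    exact hsT c hc
  have hinj : Set.InjOn (fun t => Submodule.span ℂ {X t})
      {t ∈ s '' C | AccPt t (Filter.principal (s '' C))} := by
    intro t ht t' ht' htt
    refine hTinj ht.1 ht'.1 ?_
    have h1 : X t ∈ Submodule.span ℂ {X t'} := by
      have : Submodule.span ℂ {X t} = Submodule.span ℂ {X t'} := htt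
      rw [← this]; exact Submodule.mem_span_singleton_self _
    obtain ⟨k, hk⟩ := Submodule.mem_span_singleton.mp h1
    have h2 := congrFun hk i₀
    rw [Pi.smul_apply, (hT t (hsol t ht.1)).1, (hT t' (hsol t' ht'.1)).1] at h2
    simp only [smul_eq_mul, mul_one] at h2
    rw [← hk, h2, one_smul]
  refine (hacc'.image hinj).mono ?_
  rintro _ ⟨t, ⟨htS, htacc⟩, rfl⟩
  obtain ⟨hx1, hyA, hyLI⟩ := hT t (hsol t htS)
  refine ⟨X t, rfl, ?_⟩
  have hcl : t ∈ closure (s '' C \ {t}) := by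
    rw [mem_closure_iff_nhdsWithin_neBot]
    exact accPt_principal_iff_nhdsWithin.mp htacc
  obtain ⟨u, huS, hu⟩ := mem_closure_iff_seq_limit.mp hcl
  have hne : ∀ n, X (u n) - X t ≠ 0 := fun n hn =>
    (huS n).2 (hTinj (huS n).1 htS (sub_eq_zero.mp hn))
  -- unit secant directions; they lie in the hyperplane `x i₀ = 0`, so their limit is not along `x`
  let d : ℕ → Fin p → ℂ := fun n => ((‖X (u n) - X t‖⁻¹ : ℝ) : ℂ) • (X (u n) - X t)
  have hd : ∀ n, d n ∈ Metric.sphere (0 : Fin p → ℂ) 1 := fun n => by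
    have := norm_ne_zero_iff.mpr (hne n)
    simp only [d, mem_sphere_zero_iff_norm, norm_smul, Complex.norm_real, norm_inv, norm_norm]
    exact inv_mul_cancel₀ this
  obtain ⟨z, hz, ψ, hψ, hlim⟩ := (isCompact_sphere (0 : Fin p → ℂ) 1).tendsto_subseq hd
  have hz0 : z ≠ 0 := by
    rintro rfl
    simp at hz
  have hzi : z i₀ = 0 := by
    have h1 : Filter.Tendsto (fun n => (d ∘ ψ) n i₀) Filter.atTop (nhds (z i₀)) :=
      ((continuous_apply i₀).tendsto z).comp hlim
    have h2 : ∀ n, (d ∘ ψ) n i₀ = 0 := fun n => by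
      simp [d, hx1, (hT _ (hsol _ (huS (ψ n)).1)).1]
    simp only [h2] at h1
    exact tendsto_nhds_unique h1 tendsto_const_nhds
  refine ⟨z, ?_, Y t, hyA, hyLI, fun i j => ?_⟩
  · rw [LinearIndependent.pair_iff]
    intro a c hac
    have h1 := congrFun hac i₀
    simp only [Pi.add_apply, Pi.smul_apply, hx1, hzi, smul_eq_mul, mul_one, mul_zero, add_zero,
      Pi.zero_apply] at h1
    refine ⟨h1, ?_⟩
    rw [h1, zero_smul, zero_add] at hac
    exact (smul_eq_zero.mp hac).resolve_right hz0
  · refine bilin_eq_zero_of_tendsto (b.compr₂ (ω.flip (b (X t) (Y t j))))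
      (d := d ∘ ψ) (y := fun n => Y (u (ψ n)) i) hlim ?_ fun n => ?_
    · have : Continuous fun t => Y t i := by fun_prop
      exact (this.tendsto t).comp (hu.comp hψ.tendsto_atTop)
    · have h0 : ω (b (X (u (ψ n))) (Y (u (ψ n)) i)) (b (X t) (Y t j)) = 0 :=
        hA _ ((hT _ (hsol _ (huS (ψ n)).1)).2.1 i) _ (hyA j)
      simp only [LinearMap.compr₂_apply, LinearMap.flip_apply, Function.comp_apply, d, map_smul,
        LinearMap.smul_apply, map_sub, LinearMap.sub_apply, hb, h0, sub_zero, smul_zero]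

/-! ### Products of vectors in the exterior algebra -/

theorem ι_swap {V : Type*} [AddCommGroup V] [Module ℂ V] (x y : V) :
    ι ℂ x * ι ℂ y = -(ι ℂ y * ι ℂ x) :=
  eq_neg_of_add_eq_zero_left (ι_add_mul_swap x y)

theorem ι_swap_assoc {V : Type*} [AddCommGroup V] [Module ℂ V] (x y : V)
    (z : ExteriorAlgebra ℂ V) :
    ι ℂ x * (ι ℂ y * z) = -(ι ℂ y * (ι ℂ x * z)) := by
  rw [← mul_assoc, ι_swap, neg_mul, mul_assoc]

theorem ι_sq_assoc {V : Type*} [AddCommGroup V] [Module ℂ V] (x : V)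
    (z : ExteriorAlgebra ℂ V) : ι ℂ x * (ι ℂ x * z) = 0 := by
  rw [← mul_assoc, ι_sq_zero, zero_mul]

/-- A product of vectors vanishes exactly when they are linearly dependent. -/
theorem ιMulti_eq_zero_iff {V : Type*} [AddCommGroup V] [Module ℂ V] {n : ℕ} {v : Fin n → V} :
    ιMulti ℂ n v = 0 ↔ ¬ LinearIndependent ℂ v := by
  constructor
  · intro h hv
    have h1 := exteriorPower.ιMulti_family_linearIndependent_field n hv
    have h2 := h1.ne_zero ⟨Finset.univ, by simp⟩
    apply h2
    apply Subtype.ext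
    rw [exteriorPower.ιMulti_family_apply_coe, ExteriorAlgebra.ιMulti_family]
    set e := Set.powersetCard.ofFinEmbEquiv.symm
      (⟨Finset.univ, by simp⟩ : Set.powersetCard (Fin n) n)
    have he : Function.Bijective e := Finite.injective_iff_bijective.mp e.injective
    have h3 := (ιMulti ℂ n).map_perm v (Equiv.ofBijective e he)
    rw [h, smul_zero] at h3
    exact h3
  · exact (ιMulti ℂ n).map_linearDependent v

theorem ι_mul2_eq_zero {V : Type*} [AddCommGroup V] [Module ℂ V] {x y : V} :
    ι ℂ x * ι ℂ y = 0 ↔ ¬ LinearIndependent ℂ ![x, y] := by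
  rw [← ιMulti_eq_zero_iff, ιMulti_apply]; simp [List.ofFn_succ]

theorem ι_mul3_eq_zero {V : Type*} [AddCommGroup V] [Module ℂ V] {x y z : V} :
    ι ℂ x * (ι ℂ y * ι ℂ z) = 0 ↔ ¬ LinearIndependent ℂ ![x, y, z] := by
  rw [← ιMulti_eq_zero_iff, ιMulti_apply]; simp [List.ofFn_succ]

theorem ι_mul4_eq_zero {V : Type*} [AddCommGroup V] [Module ℂ V] {a b c d : V} :
    ι ℂ a * (ι ℂ b * (ι ℂ c * ι ℂ d)) = 0 ↔ ¬ LinearIndependent ℂ ![a, b, c, d] := by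
  rw [← ιMulti_eq_zero_iff, ιMulti_apply]; simp [List.ofFn_succ, Fin.succ]

theorem ι_mul6_eq_zero {V : Type*} [AddCommGroup V] [Module ℂ V] {a b c d e f : V} :
    ι ℂ a * (ι ℂ b * (ι ℂ c * (ι ℂ d * (ι ℂ e * ι ℂ f)))) = 0 ↔
      ¬ LinearIndependent ℂ ![a, b, c, d, e, f] := by
  rw [← ιMulti_eq_zero_iff, ιMulti_apply]; simp [List.ofFn_succ, Fin.succ]

/-- The decomposability criterion used throughout: `x ∧ y + w ∧ f` is decomposable as soon as `f` lies
in the span of `x` and `y`. -/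
theorem ι_mul_eq_add {V : Type*} [AddCommGroup V] [Module ℂ V] (x y w : V) (α β : ℂ) :
    ι ℂ (x + β • w) * ι ℂ (y - α • w) = ι ℂ x * ι ℂ y + ι ℂ w * ι ℂ (α • x + β • y) := by
  simp only [map_add, map_sub, map_smul, add_mul, mul_add, mul_sub, smul_mul_assoc,
    mul_smul_comm, ι_sq_zero, ι_swap w x]
  module

/-- Any nonzero vector of the span of `x, y` can serve as first factor of `x ∧ y`. -/
theorem exists_mul_eq {V : Type*} [AddCommGroup V] [Module ℂ V] {x y : V} {p q : ℂ}
    (h : p • x + q • y ≠ 0) :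
    ∃ r s : ℂ, ι ℂ (p • x + q • y) * ι ℂ (r • x + s • y) = ι ℂ x * ι ℂ y := by
  have key : ∀ r s : ℂ, ι ℂ (p • x + q • y) * ι ℂ (r • x + s • y) =
      (p * s - q * r) • (ι ℂ x * ι ℂ y) := by
    intro r s
    simp only [map_add, map_smul, add_mul, mul_add, smul_mul_assoc,
      mul_smul_comm, ι_sq_zero, ι_swap y x]
    module
  by_cases hp : p = 0
  · have hq : q ≠ 0 := by rintro rfl; simp [hp] at h
    refine ⟨-q⁻¹, 0, ?_⟩
    rw [key]; simp [hp, hq]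
  · refine ⟨0, p⁻¹, ?_⟩
    rw [key]; simp [hp]

/-- Two planes of `V` that are not in direct sum share a line. -/
theorem exists_common_factor {V : Type*} [AddCommGroup V] [Module ℂ V] {x y x' y' : V}
    (h1 : ι ℂ x * ι ℂ y ≠ 0) (h2 : ι ℂ x' * ι ℂ y' ≠ 0)
    (h : ι ℂ x * ι ℂ y * (ι ℂ x' * ι ℂ y') = 0) :
    ∃ p q r s : ℂ, p • x + q • y = r • x' + s • y' ∧ p • x + q • y ≠ 0 := by
  rw [mul_assoc, ι_mul4_eq_zero, Fintype.not_linearIndependent_iff] at h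
  obtain ⟨g, hg, i, hi⟩ := h
  simp only [Fin.sum_univ_four, Matrix.cons_val] at hg
  refine ⟨g 0, g 1, -g 2, -g 3, ?_, fun h0 => ?_⟩
  · rw [← sub_eq_zero, ← hg]; module
  rw [Ne, ι_mul2_eq_zero, not_not, LinearIndependent.pair_iff] at h1 h2
  have e1 := h1 _ _ h0
  have e2 := h2 (g 2) (g 3) (by rw [← hg, h0]; module)
  apply hi
  fin_cases i
  exacts [e1.1, e1.2, e2.1, e2.2]

/-! ### Normal form of a bivector whose square vanishes modulo two vectors -/

/-- The span of all products `x ∧ y` with `x, y` in a subspace `S`. -/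
def wedge2 {V : Type*} [AddCommGroup V] [Module ℂ V] (S : Submodule ℂ V) :
    Submodule ℂ (ExteriorAlgebra ℂ V) :=
  Submodule.span ℂ {z | ∃ x ∈ S, ∃ y ∈ S, z = ι ℂ x * ι ℂ y}

theorem exteriorPower_two_le {V : Type*} [AddCommGroup V] [Module ℂ V] :
    ⋀[ℂ]^2 V ≤ wedge2 (⊤ : Submodule ℂ V) := by
  rw [← ιMulti_span_fixedDegree]
  apply Submodule.span_mono
  rintro _ ⟨x, rfl⟩
  exact ⟨x 0, trivial, x 1, trivial, by
    simp [ιMulti_apply, Matrix.vecTail]⟩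

/-- A bivector on `ℂe + S` is `e ∧ m` plus a bivector on `S`. -/
theorem exists_peel {V : Type*} [AddCommGroup V] [Module ℂ V] {e : V} {S : Submodule ℂ V}
    {κ : ExteriorAlgebra ℂ V} (h : κ ∈ wedge2 (Submodule.span ℂ {e} ⊔ S)) :
    ∃ m ∈ S, ∃ κ' ∈ wedge2 S, κ = ι ℂ e * ι ℂ m + κ' := by
  induction h using Submodule.span_induction with
  | mem z hz =>
    obtain ⟨x, hx, y, hy, rfl⟩ := hz
    rw [Submodule.mem_sup] at hx hy
    obtain ⟨x', hx', s, hs, rfl⟩ := hx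
    obtain ⟨y', hy', t, ht, rfl⟩ := hy
    obtain ⟨α, rfl⟩ := Submodule.mem_span_singleton.mp hx'
    obtain ⟨β, rfl⟩ := Submodule.mem_span_singleton.mp hy'
    refine ⟨α • t - β • s, S.sub_mem (S.smul_mem _ ht) (S.smul_mem _ hs), ι ℂ s * ι ℂ t,
      Submodule.subset_span ⟨s, hs, t, ht, rfl⟩, ?_⟩
    simp only [map_add, map_sub, map_smul, add_mul, mul_add, mul_sub, smul_mul_assoc,
      mul_smul_comm, ι_sq_zero, ι_swap s e]
    module
  | zero => exact ⟨0, S.zero_mem, 0, Submodule.zero_mem _, by simp⟩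
  | add a b _ _ iha ihb =>
    obtain ⟨m, hm, k, hk, rfl⟩ := iha
    obtain ⟨m', hm', k', hk', rfl⟩ := ihb
    exact ⟨m + m', S.add_mem hm hm', k + k', Submodule.add_mem _ hk hk', by
      rw [map_add, mul_add]; abel⟩
  | smul r a _ ih =>
    obtain ⟨m, hm, k, hk, rfl⟩ := ih
    exact ⟨r • m, S.smul_mem _ hm, r • k, Submodule.smul_mem _ _ hk, by
      rw [map_smul, mul_smul_comm, smul_add]⟩

/-- Every bivector in three variables is decomposable, `X ∧ Y`, and (if it is nonzero) a vector `f`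
of the three-dimensional space with `f ∧ X ∧ Y = 0` is a combination of `X` and `Y`. -/
theorem exists_decomp_three {V : Type*} [AddCommGroup V] [Module ℂ V] (a b c : V) (r s m : ℂ) :
    ∃ X ∈ Submodule.span ℂ {a, b, c}, ∃ Y ∈ Submodule.span ℂ {a, b, c},
      ι ℂ X * ι ℂ Y = r • (ι ℂ a * ι ℂ b) + s • (ι ℂ a * ι ℂ c) + m • (ι ℂ b * ι ℂ c) ∧
      ((r ≠ 0 ∨ s ≠ 0 ∨ m ≠ 0) → ∀ fa fb fc : ℂ, fa * m - fb * s + fc * r = 0 →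
        ∃ α β : ℂ, fa • a + fb • b + fc • c = α • X + β • Y) := by
  by_cases hm : m = 0
  · subst hm
    refine ⟨a, Submodule.mem_span_triple.mpr ⟨1, 0, 0, by module⟩, r • b + s • c,
      Submodule.mem_span_triple.mpr ⟨0, r, s, by module⟩, ?_, ?_⟩
    · simp only [map_add, map_smul, mul_add, mul_smul_comm]
      module
    · intro h fa fb fc hf
      by_cases hr : r = 0
      · have hs : s ≠ 0 := by simpa [hr] using h
        refine ⟨fa, fc / s, ?_⟩
        have : fb = 0 := by
          subst hr
          have : fb * s = 0 := by linear_combination -hf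
          simpa [hs] using this
        subst hr this
        match_scalars
        · simp
        · simp
        · field_simp
      · refine ⟨fa, fb / r, ?_⟩
        match_scalars
        · ring
        · field_simp
        · field_simp
          linear_combination hf
  · refine ⟨b + (s / m) • a, Submodule.mem_span_triple.mpr ⟨s / m, 1, 0, by module⟩, m • c - r • a,
      Submodule.mem_span_triple.mpr ⟨-r, 0, m, by module⟩, ?_, ?_⟩
    · simp only [map_add, map_sub, map_smul, add_mul, mul_sub, smul_mul_assoc,
        mul_smul_comm, ι_sq_zero, ι_swap b a]
      match_scalars <;> field_simp
    · intro _ fa fb fc hf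
      refine ⟨fb, fc / m, ?_⟩
      match_scalars
      · field_simp
        linear_combination hf
      · ring
      · field_simp

theorem mul_ne_zero_of_isCompl {V : Type*} [AddCommGroup V] [Module ℂ V] {v w : V}
    {U : Submodule ℂ V} (hvw : LinearIndependent ℂ ![v, w])
    (hU : IsCompl (Submodule.span ℂ {v, w}) U) {x y z t : V} (hx : x ∈ U) (hy : y ∈ U) (hz : z ∈ U)
    (ht : t ∈ U) (h : LinearIndependent ℂ ![x, y, z, t]) :
    ι ℂ v * (ι ℂ w * (ι ℂ x * (ι ℂ y * (ι ℂ z * ι ℂ t)))) ≠ 0 := by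
  rw [Ne, ι_mul6_eq_zero, not_not]
  have hsub : Submodule.span ℂ (Set.range ![x, y, z, t]) ≤ U := by
    rw [Submodule.span_le]
    rintro _ ⟨i, rfl⟩
    fin_cases i <;> simpa
  have key := LinearIndependent.sum_type hvw h (by
    refine (hU.disjoint.mono_right hsub).mono_left ?_
    rw [Matrix.range_cons, Matrix.range_cons, Matrix.range_empty, Set.union_empty,
      Set.singleton_union])
  have := key.comp (![Sum.inl 0, Sum.inl 1, Sum.inr 0, Sum.inr 1, Sum.inr 2, Sum.inr 3] :
    Fin 6 → Fin 2 ⊕ Fin 4) (by decide)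
  have e : Sum.elim ![v, w] ![x, y, z, t] ∘ ![Sum.inl 0, Sum.inl 1, Sum.inr 0, Sum.inr 1,
      Sum.inr 2, Sum.inr 3] = ![v, w, x, y, z, t] := by
    ext i
    fin_cases i <;> rfl
  rwa [e] at this

/-- After multiplication by `v ∧ w` only the components of the bivectors outside `v` and `w` remain. -/
theorem normal_form_mul {V : Type*} [AddCommGroup V] [Module ℂ V] (v w x y f g x' y' f' g' : V) :
    ι ℂ v * (ι ℂ w * ((ι ℂ x * ι ℂ y + ι ℂ w * ι ℂ f + ι ℂ v * ι ℂ g) *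
      (ι ℂ x' * ι ℂ y' + ι ℂ w * ι ℂ f' + ι ℂ v * ι ℂ g'))) =
    ι ℂ v * (ι ℂ w * (ι ℂ x * (ι ℂ y * (ι ℂ x' * ι ℂ y')))) := by
  simp only [mul_add, add_mul, mul_assoc, ι_sq_assoc, ι_swap_assoc w v, ι_swap_assoc x v,
    ι_swap_assoc y v, ι_swap_assoc x w, ι_swap_assoc y w, mul_zero, neg_zero, mul_neg, add_zero]

/-- A bivector whose square vanishes modulo `v` and `w` is decomposable modulo `v` and `w`. -/
theorem exists_normal_form {V : Type*} [AddCommGroup V] [Module ℂ V] {v w : V}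
    {U : Submodule ℂ V} (hvw : LinearIndependent ℂ ![v, w])
    (hU : IsCompl (Submodule.span ℂ {v, w}) U) (hU4 : finrank ℂ U = 4)
    {κ : ExteriorAlgebra ℂ V} (hκ : κ ∈ ⋀[ℂ]^2 V) (h : ι ℂ v * (ι ℂ w * (κ * κ)) = 0) :
    ∃ x ∈ U, ∃ y ∈ U, ∃ f ∈ U, ∃ g : V, κ = ι ℂ x * ι ℂ y + ι ℂ w * ι ℂ f + ι ℂ v * ι ℂ g := by
  have : FiniteDimensional ℂ U := FiniteDimensional.of_finrank_pos (by omega)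
  let B := finBasisOfFinrankEq ℂ U hU4
  set a : V := (B 0 : V) with ha
  set b : V := (B 1 : V) with hb
  set c : V := (B 2 : V) with hc
  set d : V := (B 3 : V) with hd
  have hLI : LinearIndependent ℂ ![a, b, c, d] := by
    have := B.linearIndependent.map' U.subtype (by simp)
    have e : U.subtype ∘ B = ![a, b, c, d] := by
      ext i
      fin_cases i <;> rfl
    rwa [e] at this
  have hUe : U = Submodule.span ℂ {a} ⊔ Submodule.span ℂ {b, c, d} := by
    apply le_antisymm
    · intro x hx
      have := B.sum_repr ⟨x, hx⟩
      rw [Fin.sum_univ_four] at this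
      have h2 := congrArg U.subtype this
      simp only [map_add, map_smul, Submodule.subtype_apply] at h2
      rw [← h2, add_assoc, add_assoc]
      refine Submodule.add_mem_sup (Submodule.mem_span_singleton.mpr ⟨_, rfl⟩)
        (Submodule.mem_span_triple.mpr ⟨_, _, _, add_assoc _ _ _⟩)
    · rw [sup_le_iff, Submodule.span_le, Submodule.span_le]
      refine ⟨by simp [ha], ?_⟩
      rintro _ (rfl | rfl | rfl) <;> simp [hb, hc, hd]
  have hbU : b ∈ U := (B 1).2
  have hcU : c ∈ U := (B 2).2
  have hdU : d ∈ U := (B 3).2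
  have haU : a ∈ U := (B 0).2
  have hSU : Submodule.span ℂ {b, c, d} ≤ U := hUe ▸ le_sup_right
  have h0 := exteriorPower_two_le hκ
  have htop : (⊤ : Submodule ℂ V) = Submodule.span ℂ {v} ⊔ (Submodule.span ℂ {w} ⊔ U) := by
    rw [← sup_assoc, ← Submodule.span_union, Set.singleton_union, hU.sup_eq_top]
  rw [htop] at h0
  obtain ⟨g, -, κ1, h1, rfl⟩ := exists_peel h0
  obtain ⟨f, hf, κ2, h2, rfl⟩ := exists_peel h1
  rw [hUe] at h2
  obtain ⟨m, hm, κ3, h3, rfl⟩ := exists_peel h2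
  have h3' : ∃ X ∈ Submodule.span ℂ {b, c, d}, ∃ Y ∈ Submodule.span ℂ {b, c, d},
      κ3 = ι ℂ X * ι ℂ Y := by
    have e1 : Submodule.span ℂ {b, c, d} = Submodule.span ℂ {b} ⊔ (Submodule.span ℂ {c} ⊔
      (Submodule.span ℂ {d} ⊔ ⊥)) := by
      rw [Submodule.span_insert, Submodule.span_insert, sup_bot_eq]
    rw [e1] at h3
    obtain ⟨m1, hm1, κ4, h4, rfl⟩ := exists_peel h3
    obtain ⟨m2, hm2, κ5, h5, rfl⟩ := exists_peel h4
    obtain ⟨m3, hm3, κ6, h6, rfl⟩ := exists_peel h5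
    have h6' : κ6 = 0 := by
      have : wedge2 (⊥ : Submodule ℂ V) ≤ ⊥ := by
        rw [wedge2, Submodule.span_le]
        rintro _ ⟨x, hx, y, hy, rfl⟩
        simp only [Submodule.mem_bot] at hx
        simp [hx]
      simpa using this h6
    have hm3' : m3 = 0 := by simpa using hm3
    rw [sup_bot_eq, Submodule.mem_span_singleton] at hm2
    rw [sup_bot_eq, ← Submodule.span_union, Set.singleton_union, Submodule.mem_span_pair] at hm1
    obtain ⟨p, q, rfl⟩ := hm1
    obtain ⟨r, rfl⟩ := hm2
    obtain ⟨X, hX, Y, hY, hXY, -⟩ := exists_decomp_three b c d p q r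
    refine ⟨X, hX, Y, hY, ?_⟩
    rw [hXY, h6', hm3']
    simp only [map_add, map_smul, mul_add, mul_smul_comm, map_zero, mul_zero, add_zero]
  obtain ⟨X, hX, Y, hY, rfl⟩ := h3'
  have hdep : ¬ LinearIndependent ℂ ![m, X, Y] := by
    intro hl
    have ha' : a ∉ Submodule.span ℂ (Set.range ![m, X, Y]) := by
      intro hmem
      have hle : Submodule.span ℂ (Set.range ![m, X, Y]) ≤
          Submodule.span ℂ (Set.range ![b, c, d]) := by
        rw [Submodule.span_le]
        have e : Set.range ![b, c, d] = {b, c, d} := by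
          rw [Matrix.range_cons, Matrix.range_cons, Matrix.range_cons, Matrix.range_empty,
            Set.union_empty, Set.singleton_union, Set.singleton_union]
        rw [e]
        rintro _ ⟨i, rfl⟩
        fin_cases i <;> assumption
      exact (linearIndependent_finCons.mp hLI).2 (hle hmem)
    have h4 : LinearIndependent ℂ ![a, m, X, Y] := linearIndependent_finCons.mpr ⟨hl, ha'⟩
    apply mul_ne_zero_of_isCompl hvw hU haU (hSU hm) (hSU hX) (hSU hY) h4
    have h5 : ι ℂ v * (ι ℂ w * ((ι ℂ a * ι ℂ m + ι ℂ X * ι ℂ Y) *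
        (ι ℂ a * ι ℂ m + ι ℂ X * ι ℂ Y))) = 0 := by
      rw [← h]
      simp only [mul_add, add_mul, mul_assoc, ι_sq_assoc, ι_swap_assoc w v, ι_swap_assoc a v,
        ι_swap_assoc m v, ι_swap_assoc X v, ι_swap_assoc Y v, ι_swap_assoc a w, ι_swap_assoc m w,
        ι_swap_assoc X w, ι_swap_assoc Y w, neg_zero, mul_neg, add_zero, zero_add]
    have : (2 : ℂ) • (ι ℂ v * (ι ℂ w * (ι ℂ a * (ι ℂ m * (ι ℂ X * ι ℂ Y))))) = 0 := by
      rw [← h5]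
      simp only [mul_add, add_mul, mul_assoc, ι_sq_zero, ι_swap_assoc m a,
        ι_swap_assoc X a, ι_swap_assoc Y a, ι_swap Y m, ι_swap_assoc X m,
        ι_swap_assoc Y X, mul_zero, neg_zero, mul_neg, add_zero]
      module
    simpa using this
  by_cases hXY : ι ℂ X * ι ℂ Y = 0
  · exact ⟨a, haU, m, hSU hm, f, hf, g, by rw [hXY]; abel⟩
  rw [ι_mul2_eq_zero, not_not] at hXY
  have hmS : m ∈ Submodule.span ℂ (Set.range ![X, Y]) := by
    by_contra hm'
    exact hdep (linearIndependent_finCons.mpr ⟨hXY, hm'⟩)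
  rw [Matrix.range_cons, Matrix.range_cons, Matrix.range_empty, Set.union_empty,
    Set.singleton_union, Submodule.mem_span_pair] at hmS
  obtain ⟨α, β, rfl⟩ := hmS
  refine ⟨X + β • a, U.add_mem (hSU hX) (U.smul_mem _ haU), Y - α • a,
    U.sub_mem (hSU hY) (U.smul_mem _ haU), f, hf, g, ?_⟩
  rw [ι_mul_eq_add]
  abel

/-! ### Decomposable combinations of three bivectors -/

/-- An eigenvector of the matrix `q` gives a combination of the `f i` that lies in the span of `a` and
of the same combination of the `b i`. -/
theorem exists_eigen {V : Type*} [AddCommGroup V] [Module ℂ V] {n : ℕ} [NeZero n] (a : V)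
    (b f : Fin n → V) (p : Fin n → ℂ) (q : Fin n → Fin n → ℂ)
    (h : ∀ i, f i = p i • a + ∑ j, q i j • b j) :
    ∃ c : Fin n → ℂ, c ≠ 0 ∧ ∃ r s : ℂ, ∑ i, c i • f i = r • a + s • ∑ i, c i • b i := by
  obtain ⟨s, hs⟩ := Module.End.exists_eigenvalue (Matrix.toLin' (Matrix.of q).transpose)
  obtain ⟨c, hc⟩ := hs.exists_hasEigenvector
  refine ⟨c, hc.2, ∑ i, c i * p i, s, ?_⟩
  have h1 := hc.apply_eq_smul
  have h2 : ∀ j, ∑ i, c i * q i j = s * c j := by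
    intro j
    have := congrFun h1 j
    simp only [Matrix.toLin'_apply, Matrix.mulVec, dotProduct, Matrix.transpose_apply,
      Matrix.of_apply, Pi.smul_apply, smul_eq_mul] at this
    rw [← this]
    exact Finset.sum_congr rfl fun i _ => mul_comm _ _
  simp only [h, smul_add, Finset.sum_add_distrib, Finset.smul_sum, smul_smul, Finset.sum_smul]
  congr 1
  rw [Finset.sum_comm]
  refine Finset.sum_congr rfl fun j _ => ?_
  rw [← Finset.sum_smul, h2]

/-- A line and a conic in the projective plane meet. -/
theorem exists_quadratic_zero (θ : Fin 3 → ℂ) (B : Fin 3 → Fin 3 → ℂ) :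
    ∃ c : Fin 3 → ℂ, c ≠ 0 ∧ ∑ i, c i * θ i = 0 ∧ ∑ i, ∑ j, c i * c j * B i j = 0 := by
  obtain ⟨s, t, hst, hs, ht⟩ : ∃ s t : Fin 3 → ℂ, LinearIndependent ℂ ![s, t] ∧
      ∑ i, s i * θ i = 0 ∧ ∑ i, t i * θ i = 0 := by
    let L : (Fin 3 → ℂ) →ₗ[ℂ] ℂ := ∑ i, (LinearMap.proj i).smulRight (θ i)
    have hL : ∀ x, L x = ∑ i, x i * θ i := fun x => by simp [L]
    have h1 := L.finrank_range_add_finrank_ker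
    have h2 : finrank ℂ (LinearMap.range L) ≤ 1 := by
      simpa using Submodule.finrank_le (LinearMap.range L)
    have h3 : 2 ≤ finrank ℂ (LinearMap.ker L) := by
      simp only [finrank_fin_fun] at h1; omega
    obtain ⟨g, hg⟩ := exists_linearIndependent_of_le_finrank h3
    refine ⟨g 0, g 1, ?_, ?_, ?_⟩
    · have := hg.map' (LinearMap.ker L).subtype (by simp)
      have e : (LinearMap.ker L).subtype ∘ g = ![(g 0 : Fin 3 → ℂ), g 1] := by
        ext i; fin_cases i <;> rfl
      rwa [e] at this
    · rw [← hL]; exact (g 0).2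
    · rw [← hL]; exact (g 1).2
  rw [LinearIndependent.pair_iff] at hst
  by_cases hQ : ∑ i, ∑ j, t i * t j * B i j = 0
  · exact ⟨t, fun h => by simpa using (hst 0 1 (by simp [h])).2, ht, hQ⟩
  obtain ⟨δ, hδ⟩ := IsAlgClosed.exists_pow_nat_eq (discrim (∑ i, ∑ j, t i * t j * B i j)
    (∑ i, ∑ j, (s i * t j + t i * s j) * B i j) (∑ i, ∑ j, s i * s j * B i j)) (n := 2) (by simp)
  obtain ⟨z, hz⟩ := exists_quadratic_eq_zero hQ ⟨δ, by rw [← hδ, sq]⟩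
  refine ⟨s + z • t, fun h => by simpa using (hst 1 z (by simpa using h)).1, ?_, ?_⟩
  · simp only [Fin.sum_univ_three, Pi.add_apply, Pi.smul_apply, smul_eq_mul] at hs ht ⊢
    linear_combination hs + z * ht
  · simp only [Fin.sum_univ_three, Pi.add_apply, Pi.smul_apply, smul_eq_mul] at hz ⊢
    linear_combination hz

theorem exists_coeffs {V : Type*} [AddCommGroup V] [Module ℂ V] {U : Submodule ℂ V}
    (hU4 : finrank ℂ U = 4) {a b c d : V} (ha : a ∈ U) (hb : b ∈ U) (hc : c ∈ U) (hd : d ∈ U)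
    (h : LinearIndependent ℂ ![d, c, a, b]) {f : V} (hf : f ∈ U) :
    ∃ p q r s : ℂ, f = p • a + q • b + r • c + s • d := by
  have : FiniteDimensional ℂ U := FiniteDimensional.of_finrank_pos (by omega)
  have hsub : Submodule.span ℂ (Set.range ![d, c, a, b]) ≤ U := by
    rw [Submodule.span_le]
    rintro _ ⟨i, rfl⟩
    fin_cases i <;> assumption
  have he := Submodule.eq_of_le_of_finrank_eq hsub (by rw [finrank_span_eq_card h, hU4]; simp)
  rw [← he, Submodule.mem_span_range_iff_exists_fun] at hf
  obtain ⟨g, rfl⟩ := hf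
  refine ⟨g 2, g 3, g 1, g 0, ?_⟩
  simp only [Fin.sum_univ_four, Matrix.cons_val]
  abel

theorem linearIndependent_of_products {V : Type*} [AddCommGroup V] [Module ℂ V] {a b c : V}
    (h : LinearIndependent ℂ ![ι ℂ a * ι ℂ b, ι ℂ a * ι ℂ c]) :
    LinearIndependent ℂ ![c, a, b] := by
  refine linearIndependent_finCons.mpr ⟨?_, ?_⟩
  · by_contra h1
    exact h.ne_zero 0 (ι_mul2_eq_zero.mpr h1)
  · intro hc
    rw [Matrix.range_cons, Matrix.range_cons, Matrix.range_empty, Set.union_empty,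
      Set.singleton_union, Submodule.mem_span_pair] at hc
    obtain ⟨s, t, rfl⟩ := hc
    have := (LinearIndependent.pair_iff.mp h t (-1) (by
      simp only [map_add, map_smul, mul_add, mul_smul_comm, ι_sq_zero]
      module)).2
    simp at this

/-- Three bivectors `κ i = x i ∧ y i + w ∧ f i`, the `x i ∧ y i` being pairwise orthogonal
decomposable bivectors of a four-dimensional space, have a decomposable nontrivial combination. -/
theorem exists_decomposable_combination {V : Type*} [AddCommGroup V] [Module ℂ V]
    {U : Submodule ℂ V} (hU4 : finrank ℂ U = 4) (w : V) (x y f : Fin 3 → V)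
    (hx : ∀ i, x i ∈ U) (hy : ∀ i, y i ∈ U) (hf : ∀ i, f i ∈ U)
    (h : ∀ i j, ι ℂ (x i) * ι ℂ (y i) * (ι ℂ (x j) * ι ℂ (y j)) = 0) :
    ∃ c : Fin 3 → ℂ, c ≠ 0 ∧ ∃ X Y : V,
      ∑ i, c i • (ι ℂ (x i) * ι ℂ (y i) + ι ℂ w * ι ℂ (f i)) = ι ℂ X * ι ℂ Y := by
  have hsum : ∀ c : Fin 3 → ℂ, ∑ i, c i • (ι ℂ (x i) * ι ℂ (y i) + ι ℂ w * ι ℂ (f i)) =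
      ∑ i, c i • (ι ℂ (x i) * ι ℂ (y i)) + ι ℂ w * ι ℂ (∑ i, c i • f i) := by
    intro c
    simp only [smul_add, Finset.sum_add_distrib, map_sum, map_smul, Finset.mul_sum,
      mul_smul_comm]
  by_cases hLI : LinearIndependent ℂ fun i => ι ℂ (x i) * ι ℂ (y i)
  swap
  · obtain ⟨c, hc, i, hi⟩ := Fintype.not_linearIndependent_iff.mp hLI
    refine ⟨c, fun h => hi (by simp [h]), w, ∑ i, c i • f i, ?_⟩
    rw [hsum, hc, zero_add]
  have hne := hLI.ne_zero
  have key : ∀ c : Fin 3 → ℂ, c 0 • (ι ℂ (x 0) * ι ℂ (y 0)) + c 1 • (ι ℂ (x 1) * ι ℂ (y 1)) +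
      c 2 • (ι ℂ (x 2) * ι ℂ (y 2)) = 0 → c = 0 := by
    intro c hc
    ext i
    exact Fintype.linearIndependent_iff.mp hLI c (by rw [Fin.sum_univ_three]; exact hc) i
  obtain ⟨p, q, r, s, h1, h2⟩ := exists_common_factor (hne 0) (hne 1) (h 0 1)
  obtain ⟨b1, b2, hab⟩ := exists_mul_eq h2
  rw [h1] at h2
  obtain ⟨c1, c2, hac⟩ := exists_mul_eq h2
  rw [← h1] at hac h2
  have haU : p • x 0 + q • y 0 ∈ U := U.add_mem (U.smul_mem _ (hx 0)) (U.smul_mem _ (hy 0))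
  have hbU : b1 • x 0 + b2 • y 0 ∈ U := U.add_mem (U.smul_mem _ (hx 0)) (U.smul_mem _ (hy 0))
  have hcU : c1 • x 1 + c2 • y 1 ∈ U := U.add_mem (U.smul_mem _ (hx 1)) (U.smul_mem _ (hy 1))
  generalize p • x 0 + q • y 0 = a at *
  generalize b1 • x 0 + b2 • y 0 = b at *
  generalize c1 • x 1 + c2 • y 1 = c at *
  have hcab : LinearIndependent ℂ ![c, a, b] := by
    apply linearIndependent_of_products
    rw [LinearIndependent.pair_iff]
    intro s t hst
    have := key ![s, t, 0] (by simpa [← hab, ← hac] using hst)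
    exact ⟨by simpa using congrFun this 0, by simpa using congrFun this 1⟩
  have hcab' : ∀ p q r : ℂ, p • c + q • a + r • b = 0 → p = 0 ∧ q = 0 ∧ r = 0 := by
    intro p q r hh
    have := Fintype.linearIndependent_iff.mp hcab ![p, q, r] (by
      simpa [Fin.sum_univ_three] using hh)
    exact ⟨this 0, this 1, this 2⟩
  -- the three planes share the vector `a`: an eigenvector supplies the combination
  have case1 : ∀ d ∈ U, ι ℂ a * ι ℂ d = ι ℂ (x 2) * ι ℂ (y 2) → ∃ c : Fin 3 → ℂ, c ≠ 0 ∧ ∃ X Y : V,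
      ∑ i, c i • (ι ℂ (x i) * ι ℂ (y i) + ι ℂ w * ι ℂ (f i)) = ι ℂ X * ι ℂ Y := by
    intro d hd had
    have hd' : LinearIndependent ℂ ![d, c, a, b] := by
      refine linearIndependent_finCons.mpr ⟨hcab, fun hmem => ?_⟩
      rw [Submodule.mem_span_range_iff_exists_fun] at hmem
      obtain ⟨g, rfl⟩ := hmem
      have := key ![g 2, g 0, -1] (by
        rw [← hab, ← hac, ← had]
        simp only [Fin.sum_univ_three, Matrix.cons_val, map_add, map_smul, mul_add,
          mul_smul_comm, ι_sq_zero]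
        module)
      simpa using congrFun this 2
    choose P Q R S hPQRS using fun i => exists_coeffs hU4 haU hbU hcU hd hd' (hf i)
    obtain ⟨g, hg, r, s, hrs⟩ := exists_eigen a ![b, c, d] f P (fun i => ![Q i, R i, S i])
      (fun i => by
        simp only [Fin.sum_univ_three, Matrix.cons_val]
        rw [hPQRS]; module)
    refine ⟨g, hg, a + s • w, (∑ i, g i • ![b, c, d] i) - r • w, ?_⟩
    rw [ι_mul_eq_add, hsum, hrs]
    congr 1
    simp only [Fin.sum_univ_three, Matrix.cons_val, map_add, map_smul, mul_add, mul_smul_comm, hab,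
      hac, had]
  obtain ⟨p1, q1, r1, s1, e1, e1'⟩ := exists_common_factor (hab ▸ hne 0) (hne 2) (hab ▸ h 0 2)
  obtain ⟨p2, q2, r2, s2, e2, e2'⟩ := exists_common_factor (hac ▸ hne 1) (hne 2) (hac ▸ h 1 2)
  have case1' : ∀ p r s : ℂ, p • a = r • x 2 + s • y 2 → p • a ≠ 0 →
      ∃ c : Fin 3 → ℂ, c ≠ 0 ∧ ∃ X Y : V,
      ∑ i, c i • (ι ℂ (x i) * ι ℂ (y i) + ι ℂ w * ι ℂ (f i)) = ι ℂ X * ι ℂ Y := by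
    intro p r s h1 h2
    rw [h1] at h2
    obtain ⟨d1, d2, hd⟩ := exists_mul_eq h2
    refine case1 (p • (d1 • x 2 + d2 • y 2))
      (U.smul_mem _ (U.add_mem (U.smul_mem _ (hx 2)) (U.smul_mem _ (hy 2)))) ?_
    rw [← hd, ← h1, map_smul, map_smul, mul_smul_comm, smul_mul_assoc]
  by_cases hq1 : q1 = 0
  · subst hq1
    rw [zero_smul, add_zero] at e1 e1'
    exact case1' _ _ _ e1 e1'
  by_cases hq2 : q2 = 0
  · subst hq2
    rw [zero_smul, add_zero] at e2 e2'
    exact case1' _ _ _ e2 e2'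
  clear case1' case1
  -- now the third plane lies in the span of `a`, `b`, `c`, and meets the first two planes in the
  -- vectors `b + (p1 / q1) • a` and `c + (p2 / q2) • a`
  obtain ⟨m, hm, hbc⟩ : ∃ m : ℂ, m ≠ 0 ∧ ι ℂ (x 2) * ι ℂ (y 2) =
      m • (ι ℂ (b + (p1 / q1) • a) * ι ℂ (c + (p2 / q2) • a)) := by
    have f1 : ι ℂ (p1 • a + q1 • b) * ι ℂ (p2 • a + q2 • c) =
        (r1 * s2 - s1 * r2) • (ι ℂ (x 2) * ι ℂ (y 2)) := by
      rw [e1, e2]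
      simp only [map_add, map_smul, add_mul, mul_add, smul_mul_assoc,
        mul_smul_comm, ι_sq_zero, ι_swap (y 2) (x 2)]
      module
    have f2 : r1 * s2 - s1 * r2 ≠ 0 := by
      intro h0
      rw [h0, zero_smul, ι_mul2_eq_zero, LinearIndependent.pair_iff] at f1
      apply f1
      intro s t hst
      have := hcab' (t * q2) (s * p1 + t * p2) (s * q1) (by rw [← hst]; module)
      simp only [mul_eq_zero, hq1, hq2, or_false] at this
      exact ⟨this.2.2, this.1⟩
    refine ⟨q1 * q2 / (r1 * s2 - s1 * r2), by simp [hq1, hq2, f2], ?_⟩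
    have f3 : p1 • a + q1 • b = q1 • (b + (p1 / q1) • a) := by
      match_scalars <;> field_simp
    have f4 : p2 • a + q2 • c = q2 • (c + (p2 / q2) • a) := by
      match_scalars <;> field_simp
    rw [f3, f4, map_smul, map_smul, smul_mul_assoc, mul_smul_comm, smul_smul] at f1
    rw [div_eq_inv_mul, mul_smul, f1, smul_smul, inv_mul_cancel₀ f2, one_smul]
  obtain ⟨d, hdU, hd⟩ : ∃ d ∈ U, d ∉ Submodule.span ℂ (Set.range ![c, a, b]) := by
    by_contra! hcon
    have : FiniteDimensional ℂ (Submodule.span ℂ (Set.range ![c, a, b])) :=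
      FiniteDimensional.span_of_finite ℂ (Set.finite_range _)
    have h5 := Submodule.finrank_mono (show U ≤ Submodule.span ℂ (Set.range ![c, a, b]) from hcon)
    rw [finrank_span_eq_card hcab, hU4] at h5
    simp at h5
  choose P Q R S hPQRS using fun i =>
    exists_coeffs hU4 haU hbU hcU hdU (linearIndependent_finCons.mpr ⟨hcab, hd⟩) (hf i)
  set b' := b + (p1 / q1) • a with hb'
  set c' := c + (p2 / q2) • a with hc'
  have hab' : ι ℂ a * ι ℂ b' = ι ℂ (x 0) * ι ℂ (y 0) := by
    simp [hb', mul_add, hab]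
  have hac' : ι ℂ a * ι ℂ c' = ι ℂ (x 1) * ι ℂ (y 1) := by
    simp [hc', mul_add, hac]
  -- every combination of the three planes is decomposable; the linear condition puts the combined
  -- `f` into the span of `a`, `b`, `c`, the quadratic one then puts it into the combined plane
  obtain ⟨g, hg, hg1, hg2⟩ := exists_quadratic_zero S
    (fun i => ![R i, - Q i, (P i - Q i * (p1 / q1) - R i * (p2 / q2)) * m])
  obtain ⟨X, -, Y, -, hXY, hXYf⟩ := exists_decomp_three a b' c' (g 0) (g 1) (g 2 * m)
  obtain ⟨α, β, hαβ⟩ := hXYf (by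
    by_contra! hcon
    apply hg
    ext i
    fin_cases i
    · exact hcon.1
    · exact hcon.2.1
    · simpa [hm] using hcon.2.2) (∑ i, g i * (P i - Q i * (p1 / q1) - R i * (p2 / q2)))
      (∑ i, g i * Q i) (∑ i, g i * R i) (by
        simp only [Fin.sum_univ_three, Matrix.cons_val] at hg2 ⊢
        linear_combination hg2)
  refine ⟨g, hg, X + β • w, Y - α • w, ?_⟩
  rw [ι_mul_eq_add, hsum, ← hαβ, hXY]
  congr 1
  · rw [Fin.sum_univ_three, ← hab', ← hac', hbc, smul_smul]
  · congr 2
    simp only [Fin.sum_univ_three] at hg1 ⊢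
    simp only [hPQRS, hb', hc']
    have e : (g 0 * S 0 + g 1 * S 1 + g 2 * S 2) • d = 0 := by rw [hg1, zero_smul]
    rw [← sub_eq_zero, ← e]
    module

/-! ### Tangent data and members of `Θ_A` -/

theorem ι_mul_comm {V : Type*} [AddCommGroup V] [Module ℂ V] (v : V)
    {κ : ExteriorAlgebra ℂ V} (hκ : κ ∈ ⋀[ℂ]^2 V) : κ * ι ℂ v = ι ℂ v * κ := by
  have h := exteriorPower_two_le hκ
  clear hκ
  induction h using Submodule.span_induction with
  | mem z hz =>
    obtain ⟨x, -, y, -, rfl⟩ := hz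
    rw [mul_assoc, ι_swap y v, mul_neg, ι_swap_assoc x v, neg_neg]
  | zero => simp
  | add a b _ _ iha ihb => rw [add_mul, mul_add, iha, ihb]
  | smul r a _ ih => rw [smul_mul_assoc, mul_smul_comm, ih]

/-- If infinitely many lines in `P` belong to `Y_A[3]`, then for infinitely many of them, `ℂv` say, there
is a tangent direction `w ∈ P` at which three independent elements `v ∧ κ i` of `A` satisfy
`v ∧ w ∧ κ i ∧ κ j = 0`. -/
theorem infinite_tangent {V : Type*} [AddCommGroup V] [Module ℂ V] [FiniteDimensional ℂ V]
    (vol : ExteriorAlgebra ℂ V →ₗ[ℂ] ℂ)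
    (hvol : Function.Injective fun x : ⋀[ℂ]^6 V => vol x)
    (A : Submodule ℂ (ExteriorAlgebra ℂ V)) [FiniteDimensional ℂ A]
    (hLag : ∀ α ∈ A, ∀ β ∈ A, vol (α * β) = 0) (P : Submodule ℂ V)
    (h : {L : Submodule ℂ V | ∃ v ∈ P, v ≠ 0 ∧ L = Submodule.span ℂ {v} ∧
      3 ≤ finrank ℂ ↥(A ⊓ vWedge2 v)}.Infinite) :
    {L : Submodule ℂ V | ∃ v ∈ P, L = Submodule.span ℂ {v} ∧ ∃ w ∈ P,
      LinearIndependent ℂ ![v, w] ∧ ∃ κ : Fin 3 → ExteriorAlgebra ℂ V,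
        (∀ i, κ i ∈ ⋀[ℂ]^2 V) ∧ (∀ i, ι ℂ v * κ i ∈ A) ∧
        LinearIndependent ℂ (fun i => ι ℂ v * κ i) ∧
        ∀ i j, ι ℂ v * (ι ℂ w * (κ i * κ j)) = 0}.Infinite := by
  let bP := (finBasis ℂ P).equivFun.symm
  let bE := (finBasis ℂ (⋀[ℂ]^2 V)).equivFun.symm
  let φ := P.subtype ∘ₗ bP.toLinearMap
  let ψ := (⋀[ℂ]^2 V).subtype ∘ₗ bE.toLinearMap
  have hφP : ∀ x, φ x ∈ P := fun x => (bP x).2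
  have hψE : ∀ x, ψ x ∈ ⋀[ℂ]^2 V := fun x => (bE x).2
  have hφ : Function.Injective φ := P.subtype_injective.comp bP.injective
  have hφs : ∀ v ∈ P, ∃ x, φ x = v := fun v hv => ⟨bP.symm ⟨v, hv⟩, by simp [φ]⟩
  have hψs : ∀ κ ∈ ⋀[ℂ]^2 V, ∃ x, ψ x = κ := fun κ hκ => ⟨bE.symm ⟨κ, hκ⟩, by simp [ψ]⟩
  have hspan : ∀ x, Submodule.map φ (Submodule.span ℂ {x}) = Submodule.span ℂ {φ x} := fun x => by
    rw [Submodule.map_span, Set.image_singleton]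
  let b := (LinearMap.mul ℂ (ExteriorAlgebra ℂ V)).compl₁₂ (ι ℂ ∘ₗ φ) ψ
  have hbdef : ∀ x y, b x y = ι ℂ (φ x) * ψ y := fun x y => rfl
  let ω := (LinearMap.mul ℂ (ExteriorAlgebra ℂ V)).compr₂ vol
  have hωdef : ∀ x y, ω x y = vol (x * y) := fun x y => rfl
  have key := infinite_tangent_coord b ω A hLag (fun x y y' => by
    rw [hωdef, hbdef, hbdef, mul_assoc, ← mul_assoc (ψ y), ι_mul_comm _ (hψE y), mul_assoc,
      ι_sq_assoc, map_zero]) (by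
    refine Set.Infinite.of_image (Submodule.map φ) (h.mono ?_)
    rintro _ ⟨v, hv, hv0, rfl, h3⟩
    obtain ⟨x, rfl⟩ := hφs v hv
    refine ⟨Submodule.span ℂ {x}, ⟨x, ?_, rfl, ?_⟩, hspan x⟩
    · rintro rfl
      exact hv0 (map_zero _)
    · obtain ⟨g, hg⟩ := exists_linearIndependent_of_le_finrank h3
      have hg' := hg.map' (A ⊓ vWedge2 (φ x)).subtype (by simp)
      have : ∀ i, ∃ y, b x y = g i := by
        intro i
        obtain ⟨κ, hκ, e⟩ := (g i).2.2
        obtain ⟨y, rfl⟩ := hψs κ hκ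
        exact ⟨y, e⟩
      choose y hy using this
      refine ⟨y, fun i => hy i ▸ (g i).2.1, ?_⟩
      simp only [hy]
      exact hg')
  refine (key.image (Submodule.map_injective_of_injective hφ).injOn).mono ?_
  rintro _ ⟨_, ⟨x, rfl, z, hxz, y, hyA, hyLI, hy0⟩, rfl⟩
  refine ⟨φ x, hφP x, hspan x, φ z, hφP z, ?_, fun i => ψ (y i), fun i => hψE _, hyA, hyLI, ?_⟩
  · have := hxz.map' φ (LinearMap.ker_eq_bot.mpr hφ)
    have e : φ ∘ ![x, z] = ![φ x, φ z] := by
      ext i; fin_cases i <;> rfl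
    rwa [e] at this
  · intro i j
    have h1 := hy0 i j
    rw [hωdef, hbdef, hbdef, mul_assoc, ← mul_assoc (ψ (y i)), ι_mul_comm _ (hψE _), mul_assoc,
      ι_swap_assoc, map_neg, neg_eq_zero] at h1
    have hmem : ι ℂ (φ x) * (ι ℂ (φ z) * (ψ (y i) * ψ (y j))) ∈ ⋀[ℂ]^6 V := by
      have e : ∀ v : V, ι ℂ v ∈ ⋀[ℂ]^1 V := fun v => by
        rw [exteriorPower, pow_one]; exact ⟨v, rfl⟩
      exact SetLike.mul_mem_graded (e _) (SetLike.mul_mem_graded (e _)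
        (SetLike.mul_mem_graded (hψE _) (hψE _)))
    have := @hvol ⟨_, hmem⟩ 0 (by simpa using h1)
    simpa using congrArg Subtype.val this

theorem wedge3_span_le {V : Type*} [AddCommGroup V] [Module ℂ V]
    {A : Submodule ℂ (ExteriorAlgebra ℂ V)} {v x y : V} (hA : ι ℂ v * (ι ℂ x * ι ℂ y) ∈ A) :
    wedge3 (Submodule.span ℂ {v, x, y}) ≤ A := by
  rw [wedge3, Submodule.span_le]
  rintro _ ⟨a, ha, b, hb, c, hc, rfl⟩
  obtain ⟨a1, a2, a3, rfl⟩ := Submodule.mem_span_triple.mp ha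
  obtain ⟨b1, b2, b3, rfl⟩ := Submodule.mem_span_triple.mp hb
  obtain ⟨c1, c2, c3, rfl⟩ := Submodule.mem_span_triple.mp hc
  have : ι ℂ (a1 • v + a2 • x + a3 • y) * ι ℂ (b1 • v + b2 • x + b3 • y) *
      ι ℂ (c1 • v + c2 • x + c3 • y) =
      (a1 * (b2 * c3 - b3 * c2) - a2 * (b1 * c3 - b3 * c1) + a3 * (b1 * c2 - b2 * c1)) •
        (ι ℂ v * (ι ℂ x * ι ℂ y)) := by
    simp only [map_add, map_smul, add_mul, mul_add, smul_mul_assoc, mul_smul_comm, mul_assoc,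
      ι_sq_zero, ι_sq_assoc, ι_swap x v, ι_swap y v, ι_swap y x, ι_swap_assoc x v,
      mul_neg, mul_zero, smul_neg, smul_zero, neg_zero,
      neg_mul, zero_mul]
    module
  rw [SetLike.mem_coe, this]
  exact A.smul_mem _ hA

theorem finrank_span_triple {V : Type*} [AddCommGroup V] [Module ℂ V] {v x y : V}
    (h : LinearIndependent ℂ ![v, x, y]) : finrank ℂ (Submodule.span ℂ {v, x, y}) = 3 := by
  have := finrank_span_eq_card h
  rw [Matrix.range_cons, Matrix.range_cons, Matrix.range_cons, Matrix.range_empty,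
    Set.union_empty, Set.singleton_union, Set.singleton_union] at this
  simpa using this

/-- The set `Θ_A` of three-dimensional subspaces `W` with `⋀³W ⊆ A`. -/
def Theta {V : Type*} [AddCommGroup V] [Module ℂ V] (A : Submodule ℂ (ExteriorAlgebra ℂ V)) :
    Set (Submodule ℂ V) :=
  {W | finrank ℂ W = 3 ∧ wedge3 W ≤ A}

theorem exists_theta_of_mem {V : Type*} [AddCommGroup V] [Module ℂ V]
    {A : Submodule ℂ (ExteriorAlgebra ℂ V)} {v x y : V} (hA : ι ℂ v * (ι ℂ x * ι ℂ y) ∈ A)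
    (h0 : ι ℂ v * (ι ℂ x * ι ℂ y) ≠ 0) : Submodule.span ℂ {v, x, y} ∈ Theta A :=
  ⟨finrank_span_triple (not_not.mp (mt ι_mul3_eq_zero.mpr h0)), wedge3_span_le hA⟩

/-- Tangent data at `v`, as supplied by `infinite_tangent`, produce a member of `Θ_A` through `v`. -/
theorem exists_theta_of_tangent {V : Type*} [AddCommGroup V] [Module ℂ V] [FiniteDimensional ℂ V]
    (hV : finrank ℂ V = 6) {A : Submodule ℂ (ExteriorAlgebra ℂ V)} {v w : V}
    (hvw : LinearIndependent ℂ ![v, w]) {κ : Fin 3 → ExteriorAlgebra ℂ V}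
    (hκ : ∀ i, κ i ∈ ⋀[ℂ]^2 V) (hA : ∀ i, ι ℂ v * κ i ∈ A)
    (hLI : LinearIndependent ℂ (fun i => ι ℂ v * κ i))
    (h0 : ∀ i j, ι ℂ v * (ι ℂ w * (κ i * κ j)) = 0) :
    ∃ W ∈ Theta A, v ∈ W := by
  obtain ⟨U, hU⟩ := Submodule.exists_isCompl (Submodule.span ℂ {v, w})
  have hU4 : finrank ℂ U = 4 := by
    have h1 := Submodule.finrank_add_eq_of_isCompl hU
    have h2 := finrank_span_eq_card hvw
    rw [Matrix.range_cons, Matrix.range_cons, Matrix.range_empty, Set.union_empty,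
      Set.singleton_union, Fintype.card_fin] at h2
    omega
  choose x hx y hy f hf g hg using fun i => exists_normal_form hvw hU hU4 (hκ i) (h0 i i)
  obtain ⟨c, hc, X, Y, hXY⟩ := exists_decomposable_combination hU4 w x y f hx hy hf (by
    intro i j
    rw [mul_assoc, ι_mul4_eq_zero]
    intro hl
    apply mul_ne_zero_of_isCompl hvw hU (hx i) (hy i) (hx j) (hy j) hl
    rw [← normal_form_mul v w (x i) (y i) (f i) (g i) (x j) (y j) (f j) (g j), ← hg, ← hg, h0])
  have e : ∑ i, c i • (ι ℂ v * κ i) = ι ℂ v * (ι ℂ X * ι ℂ Y) := by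
    rw [← hXY, Finset.mul_sum]
    refine Finset.sum_congr rfl fun i _ => ?_
    rw [hg i, mul_smul_comm]
    simp only [mul_add, ι_sq_assoc, add_zero]
  refine ⟨_, exists_theta_of_mem (e ▸ A.sum_mem fun i _ => A.smul_mem _ (hA i)) ?_,
    Submodule.mem_span_of_mem (by simp)⟩
  rw [← e]
  intro h1
  exact hc (funext fun i => Fintype.linearIndependent_iff.mp hLI c h1 i)

/-- Two members of `Θ_A` that meet in a plane span a pencil of members of `Θ_A`, the spans of
`v, w, x + t • y`. -/
theorem theta_infinite_of_mem {V : Type*} [AddCommGroup V] [Module ℂ V]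
    {A : Submodule ℂ (ExteriorAlgebra ℂ V)} {v w x y : V}
    (hx : ι ℂ v * (ι ℂ w * ι ℂ x) ∈ A) (hy : ι ℂ v * (ι ℂ w * ι ℂ y) ∈ A)
    (h : LinearIndependent ℂ ![y, v, w, x]) : (Theta A).Infinite := by
  have h4 : ∀ p q r s : ℂ, p • v + q • w + r • x + s • y = 0 → p = 0 ∧ q = 0 ∧ r = 0 ∧ s = 0 := by
    intro p q r s hh
    have := Fintype.linearIndependent_iff.mp h ![s, p, q, r] (by
      simp only [Fin.sum_univ_four, Matrix.cons_val]
      rw [← hh]; abel)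
    exact ⟨this 1, this 2, this 3, this 0⟩
  refine Set.infinite_of_injective_forall_mem
    (f := fun t : ℂ => Submodule.span ℂ {v, w, x + t • y}) ?_ ?_
  · intro s t hst
    have h1 : x + s • y ∈ Submodule.span ℂ {v, w, x + t • y} := by
      rw [← show Submodule.span ℂ {v, w, x + s • y} = Submodule.span ℂ {v, w, x + t • y} from hst]
      exact Submodule.mem_span_of_mem (by simp)
    obtain ⟨p, q, r, e⟩ := Submodule.mem_span_triple.mp h1
    have h2 := h4 p q (r - 1) (r * t - s) (by rw [← sub_eq_zero] at e; rw [← e]; module)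
    have h3 : r = 1 := by linear_combination h2.2.2.1
    have h5 := h2.2.2.2
    rw [h3] at h5
    linear_combination -h5
  · intro t
    apply exists_theta_of_mem
    · rw [map_add, mul_add, mul_add, map_smul, mul_smul_comm, mul_smul_comm]
      exact A.add_mem hx (A.smul_mem _ hy)
    · rw [Ne, ι_mul3_eq_zero, not_not, Fintype.linearIndependent_iff]
      intro g hg
      simp only [Fin.sum_univ_three, Matrix.cons_val] at hg
      have := h4 (g 0) (g 1) (g 2) (g 2 * t) (by rw [← hg]; module)
      intro i
      fin_cases i
      exacts [this.1, this.2.1, this.2.2.1]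

/-! ### The trichotomy at a point of a member of `Θ_A` -/

theorem three_le_finrank {E : Type*} [AddCommGroup E] [Module ℂ E] {S : Submodule ℂ E}
    [FiniteDimensional ℂ S] {a b c : E} (ha : a ∈ S) (hb : b ∈ S) (hc : c ∈ S)
    (h : LinearIndependent ℂ ![a, b, c]) : 3 ≤ finrank ℂ S := by
  have hsub : Submodule.span ℂ (Set.range ![a, b, c]) ≤ S := by
    rw [Submodule.span_le]
    rintro _ ⟨i, rfl⟩
    fin_cases i <;> assumption
  have := Submodule.finrank_mono hsub
  rwa [finrank_span_eq_card h, Fintype.card_fin] at this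

theorem coeffs_eq_zero {E : Type*} [AddCommGroup E] [Module ℂ E] {a b c : E}
    (h : LinearIndependent ℂ ![a, b, c]) {p q r : ℂ} (h0 : p • a + q • b + r • c = 0) :
    p = 0 ∧ q = 0 ∧ r = 0 := by
  have := Fintype.linearIndependent_iff.mp h ![p, q, r] (by simpa [Fin.sum_univ_three] using h0)
  exact ⟨this 0, this 1, this 2⟩

theorem linearIndependent_triple {E : Type*} [AddCommGroup E] [Module ℂ E] {a b c : E}
    (h : ∀ p q r : ℂ, p • a + q • b + r • c = 0 → p = 0 ∧ q = 0 ∧ r = 0) :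
    LinearIndependent ℂ ![a, b, c] := by
  rw [Fintype.linearIndependent_iff]
  intro g hg
  have := h (g 0) (g 1) (g 2) (by simpa [Fin.sum_univ_three] using hg)
  intro i
  fin_cases i
  exacts [this.1, this.2.1, this.2.2]

/-- What tangent data at a point `v` of a member `W` of `Θ_A` lead to: the desired dimension bound for
`W`; or a second member of `Θ_A` through `v`; or an element of `A ∩ (⋀²W ∧ V)` whose annihilator in `W`
is the line `ℂv`. -/
def Outcome {V : Type*} [AddCommGroup V] [Module ℂ V] (A : Submodule ℂ (ExteriorAlgebra ℂ V))
    (W : Submodule ℂ V) (v : V) : Prop :=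
  3 ≤ finrank ℂ ↥(A ⊓ wedge2V W) ∨ (∃ W' ∈ Theta A, W' ≠ W ∧ v ∈ W') ∨
    ∃ τ ∈ A ⊓ wedge2V W, ι ℂ v * τ = 0 ∧ ∀ u ∈ W, ι ℂ u * τ = 0 → u ∈ Submodule.span ℂ {v}

/-- A decomposable element `v ∧ (a + s w) ∧ Y` of `A` with `a ∉ W` gives a second member of `Θ_A` through `v`. -/
theorem outcome_of_decomposable {V : Type*} [AddCommGroup V] [Module ℂ V]
    {A : Submodule ℂ (ExteriorAlgebra ℂ V)} {W : Submodule ℂ V} {v w a Y : V} {s : ℂ}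
    (hw : w ∈ W) (ha : a ∉ W) (hA : ι ℂ v * (ι ℂ (a + s • w) * ι ℂ Y) ∈ A)
    (h0 : ι ℂ v * (ι ℂ (a + s • w) * ι ℂ Y) ≠ 0) : Outcome A W v := by
  refine Or.inr (Or.inl ⟨_, exists_theta_of_mem hA h0, ?_, Submodule.mem_span_of_mem (by simp)⟩)
  rintro rfl
  apply ha
  have : a + s • w ∈ Submodule.span ℂ {v, a + s • w, Y} := Submodule.mem_span_of_mem (by simp)
  simpa using Submodule.sub_mem _ this (Submodule.smul_mem _ s hw)

theorem mul_mem_wedge2V {V : Type*} [AddCommGroup V] [Module ℂ V] {W : Submodule ℂ V} {x y : V}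
    (hx : x ∈ W) (hy : y ∈ W) (z : V) : ι ℂ x * (ι ℂ y * ι ℂ z) ∈ wedge2V W :=
  Submodule.subset_span ⟨x, hx, y, hy, z, (mul_assoc _ _ _).symm⟩

/-- The case in which the plane of the first bivector contains `w'`. If the coefficient `S₁` of `f₁`
outside the span of `a, w', c` is nonzero, it can be used to cancel that of `f₂`, giving a decomposable
element. Otherwise the first element, corrected by a multiple of `v ∧ w ∧ w'`, is either decomposable or
of the third type in `Outcome`. -/
theorem outcome_case_B {V : Type*} [AddCommGroup V] [Module ℂ V]
    {A : Submodule ℂ (ExteriorAlgebra ℂ V)} {U W : Submodule ℂ V}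
    {v w w' a c f₁ f₂ : V} (hvw : LinearIndependent ℂ ![v, w])
    (hU : IsCompl (Submodule.span ℂ {v, w}) U) (hU4 : finrank ℂ U = 4)
    (hW : W = Submodule.span ℂ {v, w, w'}) (hw' : w' ∈ U) (haW : a ∉ W)
    (ha : a ∈ U) (hc : c ∈ U) (hf₁ : f₁ ∈ U) (hf₂ : f₂ ∈ U)
    (hLI : LinearIndependent ℂ ![c, a, w'])
    (hη : ι ℂ v * (ι ℂ w * ι ℂ w') ∈ A)
    (h₁ : ι ℂ v * (ι ℂ a * ι ℂ w' + ι ℂ w * ι ℂ f₁) ∈ A)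
    (h₂ : ι ℂ v * (ι ℂ a * ι ℂ c + ι ℂ w * ι ℂ f₂) ∈ A)
    (hz : LinearIndependent ℂ ![ι ℂ v * (ι ℂ w * ι ℂ w'),
      ι ℂ v * (ι ℂ a * ι ℂ w' + ι ℂ w * ι ℂ f₁), ι ℂ v * (ι ℂ a * ι ℂ c + ι ℂ w * ι ℂ f₂)]) :
    Outcome A W v := by
  have hvW : v ∈ W := hW ▸ Submodule.mem_span_of_mem (by simp)
  have hwW : w ∈ W := hW ▸ Submodule.mem_span_of_mem (by simp)
  have hwW' : w' ∈ W := hW ▸ Submodule.mem_span_of_mem (by simp)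
  obtain ⟨d, hdU, hd⟩ : ∃ d ∈ U, d ∉ Submodule.span ℂ (Set.range ![c, a, w']) := by
    by_contra! hcon
    have : FiniteDimensional ℂ (Submodule.span ℂ (Set.range ![c, a, w'])) :=
      FiniteDimensional.span_of_finite ℂ (Set.finite_range _)
    have h5 := Submodule.finrank_mono
      (show U ≤ Submodule.span ℂ (Set.range ![c, a, w']) from hcon)
    rw [finrank_span_eq_card hLI, hU4] at h5
    simp at h5
  have hdLI : LinearIndependent ℂ ![d, c, a, w'] := linearIndependent_finCons.mpr ⟨hLI, hd⟩
  obtain ⟨P₁, Q₁, R₁, S₁, e₁⟩ := exists_coeffs hU4 ha hw' hc hdU hdLI hf₁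
  obtain ⟨P₂, Q₂, R₂, S₂, e₂⟩ := exists_coeffs hU4 ha hw' hc hdU hdLI hf₂
  by_cases hS : S₁ = 0
  · have hτ : ι ℂ v * (ι ℂ a * ι ℂ w' + ι ℂ w * ι ℂ (P₁ • a + R₁ • c)) =
        ι ℂ v * (ι ℂ a * ι ℂ w' + ι ℂ w * ι ℂ f₁) - Q₁ • (ι ℂ v * (ι ℂ w * ι ℂ w')) := by
      rw [e₁, hS]
      simp only [map_add, map_smul, mul_add, mul_smul_comm]
      module
    have hτA : ι ℂ v * (ι ℂ a * ι ℂ w' + ι ℂ w * ι ℂ (P₁ • a + R₁ • c)) ∈ A := by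
      rw [hτ]
      exact A.sub_mem h₁ (A.smul_mem _ hη)
    by_cases hR : R₁ = 0
    · have e : ι ℂ a * ι ℂ w' + ι ℂ w * ι ℂ (P₁ • a + R₁ • c) =
          ι ℂ (a + (0 : ℂ) • w) * ι ℂ (w' - P₁ • w) := by
        rw [ι_mul_eq_add, hR]; simp
      rw [e] at hτA hτ
      refine outcome_of_decomposable hwW haW hτA ?_
      rw [hτ]
      intro h0
      have := coeffs_eq_zero hz (p := -Q₁) (q := 1) (r := 0) (by rw [← h0]; module)
      exact one_ne_zero this.2.1
    · refine Or.inr (Or.inr ⟨_, ⟨hτA, ?_⟩, ι_sq_assoc _ _, ?_⟩)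
      · rw [ι_swap a w', mul_add, mul_neg]
        exact Submodule.add_mem _ (Submodule.neg_mem _ (mul_mem_wedge2V hvW hwW' _))
          (mul_mem_wedge2V hvW hwW _)
      · intro u hu hu0
        rw [hW] at hu
        obtain ⟨p, q, r, rfl⟩ := Submodule.mem_span_triple.mp hu
        have hne := mul_ne_zero_of_isCompl hvw hU hdU hc ha hw' hdLI
        have hr : r = 0 := by
          have e : (r * R₁) • (ι ℂ v * (ι ℂ w * (ι ℂ d * (ι ℂ c * (ι ℂ a * ι ℂ w'))))) = 0 := by
            have h := congrArg (fun z => z * (ι ℂ d * ι ℂ a)) hu0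
            simp only [zero_mul] at h
            rw [← h]
            simp only [map_add, map_smul, add_mul, mul_add, smul_mul_assoc, mul_smul_comm,
              mul_assoc, ι_sq_zero, ι_sq_assoc, mul_neg, mul_zero, smul_neg, smul_zero, neg_zero,
              neg_mul, zero_mul, neg_neg,
              ι_swap_assoc w v, ι_swap_assoc w' v, ι_swap_assoc w' w,
              ι_swap_assoc a d, ι_swap_assoc c d, ι_swap_assoc w' d, ι_swap_assoc w' c,
              ι_swap w' a, ι_swap_assoc w' a]
            module
          simpa [hne, hR] using e
        have hq : q = 0 := by
          have e : q • (ι ℂ v * (ι ℂ w * (ι ℂ d * (ι ℂ c * (ι ℂ a * ι ℂ w'))))) = 0 := by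
            have h := congrArg (fun z => z * (ι ℂ d * ι ℂ c)) hu0
            simp only [zero_mul] at h
            rw [← neg_eq_zero, ← h, hr]
            simp only [map_add, map_smul, add_mul, mul_add, smul_mul_assoc, mul_smul_comm,
              mul_assoc, ι_sq_zero, ι_sq_assoc, mul_neg, mul_zero, smul_neg, smul_zero, neg_zero,
              neg_mul, zero_mul, neg_neg,
              ι_swap_assoc w v, ι_swap_assoc a d, ι_swap_assoc c d, ι_swap_assoc w' d,
              ι_swap w' c, ι_swap_assoc a c]
            module
          simpa [hne] using e
        rw [hq, hr, Submodule.mem_span_singleton]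
        exact ⟨p, by module⟩
  · obtain ⟨t, ht⟩ : ∃ t, S₂ + t * S₁ = 0 := ⟨-S₂ / S₁, by field_simp; ring⟩
    have e : ι ℂ v * (ι ℂ (a + (R₂ + t * R₁) • w) *
        ι ℂ ((c + t • w') - (P₂ + t * P₁) • w)) =
        ι ℂ v * (ι ℂ a * ι ℂ c + ι ℂ w * ι ℂ f₂) +
        t • (ι ℂ v * (ι ℂ a * ι ℂ w' + ι ℂ w * ι ℂ f₁)) -
        (Q₂ + t * Q₁ - (R₂ + t * R₁) * t) • (ι ℂ v * (ι ℂ w * ι ℂ w')) := by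
      have e' : (S₂ + t * S₁) • (ι ℂ v * (ι ℂ w * ι ℂ d)) = 0 := by rw [ht, zero_smul]
      rw [ι_mul_eq_add, e₁, e₂, ← sub_eq_zero, ← neg_eq_zero, ← e']
      simp only [map_add, map_smul, mul_add, mul_smul_comm]
      module
    refine outcome_of_decomposable hwW haW (Y := (c + t • w') - (P₂ + t * P₁) • w)
      (s := R₂ + t * R₁) ?_ ?_
    · rw [e]
      exact A.sub_mem (A.add_mem h₂ (A.smul_mem _ h₁)) (A.smul_mem _ hη)
    · rw [e]
      intro h0
      have := coeffs_eq_zero hz (p := -(Q₂ + t * Q₁ - (R₂ + t * R₁) * t)) (q := t) (r := 1)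
        (by rw [← h0]; module)
      exact one_ne_zero this.2.2

/-- Trichotomy for two elements `v ∧ (a ∧ b + w ∧ f₁)` and `v ∧ (a ∧ c + w ∧ f₂)` of `A`. If `a ∈ W` the
dimension bound holds. If `w'` lies in the span of `a, b, c`, some combination of the two planes contains
`w'` and `outcome_case_B` applies. Otherwise, modulo `v ∧ w ∧ w'`, both `f₁` and `f₂` lie in the span of
`a, b, c`, and an eigenvector yields a decomposable combination. -/
theorem outcome_of_common_factor {V : Type*} [AddCommGroup V] [Module ℂ V]
    {A : Submodule ℂ (ExteriorAlgebra ℂ V)} [FiniteDimensional ℂ A] {U W : Submodule ℂ V}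
    {v w w' a b c f₁ f₂ : V} (hvw : LinearIndependent ℂ ![v, w])
    (hU : IsCompl (Submodule.span ℂ {v, w}) U) (hU4 : finrank ℂ U = 4)
    (hW : W = Submodule.span ℂ {v, w, w'}) (hw' : w' ∈ U)
    (ha : a ∈ U) (hb : b ∈ U) (hc : c ∈ U) (hf₁ : f₁ ∈ U) (hf₂ : f₂ ∈ U)
    (hLI : LinearIndependent ℂ ![c, a, b])
    (hη : ι ℂ v * (ι ℂ w * ι ℂ w') ∈ A)
    (h₁ : ι ℂ v * (ι ℂ a * ι ℂ b + ι ℂ w * ι ℂ f₁) ∈ A)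
    (h₂ : ι ℂ v * (ι ℂ a * ι ℂ c + ι ℂ w * ι ℂ f₂) ∈ A)
    (hz : LinearIndependent ℂ ![ι ℂ v * (ι ℂ w * ι ℂ w'),
      ι ℂ v * (ι ℂ a * ι ℂ b + ι ℂ w * ι ℂ f₁), ι ℂ v * (ι ℂ a * ι ℂ c + ι ℂ w * ι ℂ f₂)]) :
    Outcome A W v := by
  have hvW : v ∈ W := hW ▸ Submodule.mem_span_of_mem (by simp)
  have hwW : w ∈ W := hW ▸ Submodule.mem_span_of_mem (by simp)
  have hwW' : w' ∈ W := hW ▸ Submodule.mem_span_of_mem (by simp)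
  by_cases haW : a ∈ W
  · left
    refine three_le_finrank ⟨hη, mul_mem_wedge2V hvW hwW _⟩ ⟨h₁, ?_⟩ ⟨h₂, ?_⟩ hz <;>
    · rw [mul_add]
      exact Submodule.add_mem _ (mul_mem_wedge2V hvW haW _) (mul_mem_wedge2V hvW hwW _)
  by_cases hmem : w' ∈ Submodule.span ℂ (Set.range ![c, a, b])
  · rw [Submodule.mem_span_range_iff_exists_fun] at hmem
    obtain ⟨g, hg⟩ := hmem
    simp only [Fin.sum_univ_three, Matrix.cons_val] at hg
    have e : ι ℂ v * (ι ℂ a * ι ℂ w' + ι ℂ w * ι ℂ (g 2 • f₁ + g 0 • f₂)) =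
        g 2 • (ι ℂ v * (ι ℂ a * ι ℂ b + ι ℂ w * ι ℂ f₁)) +
        g 0 • (ι ℂ v * (ι ℂ a * ι ℂ c + ι ℂ w * ι ℂ f₂)) := by
      rw [← hg]
      simp only [map_add, map_smul, mul_add, mul_smul_comm, ι_sq_zero, mul_zero]
      module
    have hA' : ι ℂ v * (ι ℂ a * ι ℂ w' + ι ℂ w * ι ℂ (g 2 • f₁ + g 0 • f₂)) ∈ A := by
      rw [e]
      exact A.add_mem (A.smul_mem _ h₁) (A.smul_mem _ h₂)
    have hfU : g 2 • f₁ + g 0 • f₂ ∈ U := U.add_mem (U.smul_mem _ hf₁) (U.smul_mem _ hf₂)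
    by_cases hg2 : g 2 = 0
    · have hg0 : g 0 ≠ 0 := by
        intro hg0
        apply haW
        rw [hg0, hg2, zero_smul, zero_smul, zero_add, add_zero] at hg
        have hg1 : g 1 ≠ 0 := by
          intro hg1
          rw [hg1, zero_smul] at hg
          have := hz.ne_zero 0
          simp [← hg] at this
        have := W.smul_mem (g 1)⁻¹ (hg ▸ hwW')
        rwa [smul_smul, inv_mul_cancel₀ hg1, one_smul] at this
      refine outcome_case_B hvw hU hU4 hW hw' haW ha hb hfU hf₁ ?_ hη hA' h₁ ?_
      · refine linearIndependent_triple fun p q r h => ?_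
        obtain ⟨i1, i2, i3⟩ := coeffs_eq_zero hLI (p := r * g 0) (q := q + r * g 1) (r := p + r * g 2)
          (by rw [← h, ← hg]; module)
        have hr : r = 0 := by simpa [hg0] using i1
        subst hr
        exact ⟨by simpa using i3, by simpa using i2, rfl⟩
      · refine linearIndependent_triple fun p q r h => ?_
        rw [e] at h
        obtain ⟨i1, i2, i3⟩ := coeffs_eq_zero hz (p := p) (q := r + q * g 2) (r := q * g 0)
          (by rw [← h]; module)
        have hr : q = 0 := by simpa [hg0] using i3
        subst hr
        exact ⟨i1, rfl, by simpa using i2⟩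
    · refine outcome_case_B hvw hU hU4 hW hw' haW ha hc hfU hf₂ ?_ hη hA' h₂ ?_
      · refine linearIndependent_triple fun p q r h => ?_
        obtain ⟨i1, i2, i3⟩ := coeffs_eq_zero hLI (p := p + r * g 0) (q := q + r * g 1) (r := r * g 2)
          (by rw [← h, ← hg]; module)
        have hr : r = 0 := by simpa [hg2] using i3
        subst hr
        exact ⟨by simpa using i1, by simpa using i2, rfl⟩
      · refine linearIndependent_triple fun p q r h => ?_
        rw [e] at h
        obtain ⟨i1, i2, i3⟩ := coeffs_eq_zero hz (p := p) (q := q * g 2) (r := r + q * g 0)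
          (by rw [← h]; module)
        have hr : q = 0 := by simpa [hg2] using i2
        subst hr
        exact ⟨i1, rfl, by simpa using i3⟩
  · have hLI4 : LinearIndependent ℂ ![w', c, a, b] := linearIndependent_finCons.mpr ⟨hLI, hmem⟩
    obtain ⟨P₁, Q₁, R₁, S₁, e₁⟩ := exists_coeffs hU4 ha hb hc hw' hLI4 hf₁
    obtain ⟨P₂, Q₂, R₂, S₂, e₂⟩ := exists_coeffs hU4 ha hb hc hw' hLI4 hf₂
    obtain ⟨g, hg, r, s, hrs⟩ := exists_eigen a ![b, c] ![f₁ - S₁ • w', f₂ - S₂ • w'] ![P₁, P₂]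
      ![![Q₁, R₁], ![Q₂, R₂]] (fun i => by
        fin_cases i
        · simp only [Fin.sum_univ_two, Matrix.cons_val, Fin.zero_eta, Fin.isValue, e₁]
          module
        · simp only [Fin.sum_univ_two, Matrix.cons_val, Fin.mk_one, Fin.isValue, e₂]
          module)
    simp only [Fin.sum_univ_two, Matrix.cons_val] at hrs
    have e : ι ℂ v * (ι ℂ (a + s • w) * ι ℂ ((g 0 • b + g 1 • c) - r • w)) =
        g 0 • (ι ℂ v * (ι ℂ a * ι ℂ b + ι ℂ w * ι ℂ f₁)) +
        g 1 • (ι ℂ v * (ι ℂ a * ι ℂ c + ι ℂ w * ι ℂ f₂)) -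
        (g 0 * S₁ + g 1 * S₂) • (ι ℂ v * (ι ℂ w * ι ℂ w')) := by
      rw [ι_mul_eq_add, ← hrs]
      simp only [map_add, map_sub, map_smul, mul_add, mul_sub, mul_smul_comm]
      module
    refine outcome_of_decomposable hwW haW (Y := (g 0 • b + g 1 • c) - r • w) (s := s) ?_ ?_
    · rw [e]
      exact A.sub_mem (A.add_mem (A.smul_mem _ h₁) (A.smul_mem _ h₂)) (A.smul_mem _ hη)
    · rw [e]
      intro h0
      have := coeffs_eq_zero hz (p := -(g 0 * S₁ + g 1 * S₂)) (q := g 0) (r := g 1) (by rw [← h0]; module)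
      apply hg
      ext i
      fin_cases i
      exacts [this.2.1, this.2.2]

/-! ### Assembling the trichotomy -/

theorem exists_third {V : Type*} [AddCommGroup V] [Module ℂ V] [FiniteDimensional ℂ V]
    {W : Submodule ℂ V} (hW : finrank ℂ W = 3) {v w : V} (hv : v ∈ W) (hw : w ∈ W)
    (h : LinearIndependent ℂ ![v, w]) :
    ∃ x ∈ W, LinearIndependent ℂ ![x, v, w] ∧ LinearIndependent ℂ ![v, w, x] ∧
      W = Submodule.span ℂ {v, w, x} := by
  obtain ⟨x, hx, hx'⟩ : ∃ x ∈ W, x ∉ Submodule.span ℂ (Set.range ![v, w]) := by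
    by_contra! hcon
    have h5 := Submodule.finrank_mono
      (show W ≤ Submodule.span ℂ (Set.range ![v, w]) from hcon)
    rw [finrank_span_eq_card h, hW] at h5
    simp at h5
  have hLI : LinearIndependent ℂ ![x, v, w] := linearIndependent_finCons.mpr ⟨h, hx'⟩
  have hLI' : LinearIndependent ℂ ![v, w, x] := linearIndependent_triple fun p q r h0 => by
    obtain ⟨h1, h2, h3⟩ := coeffs_eq_zero hLI (p := r) (q := p) (r := q) (by rw [← h0]; module)
    exact ⟨h2, h3, h1⟩
  refine ⟨x, hx, hLI, hLI', (Submodule.eq_of_le_of_finrank_eq ?_ ?_).symm⟩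
  · rw [Submodule.span_le]
    rintro _ (rfl | rfl | rfl) <;> assumption
  · rw [hW]
    have h3 := finrank_span_triple hLI'
    exact h3

/-- A nonzero vector is independent of some two of three independent vectors, since the three planes
spanned by pairs of them have no common nonzero vector. -/
theorem exists_pair {E : Type*} [AddCommGroup E] [Module ℂ E] {z : Fin 3 → E}
    (hz : LinearIndependent ℂ z) {η : E} (hη : η ≠ 0) :
    ∃ i j, LinearIndependent ℂ ![η, z i, z j] := by
  by_contra! hcon
  have key : ∀ i j, i ≠ j → ∃ p q : ℂ, p • z i + q • z j = η := by
    intro i j hij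
    by_contra hmem
    refine hcon i j (linearIndependent_finCons.mpr ⟨?_, ?_⟩)
    · have := hz.comp ![i, j] (by
        intro a b hab
        fin_cases a <;> fin_cases b <;> simp_all)
      have e : z ∘ ![i, j] = ![z i, z j] := by
        ext a; fin_cases a <;> rfl
      rwa [e] at this
    · rwa [Matrix.range_cons, Matrix.range_cons, Matrix.range_empty, Set.union_empty,
        Set.singleton_union, Submodule.mem_span_pair]
  have hz' : LinearIndependent ℂ ![z 0, z 1, z 2] := by
    have e : z = ![z 0, z 1, z 2] := by
      ext a; fin_cases a <;> rfl
    rwa [← e]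
  obtain ⟨p, q, h1⟩ := key 0 1 (by decide)
  obtain ⟨r, s, h2⟩ := key 0 2 (by decide)
  obtain ⟨t, u, h3⟩ := key 1 2 (by decide)
  have e1 := coeffs_eq_zero hz' (p := p - r) (q := q) (r := -s)
    (by rw [← sub_eq_zero.mpr (h1.trans h2.symm)]; module)
  have e2 := coeffs_eq_zero hz' (p := p) (q := q - t) (r := -u)
    (by rw [← sub_eq_zero.mpr (h1.trans h3.symm)]; module)
  apply hη
  rw [← h1, e1.2.1, e2.1, zero_smul, zero_smul, add_zero]

theorem mul_mem_of_theta {V : Type*} [AddCommGroup V] [Module ℂ V]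
    {A : Submodule ℂ (ExteriorAlgebra ℂ V)} {W : Submodule ℂ V} (hW : W ∈ Theta A) {x y z : V}
    (hx : x ∈ W) (hy : y ∈ W) (hz : z ∈ W) : ι ℂ x * (ι ℂ y * ι ℂ z) ∈ A :=
  hW.2 (Submodule.subset_span ⟨x, hx, y, hy, z, hz, (mul_assoc _ _ _).symm⟩)

/-- The trichotomy at `v`. As `Θ_A` is finite, the components of two suitable `κ i`, `κ j` in the complement
`U` of `v, w` are independent decomposable bivectors `a ∧ b` and `a ∧ c` with a common factor. -/
theorem outcome_of_tangent {V : Type*} [AddCommGroup V] [Module ℂ V] [FiniteDimensional ℂ V]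
    (hV : finrank ℂ V = 6) {A : Submodule ℂ (ExteriorAlgebra ℂ V)} [FiniteDimensional ℂ A]
    (hΘ : ¬ (Theta A).Infinite) {W : Submodule ℂ V} (hW : W ∈ Theta A) {v w : V}
    (hv : v ∈ W) (hw : w ∈ W)
    (hvw : LinearIndependent ℂ ![v, w]) {κ : Fin 3 → ExteriorAlgebra ℂ V}
    (hκ : ∀ i, κ i ∈ ⋀[ℂ]^2 V) (hA : ∀ i, ι ℂ v * κ i ∈ A)
    (hLI : LinearIndependent ℂ (fun i => ι ℂ v * κ i))
    (h0 : ∀ i j, ι ℂ v * (ι ℂ w * (κ i * κ j)) = 0) : Outcome A W v := by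
  obtain ⟨w', hw', hLw, hLw', hWs⟩ := exists_third hW.1 hv hw hvw
  have hw0 : w' ≠ 0 := hLw.ne_zero 0
  have hdisj : Disjoint (Submodule.span ℂ {v, w}) (Submodule.span ℂ {w'}) := by
    rw [Submodule.disjoint_span_singleton' hw0]
    have := (linearIndependent_finCons.mp hLw).2
    rwa [Matrix.range_cons, Matrix.range_cons, Matrix.range_empty, Set.union_empty,
      Set.singleton_union] at this
  obtain ⟨U, hUle, hU'⟩ := hdisj.symm.exists_isCompl
  have hU := hU'.symm
  have hwU : w' ∈ U := hUle (Submodule.mem_span_singleton_self w')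
  have hU4 : finrank ℂ U = 4 := by
    have h1 := Submodule.finrank_add_eq_of_isCompl hU
    have h2 := finrank_span_eq_card hvw
    rw [Matrix.range_cons, Matrix.range_cons, Matrix.range_empty, Set.union_empty,
      Set.singleton_union, Fintype.card_fin] at h2
    omega
  have hη : ι ℂ v * (ι ℂ w * ι ℂ w') ∈ A := mul_mem_of_theta hW hv hw hw'
  have hη0 : ι ℂ v * (ι ℂ w * ι ℂ w') ≠ 0 := by
    rw [Ne, ι_mul3_eq_zero, not_not]
    exact hLw'
  choose x hx y hy f hf g hg using fun i => exists_normal_form hvw hU hU4 (hκ i) (h0 i i)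
  have hz : ∀ i, ι ℂ v * κ i = ι ℂ v * (ι ℂ (x i) * ι ℂ (y i) + ι ℂ w * ι ℂ (f i)) := by
    intro i
    rw [hg i]
    simp only [mul_add, ι_sq_assoc, add_zero]
  simp only [hz] at hLI hA
  obtain ⟨i, j, hij⟩ := exists_pair hLI hη0
  -- a relation between the two planes would give `v ∧ w ∧ f ∈ A` with `f ∉ W`, hence a pencil in `Θ_A`
  have hpair : LinearIndependent ℂ ![ι ℂ (x i) * ι ℂ (y i), ι ℂ (x j) * ι ℂ (y j)] := by
    rw [LinearIndependent.pair_iff]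
    intro s t hst
    by_contra hne
    have e : s • (ι ℂ v * (ι ℂ (x i) * ι ℂ (y i) + ι ℂ w * ι ℂ (f i))) +
        t • (ι ℂ v * (ι ℂ (x j) * ι ℂ (y j) + ι ℂ w * ι ℂ (f j))) =
        ι ℂ v * (ι ℂ w * ι ℂ (s • f i + t • f j)) := by
      have h1 : ι ℂ v * (s • (ι ℂ (x i) * ι ℂ (y i)) + t • (ι ℂ (x j) * ι ℂ (y j))) = 0 := by
        rw [hst, mul_zero]
      rw [← sub_eq_zero, ← h1]
      simp only [map_add, map_smul, mul_add, mul_smul_comm]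
      module
    apply hΘ
    refine theta_infinite_of_mem hη (y := s • f i + t • f j) ?_
      (linearIndependent_finCons.mpr ⟨hLw', ?_⟩)
    · rw [← e]
      exact A.add_mem (A.smul_mem _ (hA i)) (A.smul_mem _ (hA j))
    · intro hmem
      rw [Submodule.mem_span_range_iff_exists_fun] at hmem
      obtain ⟨c, hc⟩ := hmem
      simp only [Fin.sum_univ_three, Matrix.cons_val] at hc
      have e' : ι ℂ v * (ι ℂ w * ι ℂ (s • f i + t • f j)) =
          c 2 • (ι ℂ v * (ι ℂ w * ι ℂ w')) := by
        rw [← hc]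
        simp only [map_add, map_smul, mul_add, mul_smul_comm, ι_sq_zero, ι_swap w v, mul_neg,
          ι_sq_assoc, mul_zero, smul_zero, neg_zero, zero_add]
      obtain ⟨-, h2, h3⟩ := coeffs_eq_zero hij (p := -c 2) (q := s) (r := t) (by
        rw [add_assoc, e, e']; module)
      exact hne ⟨h2, h3⟩
  obtain ⟨p, q, r, s, hpq, hne⟩ := exists_common_factor (hpair.ne_zero 0) (hpair.ne_zero 1) (by
    show ι ℂ (x i) * ι ℂ (y i) * (ι ℂ (x j) * ι ℂ (y j)) = 0
    rw [mul_assoc, ι_mul4_eq_zero]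
    intro hl
    apply mul_ne_zero_of_isCompl hvw hU (hx i) (hy i) (hx j) (hy j) hl
    rw [← normal_form_mul v w (x i) (y i) (f i) (g i) (x j) (y j) (f j) (g j), ← hg, ← hg, h0])
  obtain ⟨p₁, q₁, hab⟩ := exists_mul_eq hne
  obtain ⟨p₂, q₂, hac⟩ := exists_mul_eq (hpq ▸ hne)
  rw [← hpq] at hac
  have hi := hA i
  have hj := hA j
  rw [← hab] at hi hij hpair
  rw [← hac] at hj hij hpair
  have mem : ∀ k (s t : ℂ), s • x k + t • y k ∈ U := fun k s t =>
    U.add_mem (U.smul_mem _ (hx k)) (U.smul_mem _ (hy k))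
  exact outcome_of_common_factor hvw hU hU4 hWs hwU (mem i _ _) (mem i _ _) (mem j _ _) (hf i)
    (hf j) (linearIndependent_of_products hpair) hη hi hj hij

theorem linearIndependent_of_span_ne {V : Type*} [AddCommGroup V] [Module ℂ V] {v w : V}
    (hv : v ≠ 0) (hw : w ≠ 0) (h : Submodule.span ℂ {v} ≠ Submodule.span ℂ {w}) :
    LinearIndependent ℂ ![v, w] := by
  rw [LinearIndependent.pair_iff' hv]
  rintro a rfl
  have ha : a ≠ 0 := by rintro rfl; simp at hw
  exact h (Submodule.span_singleton_smul_eq ha.isUnit v).symm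

/-- Distinct members of `Θ_A` sharing two independent vectors generate a pencil. -/
theorem theta_infinite_of_two {V : Type*} [AddCommGroup V] [Module ℂ V] [FiniteDimensional ℂ V]
    {A : Submodule ℂ (ExteriorAlgebra ℂ V)} {W W' : Submodule ℂ V} (hW : W ∈ Theta A)
    (hW' : W' ∈ Theta A) (hne : W' ≠ W) {v w : V} (hvw : LinearIndependent ℂ ![v, w])
    (hv : v ∈ W) (hw : w ∈ W) (hv' : v ∈ W') (hw' : w ∈ W') : (Theta A).Infinite := by
  obtain ⟨x, hx, -, hLI, hWs⟩ := exists_third hW.1 hv hw hvw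
  obtain ⟨y, hy, hyW⟩ : ∃ y ∈ W', y ∉ W := by
    by_contra! hcon
    exact hne (Submodule.eq_of_le_of_finrank_eq hcon (hW'.1.trans hW.1.symm))
  refine theta_infinite_of_mem (mul_mem_of_theta hW hv hw hx) (mul_mem_of_theta hW' hv' hw' hy)
    (linearIndependent_finCons.mpr ⟨hLI, ?_⟩)
  rwa [Matrix.range_cons, Matrix.range_cons, Matrix.range_cons, Matrix.range_empty,
    Set.union_empty, Set.singleton_union, Set.singleton_union, ← hWs]

/-- Two elements of the third type in `Outcome` attached to different lines `ℂv`, `ℂw` are independent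
of each other and of the generator `v ∧ w ∧ x` of `⋀³W`: multiply a relation by `v` and by `w`. -/
theorem three_le_of_two {V : Type*} [AddCommGroup V] [Module ℂ V] [FiniteDimensional ℂ V]
    {A : Submodule ℂ (ExteriorAlgebra ℂ V)} [FiniteDimensional ℂ A] {W : Submodule ℂ V}
    (hW : W ∈ Theta A) {v w : V} (hvw : LinearIndependent ℂ ![v, w]) (hv : v ∈ W) (hw : w ∈ W)
    {τ σ : ExteriorAlgebra ℂ V} (hτ : τ ∈ A ⊓ wedge2V W) (hσ : σ ∈ A ⊓ wedge2V W)
    (hvτ : ι ℂ v * τ = 0) (hτ' : ∀ u ∈ W, ι ℂ u * τ = 0 → u ∈ Submodule.span ℂ {v})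
    (hwσ : ι ℂ w * σ = 0) (hσ' : ∀ u ∈ W, ι ℂ u * σ = 0 → u ∈ Submodule.span ℂ {w}) :
    3 ≤ finrank ℂ ↥(A ⊓ wedge2V W) := by
  obtain ⟨x, hx, -, hLI, hWs⟩ := exists_third hW.1 hv hw hvw
  have hne : ι ℂ v * (ι ℂ w * ι ℂ x) ≠ 0 := by
    rw [Ne, ι_mul3_eq_zero, not_not]
    exact hLI
  refine three_le_finrank ⟨mul_mem_of_theta hW hv hw hx, mul_mem_wedge2V hv hw x⟩ hτ hσ
    (linearIndependent_triple fun p q r h => ?_)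
  have hr : r = 0 := by
    have h1 := congrArg (fun z => ι ℂ v * z) h
    simp only [mul_add, mul_smul_comm, ι_sq_assoc, hvτ, smul_zero, zero_add, mul_zero] at h1
    by_contra hr
    have h2 := hσ' v hv ((smul_eq_zero.mp h1).resolve_left hr)
    obtain ⟨a, ha⟩ := Submodule.mem_span_singleton.mp h2
    have := LinearIndependent.pair_iff.mp hvw 1 (-a) (by rw [← ha]; module)
    exact one_ne_zero this.1
  have hq : q = 0 := by
    have h1 := congrArg (fun z => ι ℂ w * z) h
    simp only [mul_add, mul_smul_comm, ι_swap_assoc w v, ι_sq_assoc, hwσ, smul_zero, zero_add,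
      mul_zero, neg_zero, add_zero] at h1
    by_contra hq
    have h2 := hτ' w hw ((smul_eq_zero.mp h1).resolve_left hq)
    obtain ⟨a, ha⟩ := Submodule.mem_span_singleton.mp h2
    have := LinearIndependent.pair_iff.mp hvw a (-1) (by rw [← ha]; module)
    exact one_ne_zero (neg_eq_zero.mp this.2)
  rw [hq, hr, zero_smul, zero_smul, add_zero, add_zero] at h
  exact ⟨(smul_eq_zero.mp h).resolve_right hne, hq, hr⟩

/-- Let `V` be a 6-dimensional complex vector space and `A ⊆ ⋀³V` a
Lagrangian subspace (for the symplectic form `ω(α,β) = vol(α∧β)`).  If the set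
`Y_A[3]` of lines `ℂv ⊆ V` with `dim(A ∩ (v∧⋀²V)) ≥ 3` is infinite, then either `Θ_A` is
infinite, or there exists `W ∈ Θ_A` with `dim(A ∩ (⋀²W∧V)) ≥ 3`. -/
theorem stmt_7 {V : Type*} [AddCommGroup V] [Module ℂ V] [FiniteDimensional ℂ V]
    (hV : finrank ℂ V = 6)
    (vol : ExteriorAlgebra ℂ V →ₗ[ℂ] ℂ)
    (hvol : Function.Bijective fun x : ⋀[ℂ]^6 V => vol x)
    (A : Submodule ℂ (ExteriorAlgebra ℂ V))
    (hA3 : A ≤ ⋀[ℂ]^3 V) (hA10 : finrank ℂ A = 10)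
    (hLag : ∀ α ∈ A, ∀ β ∈ A, vol (α * β) = 0)
    (hY3 : {L : Submodule ℂ V | ∃ v : V, v ≠ 0 ∧ L = Submodule.span ℂ {v} ∧
      3 ≤ finrank ℂ ↥(A ⊓ vWedge2 v)}.Infinite) :
    {W : Submodule ℂ V | finrank ℂ W = 3 ∧ wedge3 W ≤ A}.Infinite ∨
      ∃ W : Submodule ℂ V, (finrank ℂ W = 3 ∧ wedge3 W ≤ A) ∧
        3 ≤ finrank ℂ ↥(A ⊓ wedge2V W) := by
  by_cases hΘ : (Theta A).Infinite
  · exact Or.inl hΘ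
  refine Or.inr ?_
  have hAfin : FiniteDimensional ℂ A := FiniteDimensional.of_finrank_pos (by omega)
  have hΘfin : (Theta A).Finite := Set.not_infinite.mp hΘ
  have step1 := infinite_tangent vol hvol.1 A hLag ⊤ (hY3.mono (by
    rintro L ⟨v, hv, hL, h3⟩
    exact ⟨v, trivial, hv, hL, h3⟩))
  obtain ⟨W, hW, hWinf⟩ : ∃ W ∈ Theta A, {L : Submodule ℂ V | ∃ v ∈ W, v ≠ 0 ∧
      L = Submodule.span ℂ {v} ∧ 3 ≤ finrank ℂ ↥(A ⊓ vWedge2 v)}.Infinite := by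
    by_contra! hcon
    refine step1 ((hΘfin.biUnion hcon).subset ?_)
    rintro L ⟨v, -, hL, w, -, hvw, κ, hκ, hκA, hLI, h0⟩
    obtain ⟨W, hW, hvW⟩ := exists_theta_of_tangent hV hvw hκ hκA hLI h0
    refine Set.mem_biUnion hW ⟨v, hvW, hvw.ne_zero 0, hL, ?_⟩
    refine three_le_finrank (a := ι ℂ v * κ 0) (b := ι ℂ v * κ 1) (c := ι ℂ v * κ 2)
      ⟨hκA 0, _, hκ 0, rfl⟩ ⟨hκA 1, _, hκ 1, rfl⟩ ⟨hκA 2, _, hκ 2, rfl⟩ ?_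
    have e : (fun i => ι ℂ v * κ i) = ![ι ℂ v * κ 0, ι ℂ v * κ 1, ι ℂ v * κ 2] := by
      ext i; fin_cases i <;> rfl
    rwa [e] at hLI
  refine ⟨W, hW, ?_⟩
  by_contra h3
  -- lines through which a second member of `Θ_A` passes: at most one for each member
  have hfin₁ : (⋃ W' ∈ {W' ∈ Theta A | W' ≠ W}, {L : Submodule ℂ V | ∃ v ∈ W, v ≠ 0 ∧
      L = Submodule.span ℂ {v} ∧ v ∈ W'}).Finite := by
    refine (hΘfin.subset fun _ h => h.1).biUnion fun W' hW' => Set.Subsingleton.finite ?_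
    rintro _ ⟨v, hv, hv0, rfl, hv'⟩ _ ⟨w, hw, hw0, rfl, hw'⟩
    by_contra hne
    have hLI := linearIndependent_of_span_ne hv0 hw0 hne
    have hinf := theta_infinite_of_two hW hW'.1 hW'.2 hLI hv hw hv' hw'
    exact hΘ hinf
  -- lines with an element of the third type: at most one
  have hfin₂ : {L : Submodule ℂ V | ∃ v ∈ W, v ≠ 0 ∧ L = Submodule.span ℂ {v} ∧
      ∃ τ ∈ A ⊓ wedge2V W, ι ℂ v * τ = 0 ∧
        ∀ u ∈ W, ι ℂ u * τ = 0 → u ∈ Submodule.span ℂ {v}}.Finite := by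
    refine Set.Subsingleton.finite ?_
    rintro _ ⟨v, hv, hv0, rfl, τ, hτ, hτv, hτ'⟩ _ ⟨w, hw, hw0, rfl, σ, hσ, hσw, hσ'⟩
    by_contra hne
    exact h3 (three_le_of_two hW (linearIndependent_of_span_ne hv0 hw0 hne) hv hw hτ hσ
      hτv hτ' hσw hσ')
  refine infinite_tangent vol hvol.1 A hLag W hWinf ((hfin₁.union hfin₂).subset ?_)
  rintro L ⟨v, hv, hL, w, hw, hvw, κ, hκ, hκA, hLI, h0⟩
  have hv0 : v ≠ 0 := hvw.ne_zero 0
  rcases outcome_of_tangent hV hΘ hW hv hw hvw hκ hκA hLI h0 with h | ⟨W', hW', hne, hvW'⟩ | h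
  · exact absurd h h3
  · exact Or.inl (Set.mem_biUnion (x := W') ⟨hW', hne⟩ ⟨v, hv, hv0, hL, hvW'⟩)
  · exact Or.inr ⟨v, hv, hv0, hL, h⟩
end
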